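/- arXiv:2203.14687 — 5 statements merged into one kernel-verified Lean document; each statement's English description precedes it below -/
import Mathlib

section
/- Let q = p^h be a prime power and let f(X,Y) = Σ_{i,j} a_{i,j} X^i Y^j ∈ F_q[X,Y] have total degree d ≥ 1, f(0,0) = 0, and with a_{0,1} = 0 in case p > 2. Suppose q > 6.3·(d+1)^{13/3} and that f satisfies the ovoid condition (equivalently, O_4(f) is an ovoid of Q(4,q)). Then one of the following holds: (1) p = 2 and f(X,Y) = a_{1,0}X + a_{0,1}Y for some a_{1,0}, a_{0,1} ∈ F_q; (2) p > 2 and f(X,Y) = a_{p^j,0}·X^{p^j} for some integer j ≥ 0 and some a_{p^j,0} ∈ F_q. -/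
open MvPolynomial

/-- The coefficient `a_{i,j}` of the monomial `X^i Y^j` in `f ∈ F_q[X,Y]`. -/
noncomputable def coeffXY {K : Type*} [Field K] (f : MvPolynomial (Fin 2) K) (i j : ℕ) : K :=
  f.coeff (Finsupp.single (0 : Fin 2) i + Finsupp.single (1 : Fin 2) j)

/-- The ovoid condition:
`(y₁ − y₂)² + (x₁ − x₂)(f(x₁,y₁) − f(x₂,y₂)) ≠ 0` for all `(x₁,y₁) ≠ (x₂,y₂)`;
it holds iff `O_4(f)` is an ovoid of `Q(4,q)`. -/
def OvoidCondition {K : Type*} [Field K] (f : MvPolynomial (Fin 2) K) : Prop :=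
  ∀ x₁ y₁ x₂ y₂ : K, (x₁, y₁) ≠ (x₂, y₂) →
    (y₁ - y₂) ^ 2 + (x₁ - x₂) * (eval ![x₁, y₁] f - eval ![x₂, y₂] f) ≠ 0

/-!
For fixed `c` and `l`, the ovoid condition for the points `(c + y, x + l y)` and `(c, 0)` says that
a plane curve has no rational points outside a line. If `f` has degree at least three in `Y`, then
for suitable `c` and `l` this curve has a simple rational place at infinity, and the method of
Stepanov and Bombieri applies: there is a combination of Frobenius powers, with coefficients of
small pole order, which for want of rational points would vanish to a higher order than its poles
allow, while the place at infinity shows that it is not zero. So over a large field `f` has degree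
at most two in `Y`, and elementary substitutions in the ovoid condition reduce it to
`f = h(X) + b Y`.

The condition then says that `Y² + b Y + (h(X + c) - h(c)) / X` has no roots over nonzero `X`. A
twist of this double cover of the line is split over every nonzero `X`, and by the same method it
is reducible. In odd characteristic all the quotients `(h(X) - h(c)) / (X - c)` are therefore
constant multiples of squares; each value of `h` contributes a divisor of `h'` of almost half its
degree, which forces `h' = 0` or `deg h ≤ 1`. In characteristic two the quotients have even degree
up to Artin–Schreier equivalence, which forces `deg h ≤ 1`.
-/

open scoped Polynomial Polynomial.Bivariate

open Polynomial (aevalAeval)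

namespace OvoidCurve

lemma aevalAeval_eq_eval₂ {k A : Type*} [CommRing k] [CommRing A] [Algebra k A] (x y : A)
    (P : k[X][Y]) :
    aevalAeval x y P = P.eval₂ (Polynomial.aeval (R := k) x : k[X] →+* A) y := by
  induction P using Polynomial.induction_on' with
  | add P Q hP hQ => rw [map_add, Polynomial.eval₂_add, hP, hQ]
  | monomial n N =>
    rw [Polynomial.eval₂_monomial, ← Polynomial.C_mul_X_pow_eq_monomial]
    simp

lemma map_aevalAeval {k A B : Type*} [CommRing k] [CommRing A] [CommRing B] [Algebra k A]
    [Algebra k B] (φ : A →ₐ[k] B) (x y : A) (P : k[X][Y]) :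
    φ (aevalAeval x y P) = aevalAeval (φ x) (φ y) P := by
  simp only [aevalAeval_eq_eval₂, Polynomial.eval₂_eq_sum_range, map_sum, map_mul, map_pow,
    RingHom.coe_coe, Polynomial.aeval_algHom_apply]

lemma sub_dvd_aevalAeval_sub {k A : Type*} [CommRing k] [CommRing A] [Algebra k A] (x x' y : A)
    (P : k[X][Y]) : x - x' ∣ aevalAeval x y P - aevalAeval x' y P := by
  simp only [aevalAeval_eq_eval₂, Polynomial.eval₂_eq_sum_range, ← Finset.sum_sub_distrib,
    ← sub_mul, RingHom.coe_coe]
  refine Finset.dvd_sum fun j _ => Dvd.dvd.mul_right ?_ _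
  rw [← Polynomial.eval_map_algebraMap, ← Polynomial.eval_map_algebraMap]
  exact Polynomial.sub_dvd_eval_sub _ _ _

/-- An increasing multiplicative `ℤ`-filtration of an algebra by submodules. It measures weighted
degrees, in the coordinate ring of a plane curve as well as in polynomial rings over it. -/
structure AlgebraFiltration (k B : Type*) [CommRing k] [CommRing B] [Algebra k B] where
  /-- The elements of weight at most `a`. -/
  piece : ℤ → Submodule k B
  mono : Monotone piece
  one_mem : 1 ∈ piece 0
  mul_mem : ∀ {a b : ℤ} {x y : B}, x ∈ piece a → y ∈ piece b → x * y ∈ piece (a + b)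

namespace AlgebraFiltration

variable {k B B' : Type*} [CommRing k] [CommRing B] [Algebra k B] [CommRing B'] [Algebra k B']

section Basic

variable (A : AlgebraFiltration k B)

lemma mem_of_le {a b : ℤ} {x : B} (hx : x ∈ A.piece a) (hab : a ≤ b) : x ∈ A.piece b :=
  A.mono hab hx

lemma mul_mem_of_le {a b c : ℤ} {x y : B} (hx : x ∈ A.piece a) (hy : y ∈ A.piece b)
    (h : a + b ≤ c) : x * y ∈ A.piece c :=
  A.mem_of_le (A.mul_mem hx hy) h

lemma pow_mem {a : ℤ} {x : B} (hx : x ∈ A.piece a) (n : ℕ) : x ^ n ∈ A.piece (n * a) := by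
  induction n with
  | zero => simpa using A.one_mem
  | succ n ih =>
    rw [pow_succ]
    refine A.mul_mem_of_le ih hx (le_of_eq ?_)
    push_cast
    ring

lemma pow_mem_of_le {a b : ℤ} {x : B} (hx : x ∈ A.piece a) (n : ℕ) (h : n * a ≤ b) :
    x ^ n ∈ A.piece b :=
  A.mem_of_le (A.pow_mem hx n) h

lemma algebraMap_mem (r : k) : algebraMap k B r ∈ A.piece 0 := by
  rw [Algebra.algebraMap_eq_smul_one]
  exact (A.piece 0).smul_mem _ A.one_mem

end Basic

/-- The filtration of the base ring by degree, in which scalars have weight zero. -/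
def scalars (k : Type*) [CommRing k] : AlgebraFiltration k k where
  piece a := if 0 ≤ a then ⊤ else ⊥
  mono := fun a b hab => by
    dsimp only
    split_ifs with ha hb
    · exact le_rfl
    · omega
    · exact bot_le
    · exact le_rfl
  one_mem := by simp
  mul_mem := fun {a b x y} hx hy => by
    by_cases ha : 0 ≤ a <;> by_cases hb : 0 ≤ b <;> simp_all [add_nonneg]

lemma mem_scalars_iff {a : ℤ} {x : k} : x ∈ (scalars k).piece a ↔ (a < 0 → x = 0) := by
  rcases le_or_gt 0 a with ha | ha
  · simp [scalars, ha, ha.not_gt]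
  · simp [scalars, ha, ha.not_ge]

/-- The filtration of a polynomial ring over a filtered algebra in which the variable has
weight `ω`. -/
def polynomial (A : AlgebraFiltration k B) (ω : ℕ) : AlgebraFiltration k B[X] where
  piece a :=
    { carrier := {P | ∀ n : ℕ, P.coeff n ∈ A.piece (a - ω * n)}
      zero_mem' := by simp
      add_mem' := fun hP hQ n => by
        rw [Polynomial.coeff_add]
        exact add_mem (hP n) (hQ n)
      smul_mem' := fun r P hP n => by
        rw [Polynomial.coeff_smul]
        exact Submodule.smul_mem _ _ (hP n) }
  mono := fun a b hab P hP n => A.mem_of_le (hP n) (by omega)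
  one_mem := fun n => by
    rw [Polynomial.coeff_one]
    split_ifs with hn
    · simpa [hn] using A.one_mem
    · exact zero_mem _
  mul_mem := by
    intro a b P Q hP hQ n
    rw [Polynomial.coeff_mul]
    refine Submodule.sum_mem _ fun ij hij => A.mul_mem_of_le (hP ij.1) (hQ ij.2) (le_of_eq ?_)
    rw [← Finset.HasAntidiagonal.mem_antidiagonal.1 hij]
    push_cast
    ring

/-- The image of a filtration under an algebra homomorphism. -/
def map (A : AlgebraFiltration k B) (φ : B →ₐ[k] B') : AlgebraFiltration k B' where
  piece a := (A.piece a).map φ.toLinearMap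
  mono := fun _ _ hab => Submodule.map_mono (A.mono hab)
  one_mem := ⟨1, A.one_mem, by simp⟩
  mul_mem := by
    rintro a b _ _ ⟨x, hx, rfl⟩ ⟨y, hy, rfl⟩
    exact ⟨x * y, A.mul_mem hx hy, by simp⟩

section Polynomial

variable (A : AlgebraFiltration k B)

lemma C_mem_polynomial (ω : ℕ) {a : ℤ} {x : B} (hx : x ∈ A.piece a) :
    Polynomial.C x ∈ (A.polynomial ω).piece a := by
  intro n
  rw [Polynomial.coeff_C]
  split_ifs with hn
  · simpa [hn] using hx
  · exact zero_mem _

lemma X_mem_polynomial (ω : ℕ) : Polynomial.X ∈ (A.polynomial ω).piece ω := by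
  intro n
  rw [Polynomial.coeff_X]
  split_ifs with hn
  · simpa [← hn] using A.one_mem
  · exact zero_mem _

lemma eval₂_mem {A : AlgebraFiltration k B} {A' : AlgebraFiltration k B'} {φ : B →+* B'}
    (hφ : ∀ (b : ℤ) (x : B), x ∈ A.piece b → φ x ∈ A'.piece b) {ω : ℕ} {y : B'}
    (hy : y ∈ A'.piece ω) {a : ℤ} {P : B[X]} (hP : P ∈ (A.polynomial ω).piece a) :
    P.eval₂ φ y ∈ A'.piece a := by
  rw [Polynomial.eval₂_eq_sum_range]
  refine Submodule.sum_mem _ fun n _ =>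
    A'.mul_mem_of_le (hφ _ _ (hP n)) (A'.pow_mem hy n) (le_of_eq ?_)
  ring

lemma taylor_mem {A : AlgebraFiltration k B} {x : B} (hx : x ∈ A.piece 1) {a : ℤ} {P : B[X]}
    (hP : P ∈ (A.polynomial 1).piece a) : Polynomial.taylor x P ∈ (A.polynomial 1).piece a := by
  rw [Polynomial.taylor_apply]
  refine eval₂_mem (fun b y hy => C_mem_polynomial A 1 hy) (add_mem ?_ ?_) hP
  · exact X_mem_polynomial A 1
  · exact C_mem_polynomial A 1 (by exact_mod_cast hx)

lemma modByMonic_mem {A : AlgebraFiltration k B} {ω : ℕ} {Q : B[X]} (hQ : Q.Monic)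
    (hQA : Q ∈ (A.polynomial ω).piece (ω * Q.natDegree)) {a : ℤ} {P : B[X]}
    (hP : P ∈ (A.polynomial ω).piece a) : P %ₘ Q ∈ (A.polynomial ω).piece a := by
  nontriviality B
  induction hd : P.degree using WellFoundedLT.induction generalizing P with
  | ind δ ih =>
  subst hd
  rcases lt_or_ge P.degree Q.degree with hlt | hle
  · rwa [(Polynomial.modByMonic_eq_self_iff hQ).2 hlt]
  rcases eq_or_ne P 0 with rfl | hP0
  · rwa [Polynomial.zero_modByMonic]
  have hdeg : Q.natDegree ≤ P.natDegree := Polynomial.natDegree_le_natDegree hle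
  set M := Polynomial.C P.leadingCoeff * Polynomial.X ^ (P.natDegree - Q.natDegree)
  have hM : M ∈ (A.polynomial ω).piece (a - ω * Q.natDegree) := by
    refine mul_mem_of_le _ (C_mem_polynomial A ω (hP P.natDegree))
      (pow_mem _ (X_mem_polynomial A ω) _) (le_of_eq ?_)
    push_cast [hdeg]
    ring
  have hstep : P - Q * M ∈ (A.polynomial ω).piece a :=
    sub_mem hP (mul_mem_of_le _ hQA hM (by linarith))
  have := ih _ (Polynomial.div_wf_lemma ⟨hle, hP0⟩ hQ) hstep rfl
  rwa [Polynomial.sub_modByMonic, (Polynomial.modByMonic_eq_zero_iff_dvd hQ).2 ⟨M, rfl⟩,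
    sub_zero] at this

lemma divByMonic_X_sub_C_mem {A : AlgebraFiltration k B} {ω : ℕ} {x : B} (hx : x ∈ A.piece ω)
    {a : ℤ} {P : B[X]} (hP : P ∈ (A.polynomial ω).piece a) :
    P /ₘ (Polynomial.X - Polynomial.C x) ∈ (A.polynomial ω).piece (a - ω) := by
  intro n
  rw [Polynomial.coeff_divByMonic_X_sub_C]
  refine Submodule.sum_mem _ fun i hi => A.mul_mem_of_le (A.pow_mem hx _) (hP i) (le_of_eq ?_)
  push_cast [(Finset.mem_Icc.1 hi).1]
  ring

end Polynomial

/-- The filtration of `k[X][Y]` by the weighted degree for which `X` has weight `1` and `Y` has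
weight `ω`. -/
noncomputable def weightedDegree (k : Type*) [CommRing k] (ω : ℕ) : AlgebraFiltration k k[X][Y] :=
  ((scalars k).polynomial 1).polynomial ω

lemma mem_polynomial_scalars_iff {a : ℤ} {N : k[X]} :
    N ∈ ((scalars k).polynomial 1).piece a ↔ ∀ n : ℕ, a < n → N.coeff n = 0 := by
  refine forall_congr' fun n => mem_scalars_iff.trans ?_
  rw [Nat.cast_one, one_mul, sub_neg]

lemma mem_weightedDegree_iff {ω : ℕ} {a : ℤ} {P : k[X][Y]} : P ∈ (weightedDegree k ω).piece a ↔
    ∀ j n : ℕ, a < ω * j + n → (P.coeff j).coeff n = 0 := by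
  refine forall_congr' fun j => mem_polynomial_scalars_iff.trans ?_
  simp only [sub_lt_iff_lt_add']

lemma mem_polynomial_scalars_of_natDegree_le {N : k[X]} {a : ℤ} (h : (N.natDegree : ℤ) ≤ a) :
    N ∈ ((scalars k).polynomial 1).piece a :=
  mem_polynomial_scalars_iff.2 fun _ hn => Polynomial.coeff_eq_zero_of_natDegree_lt (by omega)

lemma aeval_mem {A : AlgebraFiltration k B} {x : B} (hx : x ∈ A.piece 1) {a : ℤ} {N : k[X]}
    (hN : N ∈ ((scalars k).polynomial 1).piece a) : Polynomial.aeval x N ∈ A.piece a := by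
  refine eval₂_mem (A := scalars k) (fun b r hr => ?_) (by simpa using hx) hN
  rcases lt_or_ge b 0 with hb | hb
  · simp [mem_scalars_iff.1 hr hb]
  · exact A.mem_of_le (A.algebraMap_mem r) hb

lemma aevalAeval_mem {A : AlgebraFiltration k B} {x y : B} {ω : ℕ} (hx : x ∈ A.piece 1)
    (hy : y ∈ A.piece ω) {a : ℤ} {P : k[X][Y]} (hP : P ∈ (weightedDegree k ω).piece a) :
    aevalAeval x y P ∈ A.piece a :=
  aevalAeval_eq_eval₂ x y P ▸ eval₂_mem (fun _ _ hN => aeval_mem hx hN) hy hP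

end AlgebraFiltration

/-- An affine plane curve, monic in the second variable, together with a generic point `(ξ, η)`
in an extension of the base ring. The weight is the one given to the second variable. -/
structure Curve (k L : Type*) [CommRing k] [CommRing L] [Algebra k L] where
  /-- The equation of the curve. -/
  poly : k[X][Y]
  monic : poly.Monic
  two_le_natDegree : 2 ≤ poly.natDegree
  /-- The weight of the second variable; the first one has weight one. -/
  weight : ℕ
  weight_pos : 0 < weight
  natDegree_coeff_le : ∀ j, (poly.coeff j).natDegree ≤ weight * (poly.natDegree - j)
  /-- The first coordinate of the generic point. -/
  ξ : L
  /-- The second coordinate of the generic point. -/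
  η : L
  aevalAeval_poly : aevalAeval ξ η poly = 0
  eq_zero_of_natDegree_lt : ∀ P : k[X][Y], P.natDegree < poly.natDegree →
    aevalAeval ξ η P = 0 → P = 0

namespace Curve

section Ring

variable {k L : Type*} [CommRing k] [CommRing L] [Algebra k L] (c : Curve k L)

/-- The degree of the curve in its second variable. -/
noncomputable abbrev degree : ℕ := c.poly.natDegree

/-- The weight of the powers of `η` which are reduced modulo the equation of the curve. -/
noncomputable def slopeWeight : ℕ := c.weight * (c.degree - 1)

lemma one_le_degree : 1 ≤ c.degree :=
  one_le_two.trans c.two_le_natDegree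

lemma slopeWeight_pos : 0 < c.slopeWeight :=
  Nat.mul_pos c.weight_pos (Nat.sub_pos_of_lt c.two_le_natDegree)

lemma weight_mul_degree : c.weight * c.degree = c.slopeWeight + c.weight := by
  rw [slopeWeight, ← Nat.mul_succ, Nat.succ_eq_add_one,
    Nat.sub_add_cancel c.one_le_degree]

lemma weight_mul_le {j : ℕ} (hj : j < c.degree) : c.weight * j ≤ c.slopeWeight :=
  Nat.mul_le_mul_left _ (Nat.le_sub_one_of_lt hj)

lemma poly_mem : c.poly ∈
    (AlgebraFiltration.weightedDegree k c.weight).piece (c.weight * c.degree) := by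
  refine fun j => AlgebraFiltration.mem_polynomial_scalars_iff.2 fun n hn => ?_
  rcases lt_or_ge c.degree j with hj | hj
  · rw [Polynomial.coeff_eq_zero_of_natDegree_lt hj, Polynomial.coeff_zero]
  · refine Polynomial.coeff_eq_zero_of_natDegree_lt ((c.natDegree_coeff_le j).trans_lt ?_)
    rw [← Nat.cast_lt (α := ℤ)]
    push_cast [hj]
    linarith

/-- The filtration of the coordinate ring by weighted degree. -/
noncomputable def filtration : AlgebraFiltration k L :=
  (AlgebraFiltration.weightedDegree k c.weight).map (aevalAeval c.ξ c.η)

lemma ξ_mem : c.ξ ∈ c.filtration.piece 1 := by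
  refine ⟨Polynomial.C Polynomial.X, AlgebraFiltration.C_mem_polynomial _ _ ?_, by simp⟩
  exact_mod_cast AlgebraFiltration.X_mem_polynomial _ 1

lemma η_mem : c.η ∈ c.filtration.piece c.weight :=
  ⟨Polynomial.X, AlgebraFiltration.X_mem_polynomial _ _, by simp⟩

lemma natDegree_modByMonic_poly_lt [Nontrivial k] (P : k[X][Y]) :
    (P %ₘ c.poly).natDegree < c.degree := by
  refine Polynomial.natDegree_modByMonic_lt _ c.monic fun h => ?_
  have := c.two_le_natDegree
  rw [h, Polynomial.natDegree_one] at this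
  omega

lemma aevalAeval_modByMonic_poly (P : k[X][Y]) :
    aevalAeval c.ξ c.η (P %ₘ c.poly) = aevalAeval c.ξ c.η P := by
  conv_rhs => rw [← Polynomial.modByMonic_add_div P c.poly]
  rw [map_add, map_mul, c.aevalAeval_poly, zero_mul, add_zero]

lemma exists_reduced [Nontrivial k] {a : ℤ} {x : L} (hx : x ∈ c.filtration.piece a) :
    ∃ P ∈ (AlgebraFiltration.weightedDegree k c.weight).piece a,
      P.natDegree < c.degree ∧ aevalAeval c.ξ c.η P = x := by
  obtain ⟨P, hP, rfl⟩ := hx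
  exact ⟨P %ₘ c.poly, AlgebraFiltration.modByMonic_mem c.monic c.poly_mem hP,
    c.natDegree_modByMonic_poly_lt P, c.aevalAeval_modByMonic_poly P⟩

/-- The family of the `ξ ^ l * η ^ j` with `j < degree` and `l ≤ n`. -/
def monomials (n : ℕ) (β : Fin c.degree × Fin (n + 1)) : L :=
  c.ξ ^ (β.2 : ℕ) * c.η ^ (β.1 : ℕ)

lemma monomials_mem (n : ℕ) (β : Fin c.degree × Fin (n + 1)) :
    c.monomials n β ∈ c.filtration.piece (n + c.slopeWeight) := by
  refine c.filtration.mul_mem_of_le (c.filtration.pow_mem c.ξ_mem _)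
    (c.filtration.pow_mem c.η_mem _) ?_
  have := c.weight_mul_le β.1.2
  have := β.2.2
  rw [mul_one, mul_comm ((β.1 : ℕ) : ℤ)]
  exact_mod_cast (by lia : (β.2 : ℕ) + c.weight * β.1 ≤ n + c.slopeWeight)

lemma piece_le_span_monomials [Nontrivial k] (n : ℕ) :
    c.filtration.piece n ≤ Submodule.span k (Set.range (c.monomials n)) := by
  intro x hx
  obtain ⟨P, hP, hdeg, rfl⟩ := c.exists_reduced hx
  rw [aevalAeval_eq_eval₂, Polynomial.eval₂_eq_sum_range' _ hdeg]
  refine Submodule.sum_mem _ fun j hj => ?_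
  have hN : (P.coeff j).natDegree < n + 1 := by
    refine Nat.lt_succ_of_le (Polynomial.natDegree_le_iff_coeff_eq_zero.2 fun l hl => ?_)
    exact AlgebraFiltration.mem_weightedDegree_iff.1 hP j l
      (by exact_mod_cast hl.trans_le (Nat.le_add_left ..))
  rw [RingHom.coe_coe, Polynomial.aeval_eq_sum_range' hN, Finset.sum_mul]
  refine Submodule.sum_mem _ fun l hl => ?_
  rw [smul_mul_assoc]
  exact Submodule.smul_mem _ _ (Submodule.subset_span
    ⟨(⟨j, Finset.mem_range.1 hj⟩, ⟨l, Finset.mem_range.1 hl⟩), rfl⟩)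

lemma linearIndependent_monomials (n : ℕ) : LinearIndependent k (c.monomials n) := by
  classical
  rw [Fintype.linearIndependent_iff]
  intro g hg β
  have hP := c.eq_zero_of_natDegree_lt
    (Polynomial.ofFn c.degree fun j => Polynomial.ofFn (n + 1) fun l => g (j, l))
    (Polynomial.ofFn_natDegree_lt c.one_le_degree _) ?_
  · have := congrArg (fun P => (P.coeff β.1).coeff β.2) hP
    simpa [Polynomial.ofFn_coeff_eq_val_of_lt _ β.1.2, Polynomial.ofFn_coeff_eq_val_of_lt _ β.2.2]
      using this
  · rw [← hg, Fintype.sum_prod_type, Polynomial.ofFn_eq_sum_monomial, map_sum]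
    refine Finset.sum_congr rfl fun j _ => ?_
    rw [aevalAeval_eq_eval₂, Polynomial.eval₂_monomial, RingHom.coe_coe,
      Polynomial.ofFn_eq_sum_monomial, map_sum, Finset.sum_mul]
    refine Finset.sum_congr rfl fun l _ => ?_
    rw [Polynomial.aeval_monomial, ← Algebra.smul_def, smul_mul_assoc, monomials]

end Ring

section Field

variable {k L : Type*} [Field k] [Field L] [Algebra k L] (c : Curve k L)

lemma finrank_span_monomials (n : ℕ) :
    Module.finrank k (Submodule.span k (Set.range (c.monomials n))) = c.degree * (n + 1) := by
  rw [finrank_span_eq_card (c.linearIndependent_monomials n), Fintype.card_prod, Fintype.card_fin,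
    Fintype.card_fin]

lemma linearCombination_monomials_mem (n : ℕ) (u : Fin c.degree × Fin (n + 1) → k) :
    Fintype.linearCombination k (c.monomials n) u ∈ c.filtration.piece (n + c.slopeWeight) :=
  Submodule.sum_mem _ fun β _ => Submodule.smul_mem _ _ (c.monomials_mem n β)

lemma exists_mul_eq_aeval {a n : ℕ} {z : L} (hz : z ≠ 0) (hza : z ∈ c.filtration.piece a)
    (hn : (c.degree - 1) * (a + c.slopeWeight) ≤ n) :
    ∃ y ∈ c.filtration.piece (n + c.slopeWeight), ∃ N : k[X],
      N ≠ 0 ∧ N.natDegree ≤ a + n + c.slopeWeight ∧ z * y = Polynomial.aeval c.ξ N := by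
  classical
  set d := a + n + c.slopeWeight
  let ψ : ((Fin c.degree × Fin (n + 1) → k) × (Fin (d + 1) → k)) →ₗ[k] L :=
    (LinearMap.mulLeft k z ∘ₗ Fintype.linearCombination k (c.monomials n)).coprod
      ((Polynomial.aeval c.ξ).toLinearMap ∘ₗ Polynomial.ofFn (d + 1))
  have hdeg (w) : (Polynomial.ofFn (d + 1) w : k[X]).natDegree ≤ d :=
    Nat.le_of_lt_succ (Polynomial.ofFn_natDegree_lt (Nat.le_add_left 1 d) w)
  have hψ (uw) : ψ uw ∈ Submodule.span k (Set.range (c.monomials d)) := by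
    refine c.piece_le_span_monomials _ (add_mem
      (c.filtration.mul_mem_of_le hza (c.linearCombination_monomials_mem n _) ?_) ?_)
    · push_cast [d]
      rw [add_assoc]
    · exact AlgebraFiltration.aeval_mem c.ξ_mem
        (AlgebraFiltration.mem_polynomial_scalars_of_natDegree_le (by exact_mod_cast hdeg uw.2))
  have : FiniteDimensional k (Submodule.span k (Set.range (c.monomials d))) :=
    FiniteDimensional.span_of_finite k (Set.finite_range _)
  have hlt : Module.finrank k (Submodule.span k (Set.range (c.monomials d))) <
      Module.finrank k ((Fin c.degree × Fin (n + 1) → k) × (Fin (d + 1) → k)) := by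
    obtain ⟨m, hm⟩ := Nat.exists_eq_add_of_le' c.one_le_degree
    simp only [finrank_span_monomials, Module.finrank_prod, Module.finrank_fintype_fun_eq_card,
      Fintype.card_prod, Fintype.card_fin, hm, Nat.add_sub_cancel, d] at hn ⊢
    lia
  obtain ⟨⟨u, w⟩, hker, hne⟩ := Submodule.exists_mem_ne_zero_of_ne_bot
    (LinearMap.ker_ne_bot_of_finrank_lt (f := ψ.codRestrict _ hψ) hlt)
  have heq : z * Fintype.linearCombination k (c.monomials n) u +
      Polynomial.aeval c.ξ (Polynomial.ofFn (d + 1) w) = 0 :=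
    congrArg Subtype.val (LinearMap.mem_ker.1 hker)
  refine ⟨_, c.linearCombination_monomials_mem n u, -Polynomial.ofFn (d + 1) w,
    fun hw => hne ?_, ?_, ?_⟩
  · rw [neg_eq_zero] at hw
    rw [hw, map_zero, add_zero, mul_eq_zero, or_iff_right hz] at heq
    rw [Prod.mk_eq_zero]
    exact ⟨(c.linearIndependent_monomials n).fintypeLinearCombination_injective
      (heq.trans (map_zero _).symm), Polynomial.injective_ofFn _ (hw.trans (map_zero _).symm)⟩
  · rw [Polynomial.natDegree_neg]
    exact hdeg w
  · rw [map_neg]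
    exact eq_neg_of_add_eq_zero_left heq

end Field

end Curve

/-- A discrete valuation of `L`, trivial on `k` and with residue field `k`, given by its fractional
ideals. -/
structure Place (k L : Type*) [CommRing k] [Field L] [Algebra k L] where
  /-- The elements of valuation at least `n`. -/
  ideal : ℤ → Submodule k L
  anti : Antitone ideal
  one_mem : 1 ∈ ideal 0
  mul_mem : ∀ {a b : ℤ} {x y : L}, x ∈ ideal a → y ∈ ideal b → x * y ∈ ideal (a + b)
  /-- A uniformizer. -/
  π : L
  π_ne_zero : π ≠ 0
  zpow_mem : ∀ n : ℤ, π ^ n ∈ ideal n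
  exists_sub_smul_zpow_mem : ∀ {n : ℤ} {x : L}, x ∈ ideal n → ∃ r : k, x - r • π ^ n ∈ ideal (n + 1)
  exists_mem : ∀ x : L, ∃ n, x ∈ ideal n
  exists_notMem : ∀ x : L, x ≠ 0 → ∃ n, x ∉ ideal n

namespace Place

variable {k L : Type*} [CommRing k] [Field L] [Algebra k L] (v : Place k L)

lemma mem_of_le {a b : ℤ} {x : L} (hx : x ∈ v.ideal a) (hab : b ≤ a) : x ∈ v.ideal b :=
  v.anti hab hx

lemma mul_mem_of_le {a b c : ℤ} {x y : L} (hx : x ∈ v.ideal a) (hy : y ∈ v.ideal b)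
    (h : c ≤ a + b) : x * y ∈ v.ideal c :=
  v.mem_of_le (v.mul_mem hx hy) h

lemma pow_mem {a : ℤ} {x : L} (hx : x ∈ v.ideal a) (n : ℕ) : x ^ n ∈ v.ideal (n * a) := by
  induction n with
  | zero => simpa using v.one_mem
  | succ n ih =>
    rw [pow_succ]
    refine v.mul_mem_of_le ih hx (le_of_eq ?_)
    push_cast
    ring

lemma exists_forall_mem {ι : Type*} [Finite ι] (ρ : ι → L) : ∃ n, ∀ i, ρ i ∈ v.ideal n := by
  choose n hn using fun i => v.exists_mem (ρ i)
  obtain ⟨N, hN⟩ := (Set.finite_range n).bddBelow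
  exact ⟨N, fun i => v.mem_of_le (hn i) (hN ⟨i, rfl⟩)⟩

lemma exists_leadingCoeff {ι : Type*} [Finite ι] {ρ : ι → L} (hρ : ρ ≠ 0) :
    ∃ (ν : ℤ) (b : ι → k), b ≠ 0 ∧ ∀ i, ρ i - b i • v.π ^ ν ∈ v.ideal (ν + 1) := by
  obtain ⟨i₀, hi₀⟩ := Function.ne_iff.1 hρ
  obtain ⟨B, hB⟩ := v.exists_notMem _ hi₀
  obtain ⟨ν, hν, hmax⟩ := Int.exists_greatest_of_bdd (P := fun n => ∀ i, ρ i ∈ v.ideal n)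
    ⟨B, fun n hn => le_of_not_gt fun h => hB (v.mem_of_le (hn i₀) h.le)⟩ (v.exists_forall_mem ρ)
  choose b hb using fun i => v.exists_sub_smul_zpow_mem (hν i)
  refine ⟨ν, b, ?_, hb⟩
  rintro rfl
  have := hmax (ν + 1) fun i => by simpa using hb i
  omega

end Place

namespace Curve

section Adapted

variable {k L : Type*} [Field k] [Field L] [Algebra k L] (c : Curve k L) (v : Place k L)

/-- A place which measures the weighted degree: the generic point has poles of order at most `1`
and `weight`, and a polynomial in `ξ` vanishes at the place at most to the order of its degree. -/
structure Adapted : Prop where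
  ξ_mem : c.ξ ∈ v.ideal (-1)
  η_mem : c.η ∈ v.ideal (-c.weight)
  le_natDegree : ∀ N : k[X], N ≠ 0 → ∀ n : ℤ, Polynomial.aeval c.ξ N ∈ v.ideal n → n ≤ N.natDegree

variable {c v}

lemma Adapted.mem_ideal_neg (hv : c.Adapted v) {b : ℤ} {x : L} (hx : x ∈ c.filtration.piece b) :
    x ∈ v.ideal (-b) := by
  obtain ⟨P, hP, rfl⟩ := hx
  change aevalAeval c.ξ c.η P ∈ _
  rw [aevalAeval_eq_eval₂, Polynomial.eval₂_eq_sum_range]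
  refine Submodule.sum_mem _ fun j _ => ?_
  rw [RingHom.coe_coe, Polynomial.aeval_eq_sum_range, Finset.sum_mul]
  refine Submodule.sum_mem _ fun n _ => ?_
  rw [smul_mul_assoc]
  rcases lt_or_ge b (c.weight * j + n) with h | h
  · simp [AlgebraFiltration.mem_weightedDegree_iff.1 hP j n h]
  · exact Submodule.smul_mem _ _ (v.mul_mem_of_le (v.pow_mem hv.ξ_mem n)
      (v.pow_mem hv.η_mem j) (by linarith))

lemma Adapted.valuation_add_weight_le (hv : c.Adapted v) {a : ℕ} {z : L} (hz : z ≠ 0)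
    (hza : z ∈ c.filtration.piece a) {n : ℤ} (hn : z ∈ v.ideal n) :
    n + a ≤ 2 * c.degree * (a + c.slopeWeight) := by
  obtain ⟨y, hy, N, hN, hdeg, hzy⟩ := c.exists_mul_eq_aeval hz hza le_rfl
  have hval := hv.le_natDegree N hN _ (hzy ▸ v.mul_mem hn (hv.mem_ideal_neg hy))
  obtain ⟨m, hm⟩ := Nat.exists_eq_add_of_le' c.one_le_degree
  zify [hm, Nat.add_sub_cancel] at hdeg hval ⊢
  linarith

end Adapted

section Frobenius

variable {k L : Type*} [Field k] [Fintype k] [Field L] [Algebra k L] {c : Curve k L} {v : Place k L}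

lemma Adapted.eq_zero_of_sum_mul_pow_card (hv : c.Adapted v) {a : ℕ}
    (hcard : 2 * c.degree * (a + 2 * c.slopeWeight) < Fintype.card k)
    {ρ : Fin c.degree × Fin (a + 1) → L}
    (hρ : ∑ β, c.monomials a β * ρ β ^ Fintype.card k = 0) : ρ = 0 := by
  by_contra hne
  set φ := FiniteField.frobeniusAlgHom k L
  obtain ⟨ν, b, hb, hρb⟩ := v.exists_leadingCoeff hne
  set z : L := ∑ β, b β • c.monomials a β
  have hz : z ≠ 0 := fun h =>
    hb (funext (Fintype.linearIndependent_iff.1 (c.linearIndependent_monomials a) b h))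
  have hza : z ∈ c.filtration.piece (a + c.slopeWeight : ℕ) :=
    Submodule.sum_mem _ fun β _ => Submodule.smul_mem _ _ (c.monomials_mem a β)
  have hzπ : z * φ (v.π ^ ν) = -∑ β, c.monomials a β * φ (ρ β - b β • v.π ^ ν) := by
    have hρ : ∑ β, c.monomials a β * φ (ρ β) = 0 := hρ
    simp only [map_sub, map_smul, mul_sub, Finset.sum_sub_distrib, hρ, zero_sub, neg_neg, z,
      Finset.sum_mul, smul_mul_assoc, mul_smul_comm]
  have hmem : z * φ (v.π ^ ν) ∈
      v.ideal (Fintype.card k * (ν + 1) - (a + c.slopeWeight : ℕ)) := by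
    rw [hzπ]
    refine neg_mem (Submodule.sum_mem _ fun β _ => ?_)
    exact v.mul_mem_of_le (hv.mem_ideal_neg (c.monomials_mem a β)) (v.pow_mem (hρb β) _)
      (le_of_eq (by push_cast; ring))
  have hzv : z ∈ v.ideal (Fintype.card k - (a + c.slopeWeight : ℕ)) := by
    have hπ : φ (v.π ^ ν) * φ (v.π ^ (-ν)) = 1 := by
      rw [← map_mul, ← zpow_add₀ v.π_ne_zero, add_neg_cancel, zpow_zero, map_one]
    rw [← mul_one z, ← hπ, ← mul_assoc]
    exact v.mul_mem_of_le hmem (v.pow_mem (v.zpow_mem _) _) (le_of_eq (by ring))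
  have hval := hv.valuation_add_weight_le hz hza hzv
  zify at hcard
  push_cast at hval
  linarith

lemma Adapted.eq_zero_of_sum_mul_monomials_pow_card (hv : c.Adapted v) {a N : ℕ}
    (hcard : 2 * c.degree * (a + 2 * c.slopeWeight) < Fintype.card k)
    {w : Fin c.degree × Fin (N + 1) → L} (hwa : ∀ γ, w γ ∈ c.filtration.piece a)
    (hw : ∑ γ, w γ * c.monomials N γ ^ Fintype.card k = 0) : w = 0 := by
  choose u hu using fun γ =>
    (Submodule.mem_span_range_iff_exists_fun k).1 (c.piece_le_span_monomials a (hwa γ))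
  set φ := FiniteField.frobeniusAlgHom k L
  have hρ : (fun β => ∑ γ, u γ β • c.monomials N γ) = 0 := by
    refine hv.eq_zero_of_sum_mul_pow_card hcard ?_
    change ∑ β, c.monomials a β * φ (∑ γ, u γ β • c.monomials N γ) = 0
    rw [← hw]
    simp only [map_sum, map_smul, Finset.mul_sum, ← hu, Finset.sum_mul]
    rw [Finset.sum_comm]
    refine Finset.sum_congr rfl fun γ _ => Finset.sum_congr rfl fun β _ => ?_
    rw [mul_smul_comm, smul_mul_assoc]
    rfl
  have huz (γ) (β) : u γ β = 0 :=
    Fintype.linearIndependent_iff.1 (c.linearIndependent_monomials N) _ (congrFun hρ β) γ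
  funext γ
  simp [← hu, huz]

end Frobenius

section Ring

variable {k L : Type*} [CommRing k] [CommRing L] [Algebra k L] (c : Curve k L)

/-- The coordinate ring of the curve. -/
noncomputable def coordinateRing : Subalgebra k L :=
  (aevalAeval (R := k) c.ξ c.η).range

lemma ξ_mem_coordinateRing : c.ξ ∈ c.coordinateRing :=
  ⟨Polynomial.C Polynomial.X, by simp⟩

lemma η_mem_coordinateRing : c.η ∈ c.coordinateRing :=
  ⟨Polynomial.X, by simp⟩

lemma mem_coordinateRing_of_mem_piece {a : ℤ} {x : L} (hx : x ∈ c.filtration.piece a) :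
    x ∈ c.coordinateRing := by
  obtain ⟨P, -, rfl⟩ := hx
  exact ⟨P, rfl⟩

lemma eq_zero_of_aeval_mul_mem_piece [IsDomain k] {N : k[X]} (hN : N ≠ 0) {b : ℤ}
    (hb : b < N.natDegree) {z : L} (hz : z ∈ c.coordinateRing)
    (h : Polynomial.aeval c.ξ N * z ∈ c.filtration.piece b) : z = 0 := by
  obtain ⟨P, rfl⟩ := hz
  obtain ⟨Q, hQ, hQdeg, hQz⟩ := c.exists_reduced h
  set R := P %ₘ c.poly
  have hNR : Polynomial.C N * R = Q := by
    refine sub_eq_zero.1 (c.eq_zero_of_natDegree_lt _ ?_ ?_)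
    · refine (Polynomial.natDegree_sub_le _ _).trans_lt (max_lt ?_ hQdeg)
      exact (Polynomial.natDegree_C_mul_le _ _).trans_lt (c.natDegree_modByMonic_poly_lt P)
    · rw [map_sub, map_mul, c.aevalAeval_modByMonic_poly, hQz, Polynomial.aevalAeval_C]
      exact sub_self _
  have hR : R = 0 := by
    ext1 j
    by_contra hj
    rw [Polynomial.coeff_zero] at hj
    have hQj : Q.coeff j = N * R.coeff j := by rw [← hNR, Polynomial.coeff_C_mul]
    have hdeg : b < c.weight * j + (Q.coeff j).natDegree := by
      rw [hQj, Polynomial.natDegree_mul hN hj]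
      push_cast
      have : (0 : ℤ) ≤ c.weight * j := by positivity
      linarith
    refine mul_ne_zero hN hj ?_
    rw [← hQj, ← Polynomial.leadingCoeff_eq_zero]
    exact AlgebraFiltration.mem_weightedDegree_iff.1 hQ j _ hdeg
  change aevalAeval c.ξ c.η P = 0
  rw [← c.aevalAeval_modByMonic_poly]
  exact (congrArg _ hR).trans (map_zero _)

/-- The slope of the chords through the point `(ξ, ζ)` of the curve: the quotient by `Y - ζ` of the
equation of the curve at `ξ`. -/
noncomputable def slope (ζ : L) : L[X] :=
  c.poly.map (Polynomial.aeval (R := k) c.ξ : k[X] →+* L) /ₘ (Polynomial.X - Polynomial.C ζ)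

variable {ζ : L}

lemma X_sub_C_mul_slope (hζ : aevalAeval c.ξ ζ c.poly = 0) :
    (Polynomial.X - Polynomial.C ζ) * c.slope ζ =
      c.poly.map (Polynomial.aeval (R := k) c.ξ : k[X] →+* L) := by
  refine Polynomial.mul_divByMonic_eq_iff_isRoot.2 ?_
  rw [Polynomial.IsRoot, Polynomial.eval_map, ← aevalAeval_eq_eval₂, hζ]

lemma sub_mul_eval_slope (hζ : aevalAeval c.ξ ζ c.poly = 0) (y : L) :
    (y - ζ) * (c.slope ζ).eval y = aevalAeval c.ξ y c.poly := by
  rw [aevalAeval_eq_eval₂, ← Polynomial.eval_map, ← c.X_sub_C_mul_slope hζ]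
  simp

lemma eval_slope_self (hζ : aevalAeval c.ξ ζ c.poly = 0) :
    (c.slope ζ).eval ζ = aevalAeval c.ξ ζ (Polynomial.derivative c.poly) := by
  rw [aevalAeval_eq_eval₂, ← Polynomial.eval_map, ← Polynomial.derivative_map,
    ← c.X_sub_C_mul_slope hζ]
  simp

lemma slope_mem (hζ : ζ ∈ c.filtration.piece c.weight) :
    c.slope ζ ∈ (c.filtration.polynomial c.weight).piece c.slopeWeight := by
  refine ((c.filtration.polynomial c.weight).mem_of_le (AlgebraFiltration.divByMonic_X_sub_C_mem
    hζ (a := c.weight * c.degree) fun j => ?_) (le_of_eq ?_))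
  · rw [Polynomial.coeff_map]
    exact AlgebraFiltration.aeval_mem c.ξ_mem (c.poly_mem j)
  · have := c.weight_mul_degree
    zify at this
    linarith

lemma eval_slope_mem_coordinateRing (hζ : ζ ∈ c.filtration.piece c.weight) {y : L}
    (hy : y ∈ c.coordinateRing) : (c.slope ζ).eval y ∈ c.coordinateRing := by
  rw [Polynomial.eval_eq_sum_range]
  exact sum_mem fun j _ => mul_mem (c.mem_coordinateRing_of_mem_piece (c.slope_mem hζ j))
    (pow_mem hy j)

/-- The equation of the curve translated by `-ξ` in the first coordinate. -/
noncomputable def translate : L[X][Y] :=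
  c.poly.map (Polynomial.aeval (R := k) (Polynomial.C c.ξ + Polynomial.X) : k[X] →+* L[X])

lemma monic_translate : c.translate.Monic :=
  c.monic.map _

lemma natDegree_translate [Nontrivial L] : c.translate.natDegree = c.degree :=
  c.monic.natDegree_map _

lemma evalEval_translate (t y : L) :
    c.translate.evalEval t y = aevalAeval (c.ξ + t) y c.poly := by
  rw [translate, aevalAeval_eq_eval₂, Polynomial.evalEval, ← Polynomial.coe_evalRingHom,
    Polynomial.eval_map, Polynomial.hom_eval₂]
  congr 1
  · ext <;> simp
  · simp

lemma translate_mem : c.translate ∈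
    ((c.filtration.polynomial 1).polynomial c.weight).piece (c.weight * c.degree) := by
  intro j
  rw [translate, Polynomial.coeff_map]
  refine AlgebraFiltration.aeval_mem (add_mem ?_ ?_) (c.poly_mem j)
  · exact AlgebraFiltration.C_mem_polynomial _ _ c.ξ_mem
  · exact_mod_cast AlgebraFiltration.X_mem_polynomial c.filtration 1

/-- The reduction of `slope ζ ^ i` modulo the translated equation of the curve. -/
noncomputable def slopePowExpansion (ζ : L) (i : ℕ) : L[X][Y] :=
  (c.slope ζ).map Polynomial.C ^ i %ₘ c.translate

lemma evalEval_slopePowExpansion (i : ℕ) {t y : L} (h : aevalAeval (c.ξ + t) y c.poly = 0) :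
    (c.slopePowExpansion ζ i).evalEval t y = (c.slope ζ).eval y ^ i := by
  have hmod := congrArg (Polynomial.evalEval t y)
    (Polynomial.modByMonic_add_div ((c.slope ζ).map Polynomial.C ^ i) c.translate)
  rw [Polynomial.evalEval_add, Polynomial.evalEval_mul, c.evalEval_translate, h, zero_mul,
    add_zero, Polynomial.evalEval_pow, Polynomial.evalEval_map_C] at hmod
  exact hmod

lemma natDegree_slopePowExpansion_lt [Nontrivial L] (ζ : L) (i : ℕ) :
    (c.slopePowExpansion ζ i).natDegree < c.degree := by
  rw [← c.natDegree_translate]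
  refine Polynomial.natDegree_modByMonic_lt _ c.monic_translate fun h => ?_
  have := c.two_le_natDegree.trans_eq c.natDegree_translate.symm
  rw [h, Polynomial.natDegree_one] at this
  omega

lemma slopePowExpansion_mem (hζ : ζ ∈ c.filtration.piece c.weight) (i : ℕ) :
    c.slopePowExpansion ζ i ∈
      ((c.filtration.polynomial 1).polynomial c.weight).piece (i * c.slopeWeight) := by
  nontriviality L
  refine AlgebraFiltration.modByMonic_mem c.monic_translate
    (c.natDegree_translate.symm ▸ c.translate_mem) (AlgebraFiltration.pow_mem _ (fun j => ?_) i)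
  rw [Polynomial.coeff_map]
  exact AlgebraFiltration.C_mem_polynomial _ _ (c.slope_mem hζ j)

end Ring

section Frobenius

variable {k L : Type*} [Field k] [Fintype k] [Field L] [Algebra k L] {c : Curve k L} {v : Place k L}

lemma aevalAeval_pow_card (x y : L) (P : k[X][Y]) :
    aevalAeval (x ^ Fintype.card k) (y ^ Fintype.card k) P =
      aevalAeval x y P ^ Fintype.card k :=
  (map_aevalAeval (FiniteField.frobeniusAlgHom k L) x y P).symm

lemma exists_ξ_mul_eval_slope {ζ α β : L} (hζ : ζ ∈ c.filtration.piece c.weight)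
    (hζ₀ : aevalAeval c.ξ ζ c.poly = 0) (hα : α ∈ c.coordinateRing) (hβ : β ∈ c.coordinateRing)
    (h : c.ξ = α * (c.ξ ^ Fintype.card k - c.ξ) + β * (c.η ^ Fintype.card k - ζ)) :
    ∃ κ ∈ c.coordinateRing, c.ξ * (c.slope ζ).eval (c.η ^ Fintype.card k) =
      (c.ξ ^ Fintype.card k - c.ξ) * κ := by
  have hη := pow_mem c.η_mem_coordinateRing (Fintype.card k)
  obtain ⟨w, hw⟩ := sub_dvd_aevalAeval_sub (⟨_, c.ξ_mem_coordinateRing⟩ : c.coordinateRing)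
    (⟨_, pow_mem c.ξ_mem_coordinateRing (Fintype.card k)⟩ : c.coordinateRing) ⟨_, hη⟩ c.poly
  replace hw := congrArg c.coordinateRing.val hw
  rw [map_sub, map_mul, map_sub, map_aevalAeval, map_aevalAeval] at hw
  simp only [Subalgebra.coe_val, aevalAeval_pow_card, c.aevalAeval_poly,
    zero_pow Fintype.card_ne_zero, sub_zero] at hw
  have hslope := c.sub_mul_eval_slope hζ₀ (c.η ^ Fintype.card k)
  refine ⟨α * (c.slope ζ).eval (c.η ^ Fintype.card k) - β * w, ?_, ?_⟩
  · exact sub_mem (mul_mem hα (c.eval_slope_mem_coordinateRing hζ hη)) (mul_mem hβ w.2)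
  · linear_combination (c.slope ζ).eval (c.η ^ Fintype.card k) * h + β * hslope + β * hw

lemma Adapted.eq_zero_of_sum_eval_mul_pow_card (hv : c.Adapted v) {a : ℕ}
    (hcard : 2 * c.degree * (a + 2 * c.slopeWeight) < Fintype.card k)
    {A : Fin c.degree → L[X]} (hA : ∀ j, A j ∈ (c.filtration.polynomial 1).piece a)
    (h : ∑ j, (A j).eval (c.ξ ^ Fintype.card k - c.ξ) * (c.η ^ Fintype.card k) ^ (j : ℕ) = 0) :
    A = 0 := by
  set B : Fin c.degree → L[X] := fun j => Polynomial.taylor (-c.ξ) (A j)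
  set N := Finset.univ.sup fun j => (B j).natDegree
  have hBN (j) : (B j).natDegree < N + 1 :=
    Nat.lt_succ_of_le (Finset.le_sup (f := fun j => (B j).natDegree) (Finset.mem_univ j))
  have hBmem (j) (l : ℕ) : (B j).coeff l ∈ c.filtration.piece a :=
    c.filtration.mem_of_le (AlgebraFiltration.taylor_mem (neg_mem c.ξ_mem) (hA j) l) (by simp)
  have hB := hv.eq_zero_of_sum_mul_monomials_pow_card hcard
    (w := fun γ : Fin c.degree × Fin (N + 1) => (B γ.1).coeff γ.2) (fun γ => hBmem _ _) (by
      rw [← h, Fintype.sum_prod_type]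
      refine Finset.sum_congr rfl fun j _ => ?_
      rw [sub_eq_add_neg, ← Polynomial.taylor_eval,
        Polynomial.eval_eq_sum_range' (hBN j), Finset.sum_mul, Finset.sum_range]
      refine Finset.sum_congr rfl fun l _ => ?_
      rw [monomials, mul_pow, ← pow_mul, ← pow_mul, ← pow_mul, ← pow_mul,
        mul_comm (l : ℕ), mul_comm (j : ℕ), mul_assoc])
  funext j
  refine Polynomial.taylor_injective (-c.ξ) ?_
  rw [Pi.zero_apply, map_zero]
  ext l
  rcases lt_or_ge l (N + 1) with hl | hl
  · exact congrFun hB (j, ⟨l, hl⟩)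
  · exact Polynomial.coeff_eq_zero_of_natDegree_lt ((hBN j).trans_le hl)

end Frobenius

end Curve

lemma evalEval_eq_sum_of_natDegree_lt {A : Type*} [CommRing A] {P : A[X][Y]} {n : ℕ}
    (h : P.natDegree < n) (x y : A) :
    P.evalEval x y = ∑ j : Fin n, (P.coeff j).eval x * y ^ (j : ℕ) := by
  rw [Polynomial.evalEval, Polynomial.eval_eq_sum_range' h, Polynomial.eval_finsetSum,
    Finset.sum_range]
  simp only [Polynomial.eval_mul, Polynomial.eval_pow, Polynomial.eval_C]

lemma exists_eval_sub_eval_trunc_eq {k A : Type*} [CommRing k] [CommRing A] [Algebra k A]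
    (S : Subalgebra k A) {f : A[X]} (hf : ∀ e, f.coeff e ∈ S) {t : A} (ht : t ∈ S) (M : ℕ) :
    ∃ w ∈ S, f.eval t - (PowerSeries.trunc M (f : PowerSeries A)).eval t = t ^ M * w := by
  obtain ⟨g, hg⟩ := (Polynomial.X_pow_dvd_iff (n := M)
    (f := f - PowerSeries.trunc M (f : PowerSeries A))).2 fun e he => by
      rw [Polynomial.coeff_sub, PowerSeries.coeff_trunc, if_pos he, Polynomial.coeff_coe, sub_self]
  refine ⟨g.eval t, ?_, ?_⟩
  · rw [Polynomial.eval_eq_sum_range]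
    refine sum_mem fun e _ => mul_mem ?_ (pow_mem ht e)
    rw [← Polynomial.coeff_X_pow_mul g M e, ← hg, Polynomial.coeff_sub, PowerSeries.coeff_trunc,
      if_neg (by omega), sub_zero]
    exact hf _
  · rw [← Polynomial.eval_sub, hg, Polynomial.eval_mul, Polynomial.eval_pow, Polynomial.eval_X]

lemma exists_evalEval_sub_sum_eval_trunc_eq {k A : Type*} [CommRing k] [CommRing A] [Algebra k A]
    (S : Subalgebra k A) {P : A[X][Y]} {n : ℕ} (hdeg : P.natDegree < n)
    (hP : ∀ j e, (P.coeff j).coeff e ∈ S) {t y : A} (ht : t ∈ S) (hy : y ∈ S) (M : ℕ) :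
    ∃ w ∈ S, P.evalEval t y -
      ∑ j : Fin n, (PowerSeries.trunc M (P.coeff j : PowerSeries A)).eval t * y ^ (j : ℕ) =
        t ^ M * w := by
  choose w hw hwP using fun j : Fin n => exists_eval_sub_eval_trunc_eq S (hP j) ht M
  refine ⟨∑ j, w j * y ^ (j : ℕ), sum_mem fun j _ => mul_mem (hw j) (pow_mem hy _), ?_⟩
  rw [evalEval_eq_sum_of_natDegree_lt hdeg, ← Finset.sum_sub_distrib, Finset.mul_sum]
  exact Finset.sum_congr rfl fun j _ => by rw [← sub_mul, hwP, mul_assoc]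

namespace Curve

lemma ξ_ne_zero {k L : Type*} [Field k] [Field L] [Algebra k L] (c : Curve k L) : c.ξ ≠ 0 := by
  intro h
  have hX := c.eq_zero_of_natDegree_lt (Polynomial.C Polynomial.X)
    (by rw [Polynomial.natDegree_C]; exact c.one_le_degree) (by simp [h])
  simp at hX

section Frobenius

variable {k L : Type*} [Field k] [Fintype k] [Field L] [Algebra k L] {c : Curve k L} {v : Place k L}

variable (c) in
lemma ξ_pow_card_sub_ξ_mem : c.ξ ^ Fintype.card k - c.ξ ∈ c.filtration.piece (Fintype.card k) := by
  refine sub_mem ?_ (c.filtration.mem_of_le c.ξ_mem ?_)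
  · simpa using c.filtration.pow_mem c.ξ_mem (Fintype.card k)
  · exact_mod_cast Fintype.card_pos

lemma mul_sum_eval_trunc_mem {A : L[X][Y]} {M T : ℕ}
    (hA : ∀ j e, (A.coeff j).coeff e ∈ c.filtration.piece T)
    (hwindow : ∀ j e, e < M → M ≤ e + c.slopeWeight → (A.coeff j).coeff e = 0) :
    c.ξ ^ M * ∑ j : Fin c.degree, (PowerSeries.trunc M (A.coeff j : PowerSeries L)).eval
      (c.ξ ^ Fintype.card k - c.ξ) * (c.η ^ Fintype.card k) ^ (j : ℕ) ∈
      c.filtration.piece (T + M + Fintype.card k * (M - 1)) := by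
  rw [Finset.mul_sum]
  refine sum_mem fun j _ => ?_
  rw [Polynomial.eval, PowerSeries.eval₂_trunc_eq_sum_range, Finset.sum_mul, Finset.mul_sum]
  refine sum_mem fun e he => ?_
  rw [RingHom.id_apply, Polynomial.coeff_coe]
  have he := Finset.mem_range.1 he
  rcases le_or_gt M (e + c.slopeWeight) with hw | hw
  · rw [hwindow j e he hw, zero_mul, zero_mul, mul_zero]
    exact zero_mem _
  have hη : (c.η ^ Fintype.card k) ^ (j : ℕ) ∈
      c.filtration.piece (Fintype.card k * c.slopeWeight) := by
    rw [pow_right_comm]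
    refine c.filtration.pow_mem (c.filtration.mem_of_le (c.filtration.pow_mem c.η_mem j) ?_) _
    rw [mul_comm]
    exact_mod_cast c.weight_mul_le j.2
  refine c.filtration.mul_mem_of_le (c.filtration.pow_mem c.ξ_mem M) (c.filtration.mul_mem
    (c.filtration.mul_mem (hA j e) (c.filtration.pow_mem c.ξ_pow_card_sub_ξ_mem e)) hη) ?_
  have hq : (Fintype.card k : ℤ) * (e + c.slopeWeight) ≤ Fintype.card k * (M - 1) :=
    mul_le_mul_of_nonneg_left (by lia) (by positivity)
  linarith

lemma natDegree_X_pow_card_sub_X_pow (M : ℕ) :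
    ((Polynomial.X ^ Fintype.card k - Polynomial.X : k[X]) ^ M).natDegree =
      M * Fintype.card k := by
  rw [Polynomial.natDegree_pow, FiniteField.X_pow_card_sub_X_natDegree_eq k Fintype.one_lt_card]

lemma eq_zero_of_mul_sum_eval_trunc_eq {A : L[X][Y]} {M T : ℕ} (hcard : T + M < Fintype.card k)
    (hA : ∀ j e, (A.coeff j).coeff e ∈ c.filtration.piece T)
    (hwindow : ∀ j e, e < M → M ≤ e + c.slopeWeight → (A.coeff j).coeff e = 0)
    {z : L} (hz : z ∈ c.coordinateRing)
    (h : c.ξ ^ M * ∑ j : Fin c.degree, (PowerSeries.trunc M (A.coeff j : PowerSeries L)).eval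
      (c.ξ ^ Fintype.card k - c.ξ) * (c.η ^ Fintype.card k) ^ (j : ℕ) =
        (c.ξ ^ Fintype.card k - c.ξ) ^ M * z) :
    z = 0 := by
  refine c.eq_zero_of_aeval_mul_mem_piece
    (N := (Polynomial.X ^ Fintype.card k - Polynomial.X) ^ M)
    (pow_ne_zero _ (FiniteField.X_pow_card_sub_X_ne_zero k Fintype.one_lt_card))
    (b := T + M + Fintype.card k * (M - 1)) ?_ hz ?_
  · rw [natDegree_X_pow_card_sub_X_pow]
    zify at hcard
    push_cast
    linarith
  · have := mul_sum_eval_trunc_mem hA hwindow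
    rw [h] at this
    simpa using this

lemma Adapted.coeff_coeff_eq_zero (hv : c.Adapted v) {A : L[X][Y]} {M T : ℕ}
    (hcard : 2 * c.degree * (T + M + 2 * c.slopeWeight) < Fintype.card k)
    (hdeg : A.natDegree < c.degree) (hA : ∀ j e, (A.coeff j).coeff e ∈ c.filtration.piece T)
    (hwindow : ∀ j e, e < M → M ≤ e + c.slopeWeight → (A.coeff j).coeff e = 0)
    {z : L} (hz : z ∈ c.coordinateRing)
    (h : c.ξ ^ M * A.evalEval (c.ξ ^ Fintype.card k - c.ξ) (c.η ^ Fintype.card k) =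
      (c.ξ ^ Fintype.card k - c.ξ) ^ M * z) :
    ∀ j e, e < M → (A.coeff j).coeff e = 0 := by
  set t := c.ξ ^ Fintype.card k - c.ξ
  set low : Fin c.degree → L[X] := fun j => PowerSeries.trunc M (A.coeff j : PowerSeries L)
  obtain ⟨w, hw, hwA⟩ := exists_evalEval_sub_sum_eval_trunc_eq c.coordinateRing hdeg
    (fun j e => c.mem_coordinateRing_of_mem_piece (hA j e))
    (c.mem_coordinateRing_of_mem_piece c.ξ_pow_card_sub_ξ_mem)
    (pow_mem c.η_mem_coordinateRing (Fintype.card k)) M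
  have hlow : c.ξ ^ M * ∑ j, (low j).eval t * (c.η ^ Fintype.card k) ^ (j : ℕ) =
      t ^ M * (z - c.ξ ^ M * w) := by
    linear_combination h - c.ξ ^ M * hwA
  have hz' : z - c.ξ ^ M * w = 0 := by
    refine eq_zero_of_mul_sum_eval_trunc_eq ?_ hA hwindow
      (sub_mem hz (mul_mem (pow_mem c.ξ_mem_coordinateRing M) hw)) hlow
    refine lt_of_le_of_lt ?_ hcard
    nlinarith [c.one_le_degree]
  have hlow0 : low = 0 := by
    refine hv.eq_zero_of_sum_eval_mul_pow_card hcard (fun j e => ?_) ?_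
    · rw [PowerSeries.coeff_trunc, Polynomial.coeff_coe]
      split_ifs with he
      · exact c.filtration.mem_of_le (hA j e) (by push_cast; linarith)
      · exact zero_mem _
    · rw [hz', mul_zero, mul_eq_zero] at hlow
      exact hlow.resolve_left (pow_ne_zero _ c.ξ_ne_zero)
  intro j e he
  rcases lt_or_ge j c.degree with hj | hj
  · have := congrArg (Polynomial.coeff · e) (congrFun hlow0 ⟨j, hj⟩)
    simpa [low, PowerSeries.coeff_trunc, he] using this
  · rw [Polynomial.coeff_eq_zero_of_natDegree_lt (hdeg.trans_le hj), Polynomial.coeff_zero]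

end Frobenius

end Curve

lemma exists_ne_zero_forall_apply_eq_zero {k L ι κ : Type*} [Field k] [AddCommGroup L] [Module k L]
    [Fintype ι] [Fintype κ] (V W : Submodule k L) [FiniteDimensional k V] [FiniteDimensional k W]
    (φ : κ → (ι → L) →ₗ[k] L) (hφ : ∀ l x, (∀ i, x i ∈ V) → φ l x ∈ W)
    (hlt : Fintype.card κ * Module.finrank k W < Fintype.card ι * Module.finrank k V) :
    ∃ x ≠ 0, (∀ i, x i ∈ V) ∧ ∀ l, φ l x = 0 := by
  let ψ : (ι → V) →ₗ[k] κ → W :=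
    LinearMap.pi fun l => (φ l ∘ₗ V.subtype.compLeft ι).codRestrict W fun x =>
      hφ l _ fun i => (x i).2
  obtain ⟨x, hx, hne⟩ := Submodule.exists_mem_ne_zero_of_ne_bot
    (LinearMap.ker_ne_bot_of_finrank_lt (f := ψ) (by simpa [Module.finrank_pi_fintype] using hlt))
  refine ⟨fun i => x i, fun h => hne ?_, fun i => (x i).2, fun l => ?_⟩
  · exact funext fun i => Subtype.ext (congrFun h i)
  · exact congrArg Subtype.val (congrFun (LinearMap.mem_ker.1 hx) l)

namespace Curve

section Ring

variable {k L : Type*} [CommRing k] [CommRing L] [Algebra k L] (c : Curve k L)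

/-- The auxiliary function of the Stepanov method: the combination of the products
`X ^ i * slope ζ ^ (M - i)`, each reduced modulo the translated equation of the curve. -/
noncomputable def auxiliary (ζ : L) (M : ℕ) : (Fin M → L) →ₗ[L] L[X][Y] :=
  Fintype.linearCombination L fun i : Fin M =>
    Polynomial.C (Polynomial.X ^ (i : ℕ)) * c.slopePowExpansion ζ (M - i)

variable {ζ : L} {M : ℕ}

lemma coeff_coeff_auxiliary (x : Fin M → L) (j e : ℕ) :
    ((c.auxiliary ζ M x).coeff j).coeff e = ∑ i : Fin M, x i *
      if (i : ℕ) ≤ e then ((c.slopePowExpansion ζ (M - i)).coeff j).coeff (e - i) else 0 := by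
  simp only [auxiliary, Fintype.linearCombination_apply, Polynomial.finsetSum_coeff,
    Polynomial.coeff_smul, Polynomial.coeff_C_mul, Polynomial.coeff_X_pow_mul', smul_eq_mul]

lemma natDegree_auxiliary_lt [Nontrivial L] (x : Fin M → L) :
    (c.auxiliary ζ M x).natDegree < c.degree := by
  rw [auxiliary, Fintype.linearCombination_apply]
  refine Nat.lt_of_le_sub_one c.one_le_degree (Polynomial.natDegree_sum_le_of_forall_le _ _
    fun i _ => Nat.le_sub_one_of_lt ?_)
  exact ((Polynomial.natDegree_smul_le _ _).trans (Polynomial.natDegree_C_mul_le _ _)).trans_lt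
    (c.natDegree_slopePowExpansion_lt ζ _)

lemma coeff_coeff_auxiliary_mem (hζ : ζ ∈ c.filtration.piece c.weight) {x : Fin M → L} {a : ℤ}
    (hx : ∀ i, x i ∈ c.filtration.piece a) (j e : ℕ) :
    ((c.auxiliary ζ M x).coeff j).coeff e ∈ c.filtration.piece (a + M * c.slopeWeight) := by
  rw [coeff_coeff_auxiliary]
  refine sum_mem fun i _ => c.filtration.mul_mem (hx i) ?_
  split_ifs with hi
  · refine c.filtration.mem_of_le (c.slopePowExpansion_mem hζ (M - i) j (e - i)) ?_
    have : (M - i) * c.slopeWeight ≤ M * c.slopeWeight := Nat.mul_le_mul_right _ (Nat.sub_le ..)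
    zify at this
    have : (0 : ℤ) ≤ c.weight * j := by positivity
    lia
  · exact zero_mem _

lemma evalEval_auxiliary (x : Fin M → L) {t y : L} (h : aevalAeval (c.ξ + t) y c.poly = 0) :
    (c.auxiliary ζ M x).evalEval t y =
      ∑ i : Fin M, x i * (t ^ (i : ℕ) * (c.slope ζ).eval y ^ (M - i)) := by
  rw [auxiliary, Fintype.linearCombination_apply, Polynomial.evalEval_finsetSum]
  refine Finset.sum_congr rfl fun i _ => ?_
  rw [Polynomial.evalEval_smul, Polynomial.evalEval_mul,
    c.evalEval_slopePowExpansion _ h, Polynomial.evalEval_C, Polynomial.eval_pow,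
    Polynomial.eval_X, smul_eq_mul]

end Ring

section Field

variable {k L : Type*} [Field k] [Field L] [Algebra k L] (c : Curve k L) {ζ : L}

lemma aevalAeval_derivative_eq_zero_of_auxiliary (hζ₀ : aevalAeval c.ξ ζ c.poly = 0) {M : ℕ}
    {x : Fin M → L} (hx : x ≠ 0)
    (h : ∀ j e, e < M → ((c.auxiliary ζ M x).coeff j).coeff e = 0) :
    aevalAeval c.ξ ζ (Polynomial.derivative c.poly) = 0 := by
  obtain ⟨i₀, hi₀, hmin⟩ := WellFounded.has_min wellFounded_lt {i | x i ≠ 0} (Function.ne_iff.1 hx)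
  have hcoeff (j : ℕ) : ((c.slopePowExpansion ζ (M - i₀)).coeff j).coeff 0 = 0 := by
    have hj := h j i₀ i₀.2
    rw [coeff_coeff_auxiliary, Finset.sum_eq_single i₀, if_pos le_rfl, Nat.sub_self] at hj
    · exact (mul_eq_zero.1 hj).resolve_left hi₀
    · intro i _ hi
      rcases lt_or_gt_of_ne hi with hlt | hgt
      · rw [not_not.1 fun hxi => hmin i hxi hlt, zero_mul]
      · rw [if_neg (not_le.2 (Fin.lt_def.1 hgt)), mul_zero]
    · exact fun hi => absurd (Finset.mem_univ _) hi
  have hzero : (c.slopePowExpansion ζ (M - i₀)).evalEval 0 ζ = 0 := by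
    rw [evalEval_eq_sum_of_natDegree_lt (c.natDegree_slopePowExpansion_lt ζ _)]
    simp [← Polynomial.coeff_zero_eq_eval_zero, hcoeff]
  rw [c.evalEval_slopePowExpansion _ (by rwa [add_zero])] at hzero
  rw [← c.eval_slope_self hζ₀]
  exact eq_zero_of_pow_eq_zero hzero

lemma exists_auxiliary (hζ : ζ ∈ c.filtration.piece c.weight) {M n : ℕ}
    (hlt : c.degree * c.slopeWeight * (n + c.slopeWeight + M * c.slopeWeight + 1) < M * (n + 1)) :
    ∃ x : Fin M → L, x ≠ 0 ∧ (∀ i, x i ∈ c.filtration.piece (n + c.slopeWeight)) ∧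
      ∀ j e, e < M → M ≤ e + c.slopeWeight → ((c.auxiliary ζ M x).coeff j).coeff e = 0 := by
  set s := c.slopeWeight
  set T := n + s + M * s
  have hfin (a : ℕ) : FiniteDimensional k (Submodule.span k (Set.range (c.monomials a))) :=
    FiniteDimensional.span_of_finite k (Set.finite_range _)
  have hmem (x : L) (hx : x ∈ Submodule.span k (Set.range (c.monomials n))) :
      x ∈ c.filtration.piece (n + s) :=
    Submodule.span_le.2 (Set.range_subset_iff.2 (c.monomials_mem n)) hx
  obtain ⟨x, hx, hxV, hzero⟩ := exists_ne_zero_forall_apply_eq_zero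
    (Submodule.span k (Set.range (c.monomials n))) (Submodule.span k (Set.range (c.monomials T)))
    (fun je : Fin c.degree × Fin s => (Polynomial.lcoeff L (M - (je.2 + 1)) ∘ₗ
      (Polynomial.lcoeff L[X] je.1).restrictScalars L ∘ₗ c.auxiliary ζ M).restrictScalars k)
    (fun je x hx => c.piece_le_span_monomials T (by
      exact_mod_cast c.coeff_coeff_auxiliary_mem hζ (fun i => hmem _ (hx i)) _ _))
    (by
      simp only [finrank_span_monomials, Fintype.card_prod, Fintype.card_fin]
      have := Nat.mul_lt_mul_of_pos_left hlt c.one_le_degree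
      linarith)
  refine ⟨x, hx, fun i => hmem _ (hxV i), fun j e he hwindow => ?_⟩
  rcases lt_or_ge j c.degree with hj | hj
  · have := hzero (⟨j, hj⟩, ⟨M - 1 - e, by omega⟩)
    rwa [show M - (M - 1 - e + 1) = e by omega] at this
  · rw [Polynomial.coeff_eq_zero_of_natDegree_lt ((c.natDegree_auxiliary_lt x).trans_le hj),
      Polynomial.coeff_zero]

end Field

section Frobenius

variable {k L : Type*} [Field k] [Fintype k] [Field L] [Algebra k L] {c : Curve k L} {v : Place k L}
  {ζ : L}

lemma ξ_pow_mul_evalEval_auxiliary {κ : L}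
    (h : c.ξ * (c.slope ζ).eval (c.η ^ Fintype.card k) = (c.ξ ^ Fintype.card k - c.ξ) * κ) {M : ℕ}
    (x : Fin M → L) :
    c.ξ ^ M * (c.auxiliary ζ M x).evalEval (c.ξ ^ Fintype.card k - c.ξ) (c.η ^ Fintype.card k) =
      (c.ξ ^ Fintype.card k - c.ξ) ^ M * ∑ i : Fin M, x i * (c.ξ ^ (i : ℕ) * κ ^ (M - i)) := by
  rw [c.evalEval_auxiliary x (by rw [add_sub_cancel, aevalAeval_pow_card, c.aevalAeval_poly,
    zero_pow Fintype.card_ne_zero]), Finset.mul_sum, Finset.mul_sum]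
  refine Finset.sum_congr rfl fun i _ => ?_
  have hM (y : L) : y ^ M = y ^ (i : ℕ) * y ^ (M - i) := by
    rw [← pow_add, Nat.add_sub_cancel' i.2.le]
  calc _ = x i * (c.ξ ^ (i : ℕ) * (c.ξ ^ Fintype.card k - c.ξ) ^ (i : ℕ) *
        (c.ξ * (c.slope ζ).eval (c.η ^ Fintype.card k)) ^ (M - i)) := by
        rw [hM c.ξ, mul_pow c.ξ]
        ring
    _ = _ := by
        rw [h, mul_pow, hM (c.ξ ^ Fintype.card k - c.ξ)]
        ring

/-- The argument of Stepanov and Bombieri. The relation says that the function `ξ` lies in the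
ideal generated by `ξ ^ q - ξ` and `η ^ q - ζ`, so away from `ξ = 0` no point of the curve has
first coordinate fixed by Frobenius and second coordinate sent by Frobenius to the value of
`ζ`. -/
theorem Adapted.aevalAeval_derivative_eq_zero (hv : c.Adapted v)
    (hcard : 8 * c.degree ^ 2 * c.slopeWeight * (c.slopeWeight + 1) < Fintype.card k)
    (hζ : ζ ∈ c.filtration.piece c.weight) (hζ₀ : aevalAeval c.ξ ζ c.poly = 0) {α β : L}
    (hα : α ∈ c.coordinateRing) (hβ : β ∈ c.coordinateRing)
    (h : c.ξ = α * (c.ξ ^ Fintype.card k - c.ξ) + β * (c.η ^ Fintype.card k - ζ)) :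
    aevalAeval c.ξ ζ (Polynomial.derivative c.poly) = 0 := by
  obtain ⟨κ, hκ, hκ₀⟩ := exists_ξ_mul_eval_slope hζ hζ₀ hα hβ h
  set s := c.slopeWeight
  set M := 2 * c.degree * s
  set n := s + M * s
  have hs : 0 < c.degree * s := Nat.mul_pos c.one_le_degree c.slopeWeight_pos
  obtain ⟨x, hx, hxmem, hwindow⟩ := c.exists_auxiliary hζ (M := M) (n := n) (by
    simp only [n, M]
    nlinarith)
  have hxring (i) : x i ∈ c.coordinateRing := c.mem_coordinateRing_of_mem_piece (hxmem i)
  refine c.aevalAeval_derivative_eq_zero_of_auxiliary hζ₀ hx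
    (hv.coeff_coeff_eq_zero (T := n + s + M * s) ?_ (c.natDegree_auxiliary_lt x) (fun j e => ?_)
      hwindow (sum_mem fun i _ => ?_) (ξ_pow_mul_evalEval_auxiliary hκ₀ x))
  · have := Nat.mul_le_mul_right (4 * (c.degree * s)) c.two_le_natDegree
    refine lt_of_le_of_lt ?_ hcard
    simp only [n, M]
    nlinarith
  · exact_mod_cast c.coeff_coeff_auxiliary_mem hζ hxmem j e
  · exact mul_mem (hxring i) (mul_mem (pow_mem c.ξ_mem_coordinateRing _) (pow_mem hκ _))

end Frobenius

end Curve

section FiniteField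

variable {K : Type*} [Field K] [Fintype K]

lemma X_pow_card_sub_X_dvd {g : K[X]} (h : ∀ x, g.eval x = 0) :
    Polynomial.X ^ Fintype.card K - Polynomial.X ∣ g := by
  have hdeg : (Polynomial.X ^ Fintype.card K - Polynomial.X : K[X]).natDegree = Fintype.card K :=
    FiniteField.X_pow_card_sub_X_natDegree_eq K Fintype.one_lt_card
  have hmonic : (Polynomial.X ^ Fintype.card K - Polynomial.X : K[X]).Monic :=
    Polynomial.monic_X_pow_sub (by
      rw [Polynomial.degree_X]; exact_mod_cast Fintype.one_lt_card)
  rw [← Polynomial.modByMonic_eq_zero_iff_dvd hmonic]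
  refine Polynomial.eq_zero_of_natDegree_lt_card_of_eval_eq_zero _ Function.injective_id
    (fun x => ?_) ((Polynomial.natDegree_modByMonic_lt _ hmonic ?_).trans_eq hdeg)
  · have hx : (Polynomial.X ^ Fintype.card K - Polynomial.X : K[X]).eval x = 0 := by
      simp [FiniteField.pow_card]
    rw [id, Polynomial.modByMonic_eq_sub_mul_div, Polynomial.eval_sub, Polynomial.eval_mul, hx, h,
      zero_mul, sub_zero]
  · rintro h1
    rw [h1, Polynomial.natDegree_one] at hdeg
    exact Fintype.card_ne_zero hdeg.symm

lemma exists_eq_C_mul_add_mul {P F : K[X][Y]} (hP : P.Monic)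
    (h : ∀ x, P.map (Polynomial.evalRingHom x) ∣ F.map (Polynomial.evalRingHom x)) :
    ∃ G H : K[X][Y],
      F = Polynomial.C (Polynomial.X ^ Fintype.card K - Polynomial.X) * G + P * H := by
  have hdvd : Polynomial.C (Polynomial.X ^ Fintype.card K - Polynomial.X) ∣ F %ₘ P := by
    refine (Polynomial.C_dvd_iff_dvd_coeff _ _).2 fun i => X_pow_card_sub_X_dvd fun x => ?_
    rw [← Polynomial.coe_evalRingHom, ← Polynomial.coeff_map, Polynomial.map_modByMonic _ hP,
      (Polynomial.modByMonic_eq_zero_iff_dvd (hP.map _)).2 (h x), Polynomial.coeff_zero]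
  obtain ⟨G, hG⟩ := hdvd
  exact ⟨G, F /ₘ P, by rw [← hG, Polynomial.modByMonic_add_div]⟩

end FiniteField

section Laurent

open LaurentSeries

/-- The coefficientwise algebra structure on Laurent series. Instance search would otherwise find
the one induced from power series, whose scalar multiplication is not coefficientwise by definition.
-/
noncomputable abbrev laurentAlgebra (k : Type*) [Field k] : Algebra k k⸨X⸩ :=
  HahnSeries.instAlgebra

attribute [local instance] laurentAlgebra

variable {k : Type*} [Field k]

/-- The valuation of the field of Laurent series given by the order. -/
noncomputable def laurentPlace (k : Type*) [Field k] : Place k k⸨X⸩ where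
  ideal n :=
    { carrier := {x | ∀ i < n, x.coeff i = 0}
      zero_mem' := by simp
      add_mem' := fun ha hb i hi => by simp [ha i hi, hb i hi]
      smul_mem' := fun c x hx i hi => by rw [HahnSeries.coeff_smul, hx i hi, smul_zero] }
  anti := fun a b hab x hx i hi => hx i (hi.trans_le hab)
  one_mem := fun i hi => by rw [HahnSeries.coeff_one, if_neg hi.ne]
  mul_mem := by
    intro a b x y hx hy i hi
    rw [HahnSeries.coeff_mul]
    refine Finset.sum_eq_zero fun ij hij => ?_
    have hij : ij.1 + ij.2 = i := (Finset.mem_antidiagonal.1 hij).2.2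
    by_cases h : ij.1 < a
    · rw [hx _ h, zero_mul]
    · rw [hy ij.2 (by omega), mul_zero]
  π := HahnSeries.single 1 1
  π_ne_zero := by simp
  zpow_mem := fun n i hi => by
    rw [← RatFunc.single_zpow, HahnSeries.coeff_single_of_ne hi.ne]
  exists_sub_smul_zpow_mem := fun {n} x hx => ⟨x.coeff n, fun i hi => by
    rw [← RatFunc.single_zpow, HahnSeries.coeff_sub, HahnSeries.coeff_smul]
    rcases (Int.lt_add_one_iff.1 hi).lt_or_eq with h | rfl
    · rw [hx i h, HahnSeries.coeff_single_of_ne h.ne, smul_zero, sub_zero]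
    · rw [HahnSeries.coeff_single_same, smul_eq_mul, mul_one, sub_self]⟩
  exists_mem := fun x => ⟨x.order, fun i hi => HahnSeries.coeff_eq_zero_of_lt_order hi⟩
  exists_notMem := fun x hx => ⟨x.order + 1, fun h => hx (HahnSeries.coeff_order_eq_zero.1
    (h x.order (by omega)))⟩

lemma coe_powerSeries_mem_laurentPlace (f : PowerSeries k) :
    (f : k⸨X⸩) ∈ (laurentPlace k).ideal 0 := fun i hi => by
  rw [PowerSeries.coeff_coe, if_pos hi]

lemma single_mem_laurentPlace (n : ℤ) (r : k) :
    HahnSeries.single n r ∈ (laurentPlace k).ideal n := fun _ hi =>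
  HahnSeries.coeff_single_of_ne hi.ne

lemma coeff_aeval_single {e : ℤ} (he : e ≠ 0) (N : k[X]) (n : ℕ) :
    (Polynomial.aeval (HahnSeries.single e 1 : k⸨X⸩) N).coeff (n * e) = N.coeff n := by
  rw [Polynomial.aeval_eq_sum_range' (n := max N.natDegree n + 1) (by omega), HahnSeries.coeff_sum,
    Finset.sum_eq_single_of_mem n (by simp)]
  · rw [HahnSeries.single_pow, HahnSeries.coeff_smul, one_pow, nsmul_eq_mul,
      HahnSeries.coeff_single_same, smul_eq_mul, mul_one]
  · intro b _ hb
    rw [HahnSeries.single_pow, HahnSeries.coeff_smul, HahnSeries.coeff_single_of_ne, smul_zero]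
    simpa [he] using hb.symm

lemma le_neg_natDegree_of_aeval_single_neg_one_mem {N : k[X]} (hN : N ≠ 0) {n : ℤ}
    (h : Polynomial.aeval (HahnSeries.single (-1) 1 : k⸨X⸩) N ∈ (laurentPlace k).ideal n) :
    n ≤ -N.natDegree := by
  by_contra! hcon
  have := h (N.natDegree * (-1)) (by linarith)
  rw [coeff_aeval_single (by norm_num)] at this
  exact hN (Polynomial.leadingCoeff_eq_zero.1 this)

lemma le_natDegree_of_aeval_add_single_one_mem {N : k[X]} (hN : N ≠ 0) {n : ℤ} {a : k}
    (h : Polynomial.aeval (algebraMap k k⸨X⸩ a + HahnSeries.single 1 1) N ∈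
      (laurentPlace k).ideal n) : n ≤ N.natDegree := by
  have htaylor : Polynomial.aeval (algebraMap k k⸨X⸩ a + HahnSeries.single 1 1) N =
      Polynomial.aeval (HahnSeries.single 1 1) (Polynomial.taylor a N) := by
    rw [Polynomial.taylor_apply, Polynomial.aeval_comp, map_add, Polynomial.aeval_X,
      Polynomial.aeval_C, add_comm]
  by_contra! hcon
  rw [htaylor] at h
  rw [← Polynomial.natDegree_taylor N a] at hcon
  have := h ((Polynomial.taylor a N).natDegree * 1) (by linarith)
  rw [coeff_aeval_single one_ne_zero] at this
  exact hN ((Polynomial.taylor_eq_zero a N).1 (Polynomial.leadingCoeff_eq_zero.1 this))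

lemma transcendental_single_neg_one :
    Transcendental k (HahnSeries.single (-1) 1 : k⸨X⸩) := by
  refine transcendental_iff.2 fun N hN => ?_
  by_contra hN0
  have := le_neg_natDegree_of_aeval_single_neg_one_mem hN0 (n := 1) (by rw [hN]; exact zero_mem _)
  omega

end Laurent

section Hensel

variable {A : Type*} [CommRing A] {I : Ideal A} [HenselianRing A I]

-- The reversed polynomial is monic, so that the usual form of Hensel's lemma applies to it.
lemma exists_isRoot_of_map_eq {R : A[X]} (hR : R.coeff 0 = 1) {b : A} (hb : IsUnit b)
    (hmap : R.map (Ideal.Quotient.mk I) =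
      1 + Polynomial.C (Ideal.Quotient.mk I b) * Polynomial.X) : ∃ z, R.IsRoot z := by
  set n := R.natDegree
  set Q := Polynomial.reflect (n + 1) R
  set β := Ideal.Quotient.mk I b
  have hcoeff : Q.coeff (n + 1) = 1 := by
    rw [Polynomial.coeff_reflect, Polynomial.revAt_le le_rfl, Nat.sub_self, hR]
  have hQ : Q.Monic := Polynomial.monic_of_natDegree_le_of_coeff_eq_one (n + 1)
    (Polynomial.natDegree_reflect_le.trans (max_le le_rfl (Nat.le_succ n))) hcoeff
  have hQmap : Q.map (Ideal.Quotient.mk I) =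
      Polynomial.X ^ (n + 1) + Polynomial.C β * Polynomial.X ^ n := by
    rw [← Polynomial.reflect_map, hmap, Polynomial.reflect_add, Polynomial.reflect_one,
      ← pow_one Polynomial.X, Polynomial.reflect_C_mul_X_pow, Polynomial.revAt_le (by omega),
      Nat.add_sub_cancel, pow_one]
  have hroot : Q.eval (-b) ∈ I := by
    rw [← Ideal.Quotient.eq_zero_iff_mem, ← Polynomial.eval_map_apply, hQmap]
    simp [β, pow_succ]
    ring
  have hder : IsUnit (Ideal.Quotient.mk I ((Polynomial.derivative Q).eval (-b))) := by
    rw [← Polynomial.eval_map_apply, ← Polynomial.derivative_map, hQmap]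
    have : (Polynomial.derivative (Polynomial.X ^ (n + 1) +
      Polynomial.C β * Polynomial.X ^ n)).eval (-β) = (-β) ^ n := by
      cases n <;> simp [pow_succ]; ring
    rw [map_neg, this]
    exact ((hb.map _).neg).pow n
  obtain ⟨u, hu, hub⟩ := HenselianRing.is_henselian Q hQ (-b) hroot hder
  have := isLocalHom_of_le_jacobson_bot I HenselianRing.jac
  have hunit : IsUnit u := by
    refine isUnit_of_map_unit (Ideal.Quotient.mk I) u ?_
    rw [Ideal.Quotient.eq.2 hub]
    exact hb.neg.map _
  have := hunit.invertible
  refine ⟨⅟u, (Polynomial.eval₂_reflect_eq_zero_iff (RingHom.id A) (⅟u) (n + 1) R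
    (Nat.le_succ n)).1 ?_⟩
  rwa [invOf_invOf, Polynomial.eval₂_id]

lemma exists_isRoot_mem {P : A[X]} (h₀ : P.coeff 0 ∈ I) (h₁ : IsUnit (P.coeff 1)) :
    ∃ y ∈ I, P.IsRoot y := by
  set a := P.coeff 0
  set b := P.coeff 1
  set S := P.divX.divX
  have hP : P = Polynomial.C a + Polynomial.C b * Polynomial.X + Polynomial.X ^ 2 * S := by
    have h := Polynomial.divX_mul_X_add P.divX
    rw [Polynomial.coeff_divX, zero_add] at h
    linear_combination -Polynomial.divX_mul_X_add P - Polynomial.X * h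
  obtain ⟨z, hz⟩ := exists_isRoot_of_map_eq (I := I)
    (R := 1 + Polynomial.C b * Polynomial.X +
      Polynomial.C a * (Polynomial.X ^ 2 * S.comp (Polynomial.C a * Polynomial.X)))
    (by simp [Polynomial.coeff_zero_eq_eval_zero]) h₁
    (by simp [Ideal.Quotient.eq_zero_iff_mem.2 h₀])
  refine ⟨a * z, I.mul_mem_right _ h₀, ?_⟩
  simp only [Polynomial.IsRoot.def, Polynomial.eval_add, Polynomial.eval_mul, Polynomial.eval_one,
    Polynomial.eval_C, Polynomial.eval_X, Polynomial.eval_pow, Polynomial.eval_comp] at hz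
  rw [hP]
  simp only [Polynomial.IsRoot.def, Polynomial.eval_add, Polynomial.eval_mul,
    Polynomial.eval_C, Polynomial.eval_X, Polynomial.eval_pow]
  linear_combination a * hz

lemma exists_isRoot_sub_mem {P : A[X]} {y₀ : A} (h₀ : P.eval y₀ ∈ I)
    (h₁ : IsUnit (P.derivative.eval y₀)) : ∃ y, y - y₀ ∈ I ∧ P.IsRoot y := by
  obtain ⟨y, hy, hroot⟩ := exists_isRoot_mem (I := I) (P := Polynomial.taylor y₀ P)
    (by rwa [Polynomial.taylor_coeff_zero]) (by rwa [Polynomial.taylor_coeff_one])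
  refine ⟨y + y₀, by rwa [add_sub_cancel_right], ?_⟩
  rwa [Polynomial.IsRoot.def, Polynomial.taylor_eval] at hroot

end Hensel

section PowerSeries

open scoped PowerSeries

variable {k : Type*} [Field k]

lemma exists_isRoot_constantCoeff_eq {P : k⟦X⟧[X]} {y₀ : k}
    (h₀ : (P.map PowerSeries.constantCoeff).eval y₀ = 0)
    (h₁ : (Polynomial.derivative (P.map PowerSeries.constantCoeff)).eval y₀ ≠ 0) :
    ∃ y : k⟦X⟧, PowerSeries.constantCoeff y = y₀ ∧ P.IsRoot y := by
  have heval (Q : k⟦X⟧[X]) :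
      PowerSeries.constantCoeff (Q.eval (PowerSeries.C y₀)) =
        (Q.map PowerSeries.constantCoeff).eval y₀ := by
    rw [← Polynomial.eval_map_apply, PowerSeries.constantCoeff_C]
  obtain ⟨y, hy, hroot⟩ := exists_isRoot_sub_mem (I := Ideal.span {(PowerSeries.X : k⟦X⟧)})
    (P := P) (y₀ := PowerSeries.C y₀)
    (by rw [Ideal.mem_span_singleton, PowerSeries.X_dvd_iff, heval, h₀])
    (by rwa [PowerSeries.isUnit_iff_constantCoeff, heval, ← Polynomial.derivative_map,
      isUnit_iff_ne_zero])
  refine ⟨y, ?_, hroot⟩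
  rwa [Ideal.mem_span_singleton, PowerSeries.X_dvd_iff, map_sub, PowerSeries.constantCoeff_C,
    sub_eq_zero] at hy

end PowerSeries

section Bivariate

open Polynomial.Bivariate (equivMvPolynomial)

variable {k : Type*} [Field k]

lemma coeffXY_equivMvPolynomial (P : k[X][Y]) (i j : ℕ) :
    coeffXY (equivMvPolynomial k P) i j = (P.coeff j).coeff i := by
  have hmonomial (m n : ℕ) (a : k) : equivMvPolynomial k (.monomial n (.monomial m a)) =
      monomial (Finsupp.single 0 m + Finsupp.single 1 n) a := by
    rw [← Polynomial.C_mul_X_pow_eq_monomial, ← Polynomial.C_mul_X_pow_eq_monomial]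
    simp only [map_mul, map_pow, Polynomial.Bivariate.equivMvPolynomial_C_C,
      Polynomial.Bivariate.equivMvPolynomial_C_X, Polynomial.Bivariate.equivMvPolynomial_X]
    rw [monomial_add_single, C_mul_X_pow_eq_monomial]
  have hinj (m n : ℕ) : Finsupp.single (0 : Fin 2) m + Finsupp.single 1 n =
      Finsupp.single 0 i + Finsupp.single 1 j ↔ m = i ∧ n = j := by
    simp [DFunLike.ext_iff, Fin.forall_fin_two]
  unfold coeffXY
  induction P using Polynomial.induction_on' with
  | add P Q hP hQ => rw [map_add, coeff_add, hP, hQ, Polynomial.coeff_add, Polynomial.coeff_add]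
  | monomial n N =>
    induction N using Polynomial.induction_on' with
    | add N N' hN hN' =>
      simp only [map_add, coeff_add, hN, hN', Polynomial.coeff_add]
    | monomial m a =>
      rw [hmonomial, coeff_monomial, if_congr (hinj m n) rfl rfl, Polynomial.coeff_monomial]
      split_ifs <;> simp_all [Polynomial.coeff_monomial]

lemma totalDegree_equivMvPolynomial_le_iff {P : k[X][Y]} {n : ℕ} :
    (equivMvPolynomial k P).totalDegree ≤ n ↔
      P ∈ (AlgebraFiltration.weightedDegree k 1).piece n := by
  rw [AlgebraFiltration.mem_weightedDegree_iff]
  constructor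
  · intro h j i hij
    rw [← coeffXY_equivMvPolynomial]
    refine coeff_eq_zero_of_totalDegree_lt (h.trans_lt ?_)
    rw [← Finsupp.degree_apply, map_add, Finsupp.degree_single, Finsupp.degree_single]
    lia
  · refine fun h => Finset.sup_le fun s hs => ?_
    have hs' : s = Finsupp.single 0 (s 0) + Finsupp.single 1 (s 1) := by
      ext i
      fin_cases i <;> simp
    rw [Finsupp.sum_fintype _ _ (fun _ => rfl), Fin.sum_univ_two]
    by_contra! hlt
    refine mem_support_iff.1 hs ?_
    rw [hs']
    exact (coeffXY_equivMvPolynomial P _ _).trans (h _ _ (by lia))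

lemma natDegree_le_totalDegree_equivMvPolynomial {P : k[X][Y]} (hP : P.Monic) :
    P.natDegree ≤ (equivMvPolynomial k P).totalDegree := by
  by_contra! h
  have := AlgebraFiltration.mem_weightedDegree_iff.1
    (totalDegree_equivMvPolynomial_le_iff.1 (le_refl (equivMvPolynomial k P).totalDegree))
    P.natDegree 0 (by lia)
  rw [hP.coeff_natDegree, Polynomial.coeff_one_zero] at this
  exact one_ne_zero this

lemma mem_weightedDegree_natDegree_of_mul {P Q : k[X][Y]} (hP : P.Monic) (hQ : Q.Monic)
    (h : P * Q ∈ (AlgebraFiltration.weightedDegree k 1).piece (P * Q).natDegree) :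
    P ∈ (AlgebraFiltration.weightedDegree k 1).piece P.natDegree := by
  have hne {R : k[X][Y]} (hR : R.Monic) : equivMvPolynomial k R ≠ 0 := by
    rw [Ne, EmbeddingLike.map_eq_zero_iff]
    exact hR.ne_zero
  rw [← totalDegree_equivMvPolynomial_le_iff] at h ⊢
  rw [map_mul, totalDegree_mul_of_isDomain (hne hP) (hne hQ), hP.natDegree_mul hQ] at h
  have := natDegree_le_totalDegree_equivMvPolynomial hQ
  lia

end Bivariate

section MinimalRelation

variable {k L : Type*} [Field k] [Field L] [Algebra k L] {ξ η : L}

lemma exists_minimal_relation (hξ : Transcendental k ξ) {H : k[X][Y]} (hH : H.Monic)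
    (hη : aevalAeval ξ η H = 0) :
    ∃ P : k[X][Y], P.Monic ∧ P ∣ H ∧ aevalAeval ξ η P = 0 ∧
      ∀ R : k[X][Y], R.natDegree < P.natDegree → aevalAeval ξ η R = 0 → R = 0 := by
  let := (Polynomial.aeval ξ : k[X] →ₐ[k] L).toRingHom.toAlgebra
  have : FaithfulSMul k[X] L :=
    (faithfulSMul_iff_algebraMap_injective _ _).2 (transcendental_iff_injective.1 hξ)
  have haeval (R : k[X][Y]) : Polynomial.aeval η R = aevalAeval ξ η R :=
    (aevalAeval_eq_eval₂ ξ η R).symm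
  have hintegral : IsIntegral k[X] η := ⟨H, hH, (haeval H).trans hη⟩
  refine ⟨minpoly k[X] η, minpoly.monic hintegral,
    minpoly.isIntegrallyClosed_dvd hintegral ((haeval H).trans hη),
    (haeval _).symm.trans (minpoly.aeval _ _), fun R hdeg hR => ?_⟩
  by_contra hR₀
  exact (Polynomial.degree_lt_degree hdeg).not_ge
    (minpoly.IsIntegrallyClosed.degree_le_of_ne_zero hR₀ ((haeval R).trans hR))

lemma two_le_natDegree_of_aevalAeval_eq_zero {P : k[X][Y]} (hP : P.Monic)
    (hPη : aevalAeval ξ η P = 0) (hη : ∀ B : k[X], η ≠ Polynomial.aeval ξ B) :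
    2 ≤ P.natDegree := by
  by_contra! hlt
  interval_cases hn : P.natDegree
  · rw [hP.natDegree_eq_zero.1 hn, map_one] at hPη
    exact one_ne_zero hPη
  · refine hη (-P.coeff 0) ?_
    rw [hP.eq_X_add_C hn, map_add, Polynomial.aevalAeval_Y, Polynomial.aevalAeval_C] at hPη
    rw [map_neg]
    exact eq_neg_of_add_eq_zero_left hPη

lemma exists_curve_poly_dvd {H : k[X][Y]} (hH : H.Monic)
    (hdeg : H ∈ (AlgebraFiltration.weightedDegree k 1).piece H.natDegree)
    (hξ : Transcendental k ξ) (hroot : aevalAeval ξ η H = 0)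
    (hη : ∀ B : k[X], η ≠ Polynomial.aeval ξ B) :
    ∃ c : Curve k L, c.poly ∣ H ∧ c.weight = 1 ∧ c.ξ = ξ ∧ c.η = η := by
  obtain ⟨P, hP, ⟨Q, rfl⟩, hPη, hmin⟩ := exists_minimal_relation hξ hH hroot
  have hPdeg := mem_weightedDegree_natDegree_of_mul hP (hP.of_mul_monic_left hH) hdeg
  exact ⟨{ poly := P
           monic := hP
           two_le_natDegree := two_le_natDegree_of_aevalAeval_eq_zero hP hPη hη
           weight := 1
           weight_pos := one_pos
           natDegree_coeff_le := fun j => Polynomial.natDegree_le_iff_coeff_eq_zero.2 fun n hn =>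
             AlgebraFiltration.mem_weightedDegree_iff.1 hPdeg j n (by lia)
           ξ := ξ
           η := η
           aevalAeval_poly := hPη
           eq_zero_of_natDegree_lt := hmin }, Dvd.intro _ rfl, rfl, rfl, rfl⟩

end MinimalRelation

section PlaceAtInfinity

open LaurentSeries

attribute [local instance] laurentAlgebra

variable {K : Type*} [Field K] [Fintype K]

lemma exists_mem_coordinateRing_of_forall_evalEval_ne_zero {L : Type*} [Field L] [Algebra K L]
    (c : Curve K L) {H : K[X][Y]} (hη : aevalAeval c.ξ c.η H = 0)
    (h : ∀ x y : K, x ≠ 0 → H.evalEval x y ≠ 0) :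
    ∃ α ∈ c.coordinateRing, ∃ β ∈ c.coordinateRing,
      c.ξ = α * (c.ξ ^ Fintype.card K - c.ξ) + β * (c.η ^ Fintype.card K - c.η) := by
  -- At each rational point, `X` or `H` is nonzero, so that `X * (1 - H ^ (q - 1))` vanishes.
  obtain ⟨G, G', hG⟩ := exists_eq_C_mul_add_mul
    (P := Polynomial.X ^ Fintype.card K - Polynomial.X)
    (F := Polynomial.C Polynomial.X * (1 - H ^ (Fintype.card K - 1)))
    (Polynomial.monic_X_pow_sub (by
      rw [Polynomial.degree_X]; exact_mod_cast Fintype.one_lt_card)) fun x => by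
    rw [Polynomial.map_sub, Polynomial.map_pow, Polynomial.map_X]
    refine X_pow_card_sub_X_dvd fun y => ?_
    rw [Polynomial.map_evalRingHom_eval, Polynomial.evalEval_mul, Polynomial.evalEval_sub,
      Polynomial.evalEval_pow, Polynomial.evalEval_one, Polynomial.evalEval_C, Polynomial.eval_X]
    rcases eq_or_ne x 0 with rfl | hx
    · rw [zero_mul]
    · rw [FiniteField.pow_card_sub_one_eq_one _ (h x y hx), sub_self, mul_zero]
  refine ⟨_, ⟨G, rfl⟩, _, ⟨G', rfl⟩, ?_⟩
  have hξ := congrArg (aevalAeval c.ξ c.η) hG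
  simp only [map_mul, map_add, map_sub, map_pow, map_one, Polynomial.aevalAeval_C,
    Polynomial.aeval_X, Polynomial.aevalAeval_Y, hη,
    zero_pow (Nat.sub_pos_of_lt Fintype.one_lt_card).ne', sub_zero, mul_one] at hξ
  change c.ξ = aevalAeval c.ξ c.η G * _ + aevalAeval c.ξ c.η G' * _
  linear_combination hξ

theorem exists_evalEval_eq_zero_of_place_at_infinity {H : K[X][Y]} (hH : H.Monic)
    (hdeg : H ∈ (AlgebraFiltration.weightedDegree K 1).piece H.natDegree)
    (hcard : 8 * H.natDegree ^ 3 * (H.natDegree - 1) < Fintype.card K)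
    {η : K⸨X⸩} (hη : η ∈ (laurentPlace K).ideal 1) (hη₀ : η ≠ 0)
    (hroot : aevalAeval (HahnSeries.single (-1) 1) η H = 0)
    (hsep : aevalAeval (HahnSeries.single (-1) 1) η (Polynomial.derivative H) ≠ 0) :
    ∃ x y : K, x ≠ 0 ∧ H.evalEval x y = 0 := by
  by_contra! h
  have hη_ne (B : K[X]) : η ≠ Polynomial.aeval (HahnSeries.single (-1) 1) B := by
    rintro rfl
    have := le_neg_natDegree_of_aeval_single_neg_one_mem (fun hB => hη₀ (by rw [hB, map_zero])) hη
    lia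
  obtain ⟨c, ⟨Q, rfl⟩, hweight, hcξ, rfl⟩ :=
    exists_curve_poly_dvd hH hdeg transcendental_single_neg_one hroot hη_ne
  rw [← hcξ] at hroot hsep
  have hc : c.Adapted (laurentPlace K) :=
    { ξ_mem := by
        rw [hcξ]
        exact single_mem_laurentPlace _ _
      η_mem := (laurentPlace K).mem_of_le hη (by lia)
      le_natDegree := fun N hN n hn =>
        (le_neg_natDegree_of_aeval_single_neg_one_mem hN (hcξ ▸ hn)).trans (by lia) }
  have hle : c.degree ≤ (c.poly * Q).natDegree := by
    rw [c.monic.natDegree_mul (c.monic.of_mul_monic_left hH)]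
    exact Nat.le_add_right _ _
  have hcard' : 8 * c.degree ^ 2 * c.slopeWeight * (c.slopeWeight + 1) < Fintype.card K := by
    refine lt_of_le_of_lt ?_ hcard
    rw [Curve.slopeWeight, hweight, one_mul, Nat.sub_add_cancel c.one_le_degree]
    calc 8 * c.degree ^ 2 * (c.degree - 1) * c.degree = 8 * c.degree ^ 3 * (c.degree - 1) := by ring
      _ ≤ _ := by gcongr
  obtain ⟨α, hα, β, hβ, hξ⟩ := exists_mem_coordinateRing_of_forall_evalEval_ne_zero c hroot h
  have hder := hc.aevalAeval_derivative_eq_zero hcard' c.η_mem c.aevalAeval_poly hα hβ hξ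
  refine hsep ?_
  rw [Polynomial.derivative_mul, map_add, map_mul, map_mul, c.aevalAeval_poly, hder, zero_mul,
    zero_mul, add_zero]

end PlaceAtInfinity

section DoubleCover

open Polynomial (evalRingHom)

variable {K : Type*} [Field K] {b : K} {g : K[X]}

/-- The equation `Y² + b Y + g(X)` of a double cover of the line. -/
noncomputable def doubleCover (b : K) (g : K[X]) : K[X][Y] :=
  Polynomial.X ^ 2 + Polynomial.C (Polynomial.C b) * Polynomial.X + Polynomial.C g

lemma natDegree_doubleCover : (doubleCover b g).natDegree = 2 := by
  unfold doubleCover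
  compute_degree!

lemma monic_doubleCover : (doubleCover b g).Monic := by
  unfold doubleCover
  monicity!

lemma natDegree_coeff_doubleCover_le {ω : ℕ} (hg : g.natDegree ≤ 2 * ω) (j : ℕ) :
    ((doubleCover b g).coeff j).natDegree ≤ ω * ((doubleCover b g).natDegree - j) := by
  rw [natDegree_doubleCover]
  rcases j with _ | _ | _ | j
  · rw [mul_comm] at hg
    simpa [doubleCover] using hg
  all_goals simp only [doubleCover, Polynomial.coeff_add, Polynomial.coeff_X_pow,
    Polynomial.coeff_C_mul, Polynomial.coeff_X, Polynomial.coeff_C]; simp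

lemma aevalAeval_doubleCover {L : Type*} [CommRing L] [Algebra K L] (ξ η : L) :
    aevalAeval ξ η (doubleCover b g) =
      η ^ 2 + algebraMap K L b * η + Polynomial.aeval ξ g := by
  simp [doubleCover]

lemma aevalAeval_derivative_doubleCover {L : Type*} [CommRing L] [Algebra K L] (ξ η : L) :
    aevalAeval ξ η (Polynomial.derivative (doubleCover b g)) = 2 * η + algebraMap K L b := by
  have : Polynomial.derivative (doubleCover b g) =
      2 * Polynomial.X + Polynomial.C (Polynomial.C b) := by
    simp [doubleCover, one_add_one_eq_two, ← Polynomial.C_ofNat]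
  rw [this, map_add, map_mul, map_ofNat, Polynomial.aevalAeval_Y, Polynomial.aevalAeval_C,
    Polynomial.aeval_C]

lemma evalEval_derivative_doubleCover (x y : K) :
    (Polynomial.derivative (doubleCover b g)).evalEval x y = 2 * y + b :=
  (congrFun (Polynomial.coe_aevalAeval_eq_evalEval x y) _).symm.trans
    (aevalAeval_derivative_doubleCover x y)

lemma map_doubleCover_eq_mul {x y y' : K} (hadd : y + y' = -b) (hmul : y * y' = g.eval x) :
    (doubleCover b g).map (evalRingHom x) =
      (Polynomial.X - Polynomial.C y) * (Polynomial.X - Polynomial.C y') := by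
  have hb : b = -(y + y') := by rw [hadd, neg_neg]
  simp only [doubleCover, Polynomial.map_add, Polynomial.map_mul, Polynomial.map_pow,
    Polynomial.map_X, Polynomial.map_C, Polynomial.coe_evalRingHom, Polynomial.eval_C, ← hmul, hb,
    map_neg, map_add, map_mul, Polynomial.map_neg]
  ring

lemma exists_curve_poly_eq_doubleCover {L : Type*} [Field L] [Algebra K L] {ω : ℕ}
    (hω : 1 ≤ ω) (hg : g.natDegree ≤ 2 * ω) {ξ η : L}
    (hξ : Transcendental K ξ) (hη : aevalAeval ξ η (doubleCover b g) = 0)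
    (h : ∀ B : K[X], B ^ 2 + Polynomial.C b * B + g ≠ 0) :
    ∃ c : Curve K L, c.poly = doubleCover b g ∧ c.weight = ω ∧ c.ξ = ξ ∧ c.η = η := by
  obtain ⟨P, hP, hdvd, hPη, hmin⟩ := exists_minimal_relation hξ monic_doubleCover hη
  have htwo := two_le_natDegree_of_aevalAeval_eq_zero hP hPη (by
    rintro B rfl
    refine h B (transcendental_iff.1 hξ _ ?_)
    rw [aevalAeval_doubleCover] at hη
    simpa using hη)
  obtain rfl := Polynomial.eq_of_monic_of_dvd_of_natDegree_le hP monic_doubleCover hdvd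
    (natDegree_doubleCover.le.trans htwo)
  exact ⟨{ poly := doubleCover b g
           monic := monic_doubleCover
           two_le_natDegree := htwo
           weight := ω
           weight_pos := hω
           natDegree_coeff_le := natDegree_coeff_doubleCover_le hg
           ξ := ξ
           η := η
           aevalAeval_poly := hη
           eq_zero_of_natDegree_lt := hmin }, rfl, rfl, rfl, rfl⟩

/-- Over every nonzero `x` the double cover `Y² + b Y + g(X)` has two distinct rational points. -/
def SplitsAwayFromZero (b : K) (g : K[X]) : Prop :=
  ∀ x ≠ 0, ∃ y y' : K, y ≠ y' ∧ y + y' = -b ∧ y * y' = g.eval x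

variable [Fintype K]

lemma SplitsAwayFromZero.exists_X_mul_frobenius_eq (h : SplitsAwayFromZero b g) :
    ∃ R S : K[X][Y],
      Polynomial.C Polynomial.X * (Polynomial.X ^ Fintype.card K - Polynomial.X) =
        Polynomial.C (Polynomial.X ^ Fintype.card K - Polynomial.X) * R + doubleCover b g * S := by
  refine exists_eq_C_mul_add_mul monic_doubleCover fun x => ?_
  simp only [Polynomial.map_mul, Polynomial.map_sub, Polynomial.map_pow, Polynomial.map_X,
    Polynomial.map_C, Polynomial.coe_evalRingHom, Polynomial.eval_X]
  rcases eq_or_ne x 0 with rfl | hx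
  · rw [map_zero, zero_mul]
    exact dvd_zero _
  · obtain ⟨y, y', hne, hadd, hmul⟩ := h x hx
    rw [map_doubleCover_eq_mul hadd hmul]
    have hdvd (z : K) : Polynomial.X - Polynomial.C z ∣ Polynomial.X ^ Fintype.card K -
        Polynomial.X := by
      rw [Polynomial.dvd_iff_isRoot]
      simp [FiniteField.pow_card]
    exact (((Polynomial.pairwise_coprime_X_sub_C Function.injective_id hne).mul_dvd
      (hdvd y) (hdvd y')).mul_left _)

lemma SplitsAwayFromZero.exists_X_mul_discriminant_pow_eq (h : SplitsAwayFromZero b g) :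
    ∃ R : K[X], Polynomial.X * (Polynomial.C b ^ 2 - 4 * g) ^ (Fintype.card K - 1) =
      Polynomial.X + (Polynomial.X ^ Fintype.card K - Polynomial.X) * R := by
  obtain ⟨R, hR⟩ := X_pow_card_sub_X_dvd
    (g := Polynomial.X * ((Polynomial.C b ^ 2 - 4 * g) ^ (Fintype.card K - 1) - 1)) fun x => by
      rcases eq_or_ne x 0 with rfl | hx
      · simp
      · obtain ⟨y, y', hne, hadd, hmul⟩ := h x hx
        have hdisc : b ^ 2 - 4 * g.eval x ≠ 0 := by
          have : b ^ 2 - 4 * g.eval x = (y - y') ^ 2 := by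
            linear_combination (b - (y + y')) * hadd + 4 * hmul
          rw [this]
          exact pow_ne_zero 2 (sub_ne_zero.2 hne)
        have := FiniteField.pow_card_sub_one_eq_one _ hdisc
        simp [this]
  exact ⟨R, by linear_combination hR⟩

variable {L : Type*} [Field L] [Algebra K L] {c : Curve K L}

lemma SplitsAwayFromZero.exists_mem_coordinateRing (h : SplitsAwayFromZero b g)
    (hc : c.poly = doubleCover b g) :
    ∃ α ∈ c.coordinateRing, ∃ β ∈ c.coordinateRing,
      c.ξ = α * (c.ξ ^ Fintype.card K - c.ξ) +
        β * (c.η ^ Fintype.card K - (-algebraMap K L b - c.η)) := by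
  obtain ⟨R, S, hRS⟩ := h.exists_X_mul_frobenius_eq
  obtain ⟨R', hR'⟩ := h.exists_X_mul_discriminant_pow_eq
  have hη := c.aevalAeval_poly
  rw [hc] at hη
  have hfrob := congrArg (aevalAeval c.ξ c.η) hRS
  have hdisc := congrArg (aevalAeval c.ξ c.η ∘ Polynomial.C) hR'
  obtain ⟨m, hm⟩ : ∃ m, Fintype.card K - 1 = m + 1 :=
    ⟨Fintype.card K - 2, by have := Fintype.one_lt_card (α := K); lia⟩
  simp only [Function.comp_apply, map_mul, map_add, map_sub, map_pow, map_ofNat,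
    Polynomial.aevalAeval_C, Polynomial.aeval_X, Polynomial.aevalAeval_Y, Polynomial.aeval_C,
    hη, zero_mul, add_zero, hm] at hfrob hdisc
  rw [aevalAeval_doubleCover] at hη
  -- `δ` is the difference of the two conjugates and `δ²` the discriminant.
  set δ := 2 * c.η + algebraMap K L b with hδ
  have hsq : algebraMap K L b ^ 2 - 4 * Polynomial.aeval c.ξ g = δ ^ 2 := by
    rw [hδ]
    linear_combination -4 * hη
  rw [hsq, ← pow_mul] at hdisc
  have hδ_mem : δ ∈ c.coordinateRing :=
    add_mem (mul_mem (ofNat_mem _ 2) c.η_mem_coordinateRing) (algebraMap_mem _ _)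
  refine ⟨-(aevalAeval c.ξ c.η R * δ ^ (2 * m + 1) + Polynomial.aeval c.ξ R'),
    neg_mem (add_mem (mul_mem ⟨R, rfl⟩ (pow_mem hδ_mem _)) ⟨Polynomial.C R', by simp⟩),
    c.ξ * δ ^ (2 * m + 1), mul_mem c.ξ_mem_coordinateRing (pow_mem hδ_mem _), ?_⟩
  linear_combination -δ ^ (2 * m + 1) * hfrob - hdisc + c.ξ * δ ^ (2 * m + 1) * hδ

theorem Curve.Adapted.not_splitsAwayFromZero {v : Place K L} (hv : c.Adapted v)
    (hc : c.poly = doubleCover b g)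
    (hcard : 8 * c.degree ^ 2 * c.slopeWeight * (c.slopeWeight + 1) < Fintype.card K) :
    ¬SplitsAwayFromZero b g := by
  intro h
  obtain ⟨α, hα, β, hβ, hξ⟩ := h.exists_mem_coordinateRing hc
  have hη := c.aevalAeval_poly
  rw [hc, aevalAeval_doubleCover] at hη
  have hζ : -algebraMap K L b - c.η ∈ c.filtration.piece c.weight :=
    sub_mem (neg_mem (c.filtration.mem_of_le (c.filtration.algebraMap_mem b) (by simp))) c.η_mem
  have hder := hv.aevalAeval_derivative_eq_zero hcard hζ
    (by rw [hc, aevalAeval_doubleCover]; linear_combination hη) hα hβ hξ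
  have hzero := c.eq_zero_of_natDegree_lt (Polynomial.derivative c.poly)
    (Polynomial.natDegree_derivative_lt (by have := c.two_le_natDegree; lia))
    (by
      rw [hc, aevalAeval_derivative_doubleCover] at hder ⊢
      linear_combination -hder)
  obtain ⟨y, y', hne, hadd, -⟩ := h 1 one_ne_zero
  have hy := evalEval_derivative_doubleCover (b := b) (g := g) 1 y
  rw [← hc, hzero, Polynomial.evalEval_zero] at hy
  exact hne (by linear_combination -hy - hadd)

end DoubleCover

section Laurent

open LaurentSeries
open scoped PowerSeries

attribute [local instance] laurentAlgebra

variable {K : Type*} [Field K]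

lemma exists_powerSeries_aevalAeval_eq_zero {H : K[X][Y]} {a y₀ : K} (h₀ : H.evalEval a y₀ = 0)
    (h₁ : (Polynomial.derivative H).evalEval a y₀ ≠ 0) :
    ∃ η : K⟦X⟧, aevalAeval (PowerSeries.C a + PowerSeries.X) η H = 0 := by
  have hmap : (H.map (Polynomial.aeval (PowerSeries.C a + PowerSeries.X : K⟦X⟧)).toRingHom).map
      PowerSeries.constantCoeff = H.map (Polynomial.evalRingHom a) := by
    rw [Polynomial.map_map]
    congr 1
    ext <;> simp
  obtain ⟨η, -, hη⟩ := exists_isRoot_constantCoeff_eq (y₀ := y₀)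
    (P := H.map (Polynomial.aeval (PowerSeries.C a + PowerSeries.X : K⟦X⟧)).toRingHom)
    (by rw [hmap, Polynomial.map_evalRingHom_eval, h₀])
    (by rwa [hmap, Polynomial.derivative_map, Polynomial.map_evalRingHom_eval])
  exact ⟨η, by rwa [aevalAeval_eq_eval₂, ← Polynomial.eval_map]⟩

lemma exists_laurent_aevalAeval_eq_zero {H : K[X][Y]} {a y₀ : K} (h₀ : H.evalEval a y₀ = 0)
    (h₁ : (Polynomial.derivative H).evalEval a y₀ ≠ 0) :
    ∃ η ∈ (laurentPlace K).ideal 0,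
      aevalAeval (algebraMap K K⸨X⸩ a + HahnSeries.single 1 1) η H = 0 := by
  obtain ⟨η, hη⟩ := exists_powerSeries_aevalAeval_eq_zero h₀ h₁
  refine ⟨η, coe_powerSeries_mem_laurentPlace η, ?_⟩
  have := map_aevalAeval (HahnSeries.ofPowerSeriesAlg ℤ K) (PowerSeries.C a + PowerSeries.X) η H
  have hξ : HahnSeries.ofPowerSeriesAlg ℤ K (PowerSeries.C a + PowerSeries.X) =
      algebraMap K K⸨X⸩ a + HahnSeries.single 1 1 := by
    change HahnSeries.ofPowerSeries ℤ K _ = _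
    rw [map_add, HahnSeries.ofPowerSeries_C, HahnSeries.ofPowerSeries_X]
    rfl
  rw [hη, map_zero, hξ] at this
  exact this.symm

lemma transcendental_add_single_one (a : K) :
    Transcendental K (algebraMap K K⸨X⸩ a + HahnSeries.single 1 1) := by
  refine transcendental_iff.2 fun N hN => ?_
  by_contra hN0
  have := le_natDegree_of_aeval_add_single_one_mem hN0 (n := N.natDegree + 1)
    (by rw [hN]; exact zero_mem _)
  lia

variable [Fintype K]

theorem SplitsAwayFromZero.exists_sq_add_mul_add_eq_zero {b : K} {g : K[X]}
    (h : SplitsAwayFromZero b g) {ω : ℕ} (hω : 1 ≤ ω) (hg : g.natDegree ≤ 2 * ω)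
    (hcard : 32 * ω * (ω + 1) < Fintype.card K) :
    ∃ B : K[X], B ^ 2 + Polynomial.C b * B + g = 0 := by
  by_contra! hB
  obtain ⟨y, y', hne, hadd, hmul⟩ := h 1 one_ne_zero
  obtain ⟨η, hη, hroot⟩ := exists_laurent_aevalAeval_eq_zero (H := doubleCover b g) (a := 1)
    (y₀ := y)
    (by
      rw [← Polynomial.map_evalRingHom_eval, map_doubleCover_eq_mul hadd hmul]
      simp)
    (by
      rw [evalEval_derivative_doubleCover]
      exact fun hy => hne (by linear_combination hy - hadd))
  obtain ⟨c, hpoly, hweight, hcξ, rfl⟩ :=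
    exists_curve_poly_eq_doubleCover hω hg (transcendental_add_single_one 1) hroot hB
  have hv : c.Adapted (laurentPlace K) :=
    { ξ_mem := by
        rw [hcξ]
        exact add_mem ((laurentPlace K).mem_of_le (single_mem_laurentPlace 0 1) (by lia))
          ((laurentPlace K).mem_of_le (single_mem_laurentPlace 1 1) (by lia))
      η_mem := (laurentPlace K).mem_of_le hη (by lia)
      le_natDegree := fun N hN n hn => le_natDegree_of_aeval_add_single_one_mem hN (hcξ ▸ hn) }
  have hdeg : c.degree = 2 := by rw [Curve.degree, hpoly, natDegree_doubleCover]
  refine hv.not_splitsAwayFromZero hpoly ?_ h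
  rw [Curve.slopeWeight, hdeg, hweight]
  linarith

end Laurent

section OvoidForm

variable {k A B : Type*} [CommRing k] [CommRing A] [CommRing B] [Algebra k A] [Algebra k B]

/-- The expression of the ovoid condition for the points `(c + v, u)` and `(c, 0)`, with
coordinates `u`, `v` in an arbitrary algebra. -/
noncomputable def ovoidForm (F : k[X][Y]) (c : k) (u v : A) : A :=
  u ^ 2 + v * (aevalAeval (algebraMap k A c + v) u F - algebraMap k A (F.evalEval c 0))

/-- The form `ovoidForm` after the substitution of `u / t` for `u`, with the denominator
`t ^ F.natDegree` cleared. -/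
noncomputable def ovoidFormAtInfinity (F : k[X][Y]) (c : k) (t u v : A) : A :=
  t ^ (F.natDegree - 2) * u ^ 2 + v * (∑ j ∈ Finset.range (F.natDegree + 1),
    Polynomial.aeval (algebraMap k A c + v) (F.coeff j) * (t ^ (F.natDegree - j) * u ^ j) -
      algebraMap k A (F.evalEval c 0) * t ^ F.natDegree)

variable {F : k[X][Y]} (c : k)

lemma map_ovoidForm (φ : A →ₐ[k] B) (u v : A) :
    φ (ovoidForm F c u v) = ovoidForm F c (φ u) (φ v) := by
  simp only [ovoidForm, map_add, map_mul, map_sub, map_pow, map_aevalAeval, AlgHom.commutes]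

lemma map_ovoidFormAtInfinity (φ : A →ₐ[k] B) (t u v : A) :
    φ (ovoidFormAtInfinity F c t u v) = ovoidFormAtInfinity F c (φ t) (φ u) (φ v) := by
  simp only [ovoidFormAtInfinity, map_add, map_mul, map_sub, map_pow, map_sum,
    ← Polynomial.aeval_algHom_apply, AlgHom.commutes]

lemma ovoidFormAtInfinity_mul (hF : 2 ≤ F.natDegree) (t u v : A) :
    ovoidFormAtInfinity F c t (t * u) v = t ^ F.natDegree * ovoidForm F c u v := by
  have hpow (j : ℕ) (hj : j ≤ F.natDegree) : t ^ F.natDegree = t ^ (F.natDegree - j) * t ^ j := by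
    rw [← pow_add, Nat.sub_add_cancel hj]
  have hsum : ∑ j ∈ Finset.range (F.natDegree + 1),
      Polynomial.aeval (algebraMap k A c + v) (F.coeff j) * (t ^ (F.natDegree - j) * (t * u) ^ j) =
        t ^ F.natDegree * aevalAeval (algebraMap k A c + v) u F := by
    rw [aevalAeval_eq_eval₂, Polynomial.eval₂_eq_sum_range, Finset.mul_sum]
    refine Finset.sum_congr rfl fun j hj => ?_
    rw [hpow j (by simpa [Nat.lt_succ_iff] using hj), mul_pow, RingHom.coe_coe]
    ring
  rw [ovoidFormAtInfinity, hsum, ovoidForm, mul_pow]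
  linear_combination -u ^ 2 * hpow 2 hF

lemma ovoidFormAtInfinity_zero (hF : 3 ≤ F.natDegree) (u v : A) :
    ovoidFormAtInfinity F c 0 u v =
      v * (Polynomial.aeval (algebraMap k A c + v) F.leadingCoeff * u ^ F.natDegree) := by
  rw [ovoidFormAtInfinity, zero_pow (by lia), zero_pow (by lia), zero_mul, zero_add, mul_zero,
    sub_zero, Finset.sum_eq_single_of_mem F.natDegree (by simp)]
  · simp
  · intro j hj hne
    rw [zero_pow (by have := Finset.mem_range.1 hj; lia), zero_mul, mul_zero]

end OvoidForm

section TopForm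

open AlgebraFiltration

variable {k : Type*} [CommRing k] {F : k[X][Y]} {d : ℕ}

/-- The homogeneous part of degree `d` of `F`, dehomogenized by setting `X = 1`. -/
noncomputable def topForm (F : k[X][Y]) (d : ℕ) : k[X] :=
  ∑ j ∈ Finset.range (d + 1), Polynomial.C ((F.coeff j).coeff (d - j)) * Polynomial.X ^ j

lemma coeff_topForm {j : ℕ} (hj : j ≤ d) : (topForm F d).coeff j = (F.coeff j).coeff (d - j) := by
  rw [topForm, Polynomial.finsetSum_coeff,
    Finset.sum_eq_single_of_mem j (Finset.mem_range.2 (by lia))]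
  · simp
  · intro i _ hi
    simp [Polynomial.coeff_X_pow, hi.symm]

lemma natDegree_topForm_le : (topForm F d).natDegree ≤ d :=
  Polynomial.natDegree_sum_le_of_forall_le _ _ fun j hj =>
    (Polynomial.natDegree_C_mul_X_pow_le _ _).trans (by have := Finset.mem_range.1 hj; lia)

lemma natDegree_le_of_mem_weightedDegree (hF : F ∈ (weightedDegree k 1).piece d) :
    F.natDegree ≤ d :=
  Polynomial.natDegree_le_iff_coeff_eq_zero.2 fun j hj =>
    Polynomial.ext fun i => mem_weightedDegree_iff.1 hF j i (by lia)

lemma natDegree_coeff_le_of_mem_weightedDegree (hF : F ∈ (weightedDegree k 1).piece d) (j : ℕ) :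
    (F.coeff j).natDegree ≤ d - j :=
  Polynomial.natDegree_le_iff_coeff_eq_zero.2 fun i hi =>
    mem_weightedDegree_iff.1 hF j i (by lia)

lemma coeff_taylor_of_natDegree_le {N : k[X]} {n : ℕ} (h : N.natDegree ≤ n) (c : k) :
    (Polynomial.taylor c N).coeff n = N.coeff n := by
  rcases h.lt_or_eq with h | rfl
  · rw [Polynomial.coeff_eq_zero_of_natDegree_lt h, Polynomial.coeff_eq_zero_of_natDegree_lt]
    rwa [Polynomial.natDegree_taylor]
  · rw [Polynomial.coeff_taylor_natDegree, Polynomial.leadingCoeff]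

lemma coeff_aevalAeval_add_X_mul_X (hF : F ∈ (weightedDegree k 1).piece d) (c l : k) :
    (aevalAeval (algebraMap k k[X] c + Polynomial.X) (Polynomial.C l * Polynomial.X) F).coeff d =
      (topForm F d).eval l := by
  rw [aevalAeval_eq_eval₂, Polynomial.eval₂_eq_sum_range' _
    (Nat.lt_succ_of_le (natDegree_le_of_mem_weightedDegree hF)), Polynomial.finsetSum_coeff,
    topForm, Polynomial.eval_finsetSum]
  refine Finset.sum_congr rfl fun j hj => ?_
  have hj : j ≤ d := Nat.lt_succ_iff.1 (Finset.mem_range.1 hj)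
  have htaylor : Polynomial.aeval (algebraMap k k[X] c + Polynomial.X) (F.coeff j) =
      Polynomial.taylor c (F.coeff j) := by
    rw [Polynomial.taylor_apply, add_comm]
    rfl
  rw [RingHom.coe_coe, htaylor, mul_pow, ← Polynomial.C_pow, ← mul_assoc,
    Polynomial.coeff_mul_X_pow', if_pos hj, Polynomial.coeff_mul_C,
    coeff_taylor_of_natDegree_le (natDegree_coeff_le_of_mem_weightedDegree hF j)]
  simp

end TopForm

section Slice

open AlgebraFiltration

variable {k A : Type*} [CommRing k] [CommRing A] [Algebra k A] {F : k[X][Y]} {d : ℕ}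

/-- The equation of the plane curve that describes the failure of the ovoid condition for the
points `(c + y, x + l y)` and `(c, 0)`. -/
noncomputable def slice (F : k[X][Y]) (c l : k) : k[X][Y] :=
  ovoidForm F c (Polynomial.C Polynomial.X + Polynomial.C (Polynomial.C l) * Polynomial.X)
    Polynomial.X

lemma aevalAeval_slice (c l : k) (ξ η : A) :
    aevalAeval ξ η (slice F c l) = ovoidForm F c (ξ + algebraMap k A l * η) η := by
  simp [slice, map_ovoidForm]

lemma slice_mem_weightedDegree (hF : F ∈ (weightedDegree k 1).piece d) (hd : 1 ≤ d) (c l : k) :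
    slice F c l ∈ (weightedDegree k 1).piece (d + 1) := by
  set W := weightedDegree k 1
  have hX : Polynomial.C Polynomial.X ∈ W.piece 1 :=
    C_mem_polynomial _ 1 (by simpa using X_mem_polynomial (scalars k) 1)
  have hY : Polynomial.X ∈ W.piece 1 := X_mem_polynomial _ 1
  have hC (a : k) {n : ℤ} (hn : 0 ≤ n) : algebraMap k k[X][Y] a ∈ W.piece n :=
    W.mem_of_le (W.algebraMap_mem a) hn
  have hu : Polynomial.C Polynomial.X + Polynomial.C (Polynomial.C l) * Polynomial.X ∈
      W.piece 1 := add_mem hX (W.mul_mem_of_le (hC l le_rfl) hY (by norm_num))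
  exact add_mem (W.pow_mem_of_le hu 2 (by push_cast; lia))
    (W.mul_mem_of_le hY (sub_mem (aevalAeval_mem (add_mem (hC c zero_le_one) hY) hu hF)
      (hC _ (by lia))) (by lia))

lemma coeff_coeff_slice (hF : F ∈ (weightedDegree k 1).piece d) (hd : 2 ≤ d) (c l : k) :
    ((slice F c l).coeff (d + 1)).coeff 0 = (topForm F d).eval l := by
  have hmap (P : k[X][Y]) (n : ℕ) :
      (aevalAeval (0 : k[X]) Polynomial.X P).coeff n = (P.coeff n).coeff 0 := by
    have : aevalAeval (0 : k[X]) Polynomial.X P = P.map (Polynomial.evalRingHom 0) := by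
      rw [aevalAeval_eq_eval₂, Polynomial.map]
      congr 1
      ext <;> simp
    rw [this, Polynomial.coeff_map, Polynomial.coe_evalRingHom, Polynomial.coeff_zero_eq_eval_zero]
  have hX2 : ((Polynomial.C l * Polynomial.X : k[X]) ^ 2).coeff (d + 1) = 0 := by
    rw [mul_pow, ← Polynomial.C_pow, Polynomial.coeff_C_mul_X_pow, if_neg (by lia)]
  rw [← hmap, aevalAeval_slice, zero_add, ovoidForm, Polynomial.algebraMap_eq, Polynomial.coeff_add,
    hX2, zero_add, Polynomial.coeff_X_mul, Polynomial.coeff_sub, Polynomial.coeff_C,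
    if_neg (by lia), sub_zero, ← Polynomial.algebraMap_eq, ← coeff_aevalAeval_add_X_mul_X hF c l]
  rfl

end Slice

section SliceAtInfinity

open LaurentSeries
open scoped PowerSeries

attribute [local instance] laurentAlgebra

variable {K : Type*} [Field K] {F : K[X][Y]} {c : K}

/-- The equation of `slice` in the coordinate `T = 1 / X` at infinity. -/
noncomputable def sliceAtInfinity (F : K[X][Y]) (c l : K) : K⟦X⟧[X] :=
  ovoidFormAtInfinity F c (Polynomial.C PowerSeries.X)
    (1 + Polynomial.C (PowerSeries.C l * PowerSeries.X) * Polynomial.X) Polynomial.X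

lemma map_constantCoeff_sliceAtInfinity (hF : 3 ≤ F.natDegree) (c l : K) :
    (sliceAtInfinity F c l).map PowerSeries.constantCoeff =
      Polynomial.X * Polynomial.taylor c F.leadingCoeff := by
  let φ : K⟦X⟧[X] →ₐ[K] K[X] := Polynomial.mapAlgHom
    { PowerSeries.constantCoeff (R := K) with commutes' := fun a => by simp }
  have hφ (N : K⟦X⟧[X]) : φ N = N.map PowerSeries.constantCoeff := rfl
  rw [← hφ, sliceAtInfinity, map_ovoidFormAtInfinity]
  simp only [hφ, Polynomial.map_C, PowerSeries.constantCoeff_X, map_zero, Polynomial.map_add,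
    Polynomial.map_one, Polynomial.map_mul, map_mul, mul_zero, zero_mul, add_zero, Polynomial.map_X]
  rw [ovoidFormAtInfinity_zero c hF, one_pow, mul_one, Polynomial.taylor_apply, add_comm]
  rfl

lemma map_ofPowerSeries_sliceAtInfinity (hF : 2 ≤ F.natDegree) (c l : K) :
    (sliceAtInfinity F c l).map (HahnSeries.ofPowerSeries ℤ K) =
      Polynomial.C (HahnSeries.single 1 1 ^ F.natDegree) * (slice F c l).map
        (Polynomial.aeval (R := K) (HahnSeries.single (-1) 1 : K⸨X⸩) : K[X] →+* K⸨X⸩) := by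
  set t : K⸨X⸩ := HahnSeries.single 1 1
  set ξ : K⸨X⸩ := HahnSeries.single (-1) 1
  have hinv : Polynomial.C t * Polynomial.C ξ = 1 := by
    simp [t, ξ, ← Polynomial.C_mul, HahnSeries.single_mul_single]
  let φ : K⟦X⟧[X] →ₐ[K] K⸨X⸩[X] := Polynomial.mapAlgHom (HahnSeries.ofPowerSeriesAlg ℤ K)
  let ψ : K[X][Y] →ₐ[K] K⸨X⸩[X] := Polynomial.mapAlgHom (Polynomial.aeval ξ)
  have hC (N : K⟦X⟧) : φ (Polynomial.C N) = Polynomial.C (HahnSeries.ofPowerSeries ℤ K N) :=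
    Polynomial.map_C _
  have hX : φ Polynomial.X = ψ Polynomial.X :=
    (Polynomial.map_X _).trans (Polynomial.map_X _).symm
  have ht : φ (Polynomial.C PowerSeries.X) = Polynomial.C t := by
    rw [hC, HahnSeries.ofPowerSeries_X]
  have hl : ψ (Polynomial.C (Polynomial.C l)) = Polynomial.C (HahnSeries.C l) :=
    (Polynomial.map_C _).trans (congrArg _ (Polynomial.aeval_C ξ l))
  have hξ : ψ (Polynomial.C Polynomial.X) = Polynomial.C ξ :=
    (Polynomial.map_C _).trans (congrArg _ (Polynomial.aeval_X ξ))
  have hu : φ (1 + Polynomial.C (PowerSeries.C l * PowerSeries.X) * Polynomial.X) =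
      Polynomial.C t * ψ (Polynomial.C Polynomial.X +
        Polynomial.C (Polynomial.C l) * Polynomial.X) := by
    rw [map_add, map_add, map_mul φ, map_mul ψ, map_one, hX, hC, hξ, hl, map_mul,
      HahnSeries.ofPowerSeries_C, HahnSeries.ofPowerSeries_X, Polynomial.C_mul]
    linear_combination -hinv
  change φ _ = Polynomial.C (t ^ F.natDegree) * ψ _
  rw [sliceAtInfinity, slice, map_ovoidFormAtInfinity, map_ovoidForm, ht, hu, hX,
    Polynomial.C_pow, ovoidFormAtInfinity_mul c hF]

theorem exists_place_at_infinity_of_slice (hF : 3 ≤ F.natDegree)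
    (hc : F.leadingCoeff.eval c ≠ 0) (l : K) :
    ∃ η ∈ (laurentPlace K).ideal 1, η ≠ 0 ∧
      aevalAeval (HahnSeries.single (-1) 1) η (slice F c l) = 0 ∧
      aevalAeval (HahnSeries.single (-1) 1) η (Polynomial.derivative (slice F c l)) ≠ 0 := by
  have hder : (Polynomial.derivative ((sliceAtInfinity F c l).map
      PowerSeries.constantCoeff)).eval 0 ≠ 0 := by
    rw [map_constantCoeff_sliceAtInfinity hF]
    simpa [Polynomial.taylor_eval] using hc
  obtain ⟨y, hy₀, hy⟩ := exists_isRoot_constantCoeff_eq (y₀ := 0)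
    (by rw [map_constantCoeff_sliceAtInfinity hF]; simp) hder
  have hmap := map_ofPowerSeries_sliceAtInfinity (Nat.le_of_succ_le hF) c l
  have ht : (HahnSeries.single 1 1 : K⸨X⸩) ^ F.natDegree ≠ 0 :=
    pow_ne_zero _ (HahnSeries.single_ne_zero one_ne_zero)
  have hroot : aevalAeval (HahnSeries.single (-1) 1) (y : K⸨X⸩) (slice F c l) = 0 := by
    have := congrArg (Polynomial.eval (y : K⸨X⸩)) hmap
    rw [Polynomial.eval_map_apply, hy.eq_zero, map_zero, Polynomial.eval_mul, Polynomial.eval_C,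
      Polynomial.eval_map, ← aevalAeval_eq_eval₂] at this
    exact (mul_eq_zero.1 this.symm).resolve_left ht
  refine ⟨y, ?_, ?_, hroot, ?_⟩
  · obtain ⟨z, rfl⟩ := PowerSeries.X_dvd_iff.2 hy₀
    rw [PowerSeries.coe_mul, PowerSeries.coe_X]
    exact (laurentPlace K).mul_mem (single_mem_laurentPlace 1 1)
      (coe_powerSeries_mem_laurentPlace z)
  · intro h₀
    rw [h₀, aevalAeval_slice, ovoidForm, zero_mul, add_zero, mul_zero, add_zero] at hroot
    exact pow_ne_zero 2 (HahnSeries.single_ne_zero one_ne_zero) hroot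
  · intro h₀
    refine hder ?_
    have := congrArg (fun P => (Polynomial.derivative P).eval (y : K⸨X⸩)) hmap
    simp only [Polynomial.derivative_map, Polynomial.derivative_C_mul, Polynomial.eval_mul] at this
    rw [Polynomial.eval_map_apply, Polynomial.eval_map, ← aevalAeval_eq_eval₂, h₀, mul_zero,
      map_eq_zero_iff _ HahnSeries.ofPowerSeries_injective] at this
    have := congrArg PowerSeries.constantCoeff this
    rwa [map_zero, ← Polynomial.eval_map_apply, hy₀, ← Polynomial.derivative_map] at this

end SliceAtInfinity

section OvoidMap

variable {K : Type*} [Field K]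

/-- The ovoid condition for an arbitrary function of two variables. -/
def IsOvoidMap (φ : K → K → K) : Prop :=
  ∀ x₁ y₁ x₂ y₂ : K, (x₁, y₁) ≠ (x₂, y₂) →
    (y₁ - y₂) ^ 2 + (x₁ - x₂) * (φ x₁ y₁ - φ x₂ y₂) ≠ 0

lemma IsOvoidMap.ne_zero {φ : K → K → K} (hφ : IsOvoidMap φ) {x₁ x₂ : K} (hx : x₁ ≠ x₂)
    (y₁ y₂ : K) : (y₁ - y₂) ^ 2 + (x₁ - x₂) * (φ x₁ y₁ - φ x₂ y₂) ≠ 0 :=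
  hφ x₁ y₁ x₂ y₂ fun h => hx (Prod.mk.inj h).1

variable {g l h : K → K}

lemma not_isOvoidMap_quadratic_of_two_ne_zero (h2 : (2 : K) ≠ 0) {x : K} (hg : g x ≠ 0) :
    ¬IsOvoidMap fun x y => g x * y ^ 2 + l x * y + h x := by
  intro hov
  -- With `x₂ = x + (g x)⁻¹` the terms quadratic in `y₁` cancel; a suitable `y₂` leaves a linear
  -- equation for `y₁` with nonzero leading coefficient.
  set x' := x + (g x)⁻¹ with hx'
  have hug : (x - x') * g x = -1 := by
    rw [hx', sub_add_cancel_left, neg_mul, inv_mul_cancel₀ hg]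
  set z := (2 : K)⁻¹ * ((x - x') * l x - 1)
  have hz : 2 * z = (x - x') * l x - 1 := mul_inv_cancel_left₀ h2 _
  refine hov.ne_zero (x₁ := x) (x₂ := x') ?_
    ((x - x') * (g x' * z ^ 2 + l x' * z + h x' - h x) - z ^ 2) z ?_
  · rintro hxx
    simp [hxx] at hug
  · linear_combination ((x - x') * (g x' * z ^ 2 + l x' * z + h x' - h x) - z ^ 2) ^ 2 * hug -
      ((x - x') * (g x' * z ^ 2 + l x' * z + h x' - h x) - z ^ 2) * hz

lemma not_isOvoidMap_quadratic_of_linear_ne_zero {x : K} (hg : g x ≠ 0) (hl : l x ≠ 0) :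
    ¬IsOvoidMap fun x y => g x * y ^ 2 + l x * y + h x := by
  intro hov
  set x' := x + (g x)⁻¹ with hx'
  have hug : (x - x') * g x = -1 := by
    rw [hx', sub_add_cancel_left, neg_mul, inv_mul_cancel₀ hg]
  have hv := mul_inv_cancel_left₀ hl (h x' - h x)
  refine hov.ne_zero (x₁ := x) (x₂ := x') ?_ ((l x)⁻¹ * (h x' - h x)) 0 ?_
  · rintro hxx
    simp [hxx] at hug
  · linear_combination ((l x)⁻¹ * (h x' - h x)) ^ 2 * hug + (x - x') * hv

lemma not_isOvoidMap_quadratic_of_charTwo [Fintype K] [CharP K 2] (hcard : 2 < Fintype.card K)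
    {x : K} (hg : g x ≠ 0) : ¬IsOvoidMap fun x y => g x * y ^ 2 + h x := by
  classical
  intro hov
  obtain ⟨u, -, hu⟩ := Finset.exists_mem_notMem_of_card_lt_card (s := {0, -(g x)⁻¹})
    (t := (Finset.univ : Finset K)) (Finset.card_le_two.trans_lt (by simpa using hcard))
  simp only [Finset.mem_insert, Finset.mem_singleton, not_or] at hu
  have hug : 1 + u * g x ≠ 0 := fun h0 => hu.2 (by
    field_simp
    linear_combination h0)
  obtain ⟨v, hv⟩ := FiniteField.isSquare_of_char_two (ringChar.eq K 2)
    ((1 + u * g x)⁻¹ * (u * (h (x - u) - h x)))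
  refine hov.ne_zero (x₁ := x) (x₂ := x - u) (fun hx => hu.1 (by linear_combination hx)) v 0 ?_
  have hv' := mul_inv_cancel_left₀ hug (u * (h (x - u) - h x))
  rw [hv] at hv'
  linear_combination hv'

lemma IsOvoidMap.eq_of_affine (hov : IsOvoidMap fun x y => g x * y + h x) (x : K) :
    g x = g 0 := by
  by_contra hne
  refine hov.ne_zero (x₁ := x) (x₂ := 0) (fun hx => hne (by rw [hx]))
    ((g x - g 0)⁻¹ * (h 0 - h x)) ((g x - g 0)⁻¹ * (h 0 - h x)) ?_
  linear_combination x * mul_inv_cancel_left₀ (sub_ne_zero.2 hne) (h 0 - h x)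

end OvoidMap

section PolynomialOvoidMap

open AlgebraFiltration

variable {K : Type*} [Field K] [Fintype K]

lemma exists_eval_ne_zero {g : K[X]} (hg : g ≠ 0) (hdeg : g.natDegree < Fintype.card K) :
    ∃ x, g.eval x ≠ 0 := by
  by_contra! h
  refine hg (Polynomial.eq_zero_of_natDegree_lt_card_of_eval_eq_zero' g Finset.univ
    (fun x _ => h x) (by simpa using hdeg))

lemma eq_zero_of_isOvoidMap_quadratic {g l h : K[X]} (hcard : 2 < Fintype.card K)
    (hdeg : g.natDegree + l.natDegree < Fintype.card K)
    (hov : IsOvoidMap fun x y => g.eval x * y ^ 2 + l.eval x * y + h.eval x) : g = 0 := by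
  by_contra hg
  rcases ne_or_eq (2 : K) 0 with h2 | h2
  · obtain ⟨x, hx⟩ := exists_eval_ne_zero hg (by lia)
    exact not_isOvoidMap_quadratic_of_two_ne_zero h2 hx hov
  rcases eq_or_ne l 0 with rfl | hl
  · have := CharTwo.of_one_ne_zero_of_two_eq_zero one_ne_zero h2
    obtain ⟨x, hx⟩ := exists_eval_ne_zero hg (by lia)
    exact not_isOvoidMap_quadratic_of_charTwo hcard hx (by simpa using hov)
  · obtain ⟨x, hx⟩ := exists_eval_ne_zero (mul_ne_zero hg hl)
      (by rwa [Polynomial.natDegree_mul hg hl])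
    rw [Polynomial.eval_mul] at hx
    exact not_isOvoidMap_quadratic_of_linear_ne_zero (left_ne_zero_of_mul hx)
      (right_ne_zero_of_mul hx) hov

lemma eq_C_of_isOvoidMap_affine {g h : K[X]} (hdeg : g.natDegree < Fintype.card K)
    (hov : IsOvoidMap fun x y => g.eval x * y + h.eval x) : g = Polynomial.C (g.eval 0) := by
  by_contra hne
  obtain ⟨x, hx⟩ := exists_eval_ne_zero (sub_ne_zero.2 hne) (by rwa [Polynomial.natDegree_sub_C])
  rw [Polynomial.eval_sub, Polynomial.eval_C, sub_ne_zero] at hx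
  exact hx (hov.eq_of_affine (g := fun x => g.eval x) (h := fun x => h.eval x) x)

end PolynomialOvoidMap

section Infinity

open AlgebraFiltration
open LaurentSeries

attribute [local instance] laurentAlgebra

variable {K : Type*} [Field K] {F : K[X][Y]} {d : ℕ}

lemma IsOvoidMap.evalEval_slice_ne_zero (hov : IsOvoidMap fun x y => F.evalEval x y) (c l : K)
    {x : K} (hx : x ≠ 0) (y : K) : (slice F c l).evalEval x y ≠ 0 := by
  rw [← Polynomial.coe_aevalAeval_eq_evalEval, aevalAeval_slice, ovoidForm,
    Polynomial.coe_aevalAeval_eq_evalEval]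
  have := hov (c + y) (x + l * y) c 0 fun h => hx (by
    linear_combination (Prod.mk.inj h).2 - l * (Prod.mk.inj h).1)
  rwa [sub_zero, add_sub_cancel_left] at this

lemma coeff_eq_C_of_mem_weightedDegree {n : ℕ} (hF : F ∈ (weightedDegree K 1).piece n) :
    F.coeff n = Polynomial.C ((F.coeff n).coeff 0) :=
  Polynomial.eq_C_of_natDegree_eq_zero (by
    simpa using natDegree_coeff_le_of_mem_weightedDegree hF n)

variable [Fintype K]

lemma exists_evalEval_eq_zero_of_mem_weightedDegree {S : K[X][Y]} {n : ℕ}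
    (hS : S ∈ (weightedDegree K 1).piece n) (hS₀ : (S.coeff n).coeff 0 ≠ 0)
    (hcard : 8 * n ^ 3 * (n - 1) < Fintype.card K)
    {η : K⸨X⸩} (hη : η ∈ (laurentPlace K).ideal 1) (hη₀ : η ≠ 0)
    (hroot : aevalAeval (HahnSeries.single (-1) 1) η S = 0)
    (hsep : aevalAeval (HahnSeries.single (-1) 1) η (Polynomial.derivative S) ≠ 0) :
    ∃ x y : K, x ≠ 0 ∧ S.evalEval x y = 0 := by
  set a := (S.coeff n).coeff 0 with ha
  set H := Polynomial.C (Polynomial.C a⁻¹) * S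
  have hHmem : H ∈ (weightedDegree K 1).piece n :=
    mul_mem_of_le _ (algebraMap_mem _ a⁻¹) hS (zero_add _).le
  have hHcoeff : H.coeff n = 1 := by
    rw [Polynomial.coeff_C_mul, coeff_eq_C_of_mem_weightedDegree hS, ← ha, ← Polynomial.C_mul,
      inv_mul_cancel₀ hS₀, Polynomial.C_1]
  have hHdeg : H.natDegree = n := le_antisymm (natDegree_le_of_mem_weightedDegree hHmem)
    (Polynomial.le_natDegree_of_ne_zero (by rw [hHcoeff]; exact one_ne_zero))
  have hHmonic : H.Monic :=
    Polynomial.monic_of_natDegree_le_of_coeff_eq_one n hHdeg.le hHcoeff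
  obtain ⟨x, y, hx, hxy⟩ := exists_evalEval_eq_zero_of_place_at_infinity hHmonic
    (by rwa [hHdeg]) (by rwa [hHdeg]) hη hη₀ (by rw [map_mul, hroot, mul_zero]) (by
      rw [Polynomial.derivative_C_mul, map_mul, Polynomial.aevalAeval_C, Polynomial.aeval_C]
      exact mul_ne_zero (by simpa using hS₀) hsep)
  rw [Polynomial.evalEval_mul, Polynomial.evalEval_C, Polynomial.eval_C] at hxy
  exact ⟨x, y, hx, (mul_eq_zero.1 hxy).resolve_left (inv_ne_zero hS₀)⟩

theorem IsOvoidMap.natDegree_le_two (hov : IsOvoidMap fun x y => F.evalEval x y)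
    (hF : F ∈ (weightedDegree K 1).piece d) (htop : topForm F d ≠ 0)
    (hcard : 8 * d * (d + 1) ^ 3 < Fintype.card K) : F.natDegree ≤ 2 := by
  by_contra! hJ
  have hJd := natDegree_le_of_mem_weightedDegree hF
  have hd : d < Fintype.card K := by nlinarith [pow_pos (Nat.succ_pos d) 3]
  obtain ⟨c, hc⟩ := exists_eval_ne_zero (g := F.leadingCoeff) (by aesop)
    ((natDegree_coeff_le_of_mem_weightedDegree hF _).trans_lt (by lia))
  obtain ⟨l, hl⟩ := exists_eval_ne_zero htop (natDegree_topForm_le.trans_lt hd)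
  obtain ⟨η, hη, hη₀, hroot, hsep⟩ := exists_place_at_infinity_of_slice hJ hc l
  obtain ⟨x, y, hx, hxy⟩ := exists_evalEval_eq_zero_of_mem_weightedDegree
    (slice_mem_weightedDegree hF (by lia) c l) (by rwa [coeff_coeff_slice hF (by lia)])
    (by rw [Nat.add_sub_cancel]; linarith) hη hη₀ hroot hsep
  exact hov.evalEval_slice_ne_zero c l hx y hxy

end Infinity

section SquareDifferences

variable {K : Type*} [Field K] {h : K[X]}

/-- Each difference `h(X) - h(c)` is a constant times `X - c` times a square. This is what the ovoid
condition says about a polynomial in `X` alone in odd characteristic. -/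
def HasSquareDifferences (h : K[X]) : Prop :=
  ∀ c : K, ∃ (a : K) (B : K[X]), h - Polynomial.C (h.eval c) =
    Polynomial.C a * ((Polynomial.X - Polynomial.C c) * B ^ 2)

lemma dvd_derivative_of_sub_C_eq {u a : K} {L B : K[X]}
    (hB : h - Polynomial.C u = Polynomial.C a * (L * B ^ 2)) : B ∣ Polynomial.derivative h := by
  rw [← sub_zero (Polynomial.derivative h), ← Polynomial.derivative_C (a := u),
    ← Polynomial.derivative_sub, hB, Polynomial.derivative_C_mul, Polynomial.derivative_mul,
    Polynomial.derivative_pow]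
  exact ((((dvd_pow_self B two_ne_zero).mul_left _).add
    ((((dvd_pow_self B (by norm_num)).mul_left _).mul_right _).mul_left _))).mul_left _

lemma isCoprime_of_sub_C_eq {u v : K} {B B' L L' : K[X]} (huv : u ≠ v)
    (hB : h - Polynomial.C u = L * B) (hB' : h - Polynomial.C v = L' * B') : IsCoprime B B' := by
  have huv' : Polynomial.C (v - u)⁻¹ * (Polynomial.C v - Polynomial.C u) = 1 := by
    rw [← Polynomial.C_sub, ← Polynomial.C_mul, inv_mul_cancel₀ (sub_ne_zero.2 huv.symm),
      Polynomial.C_1]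
  exact ⟨Polynomial.C (v - u)⁻¹ * L, -(Polynomial.C (v - u)⁻¹ * L'), by
    linear_combination huv' - Polynomial.C (v - u)⁻¹ * (hB - hB')⟩

lemma natDegree_eq_of_sub_C_eq {u a c : K} {B : K[X]} (hh : h.natDegree ≠ 0)
    (hB : h - Polynomial.C u =
      Polynomial.C a * ((Polynomial.X - Polynomial.C c) * B ^ 2)) :
    h.natDegree = 1 + 2 * B.natDegree := by
  have hne : h - Polynomial.C u ≠ 0 := fun h0 => hh (by
    rw [sub_eq_zero.1 h0, Polynomial.natDegree_C])
  rw [hB] at hne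
  rw [← Polynomial.natDegree_sub_C (a := u), hB, Polynomial.natDegree_C_mul
    (by rintro rfl; simp at hne), Polynomial.natDegree_mul (Polynomial.X_sub_C_ne_zero c)
    (by rintro h0; simp [h0] at hne), Polynomial.natDegree_X_sub_C, Polynomial.natDegree_pow]

-- Three values of `h` give three pairwise coprime divisors of `h'` of degree `(deg h - 1) / 2`.
lemma HasSquareDifferences.natDegree_le_one [Fintype K] (hsq : HasSquareDifferences h)
    (hh : Polynomial.derivative h ≠ 0) (hcard : 2 * h.natDegree < Fintype.card K) :
    h.natDegree ≤ 1 := by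
  classical
  have hdeg : h.natDegree ≠ 0 := fun h0 => hh (Polynomial.derivative_of_natDegree_zero h0)
  have himage := FiniteField.card_image_polynomial_eval
    (Polynomial.natDegree_pos_iff_degree_pos.1 (Nat.pos_of_ne_zero hdeg))
  obtain ⟨u, v, w, hu, hv, hw, huv, huw, hvw⟩ :
      ∃ u v w, u ∈ Finset.univ.image (fun x => h.eval x) ∧
        v ∈ Finset.univ.image (fun x => h.eval x) ∧ w ∈ Finset.univ.image (fun x => h.eval x) ∧
        u ≠ v ∧ u ≠ w ∧ v ≠ w :=
    Finset.two_lt_card_iff.1 (by nlinarith)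
  have hB {u : K} (hu : u ∈ Finset.univ.image (fun x => h.eval x)) :
      ∃ (B L : K[X]), B ∣ Polynomial.derivative h ∧ h.natDegree = 1 + 2 * B.natDegree ∧
        h - Polynomial.C u = L * B := by
    obtain ⟨c, -, rfl⟩ := Finset.mem_image.1 hu
    obtain ⟨a, B, hB⟩ := hsq c
    exact ⟨B, Polynomial.C a * (Polynomial.X - Polynomial.C c) * B,
      dvd_derivative_of_sub_C_eq hB, natDegree_eq_of_sub_C_eq hdeg hB, by rw [hB]; ring⟩
  obtain ⟨B₁, L₁, hd₁, hn₁, h₁⟩ := hB hu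
  obtain ⟨B₂, L₂, hd₂, hn₂, h₂⟩ := hB hv
  obtain ⟨B₃, L₃, hd₃, hn₃, h₃⟩ := hB hw
  have h₁₂ := isCoprime_of_sub_C_eq huv h₁ h₂
  have h₁₂₃ := (isCoprime_of_sub_C_eq huw h₁ h₃).mul_left (isCoprime_of_sub_C_eq hvw h₂ h₃)
  have hdvd := h₁₂₃.mul_dvd (h₁₂.mul_dvd hd₁ hd₂) hd₃
  have hle := Polynomial.natDegree_le_of_dvd hdvd hh
  have hne := ne_zero_of_dvd_ne_zero hh hdvd
  rw [Polynomial.natDegree_mul (left_ne_zero_of_mul hne) (right_ne_zero_of_mul hne),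
    Polynomial.natDegree_mul (left_ne_zero_of_mul (left_ne_zero_of_mul hne))
      (right_ne_zero_of_mul (left_ne_zero_of_mul hne))] at hle
  have := Polynomial.natDegree_derivative_le h
  lia

lemma exists_eq_C_mul_sq_of_odd_pow {a : K} {G L B : K[X]} {n : ℕ} (hn : Odd n) (hL : L ≠ 0)
    (hdvd : L ∣ G) (h : G ^ n = Polynomial.C a * (L * B ^ 2)) :
    ∃ (a' : K) (B' : K[X]), G = Polynomial.C a' * (L * B' ^ 2) := by
  rcases eq_or_ne G 0 with rfl | hG
  · exact ⟨0, 0, by simp⟩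
  obtain ⟨m, rfl⟩ := hn
  obtain ⟨M, rfl⟩ := hdvd
  have ha : a ≠ 0 := by
    rintro rfl
    exact pow_ne_zero _ hG (by rw [h]; simp)
  have hsq : M * ((L * M) ^ m) ^ 2 = Polynomial.C a * B ^ 2 :=
    mul_left_cancel₀ hL (by linear_combination h)
  have hinv : Polynomial.C a⁻¹ * Polynomial.C a = 1 := by
    rw [← Polynomial.C_mul, inv_mul_cancel₀ ha, Polynomial.C_1]
  obtain ⟨B', rfl⟩ : (L * M) ^ m ∣ B := by
    rw [← UniqueFactorizationMonoid.pow_dvd_pow_iff_dvd two_ne_zero]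
    exact ⟨Polynomial.C a⁻¹ * M, by linear_combination -B ^ 2 * hinv - Polynomial.C a⁻¹ * hsq⟩
  refine ⟨a, B', mul_left_cancel₀ (pow_ne_zero 2 (pow_ne_zero m hG)) ?_⟩
  linear_combination L * hsq

variable {p : ℕ} [Fact p.Prime] [CharP K p]

lemma exists_pow_eq_of_derivative_eq_zero [Finite K] (hh : Polynomial.derivative h = 0) :
    ∃ g : K[X], g ^ p = h := by
  refine ⟨(Polynomial.contract p h).map (frobeniusEquiv K p).symm, ?_⟩
  rw [← polynomial_expand_eq, Polynomial.expand_contract p hh (NeZero.ne p)]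

lemma HasSquareDifferences.of_pow (hp : p ≠ 2) {g : K[X]}
    (hsq : HasSquareDifferences (g ^ p)) : HasSquareDifferences g := by
  intro c
  obtain ⟨a, B, hB⟩ := hsq c
  rw [Polynomial.eval_pow, Polynomial.C_pow, ← sub_pow_char] at hB
  exact exists_eq_C_mul_sq_of_odd_pow ((Fact.out : p.Prime).odd_of_ne_two hp)
    (Polynomial.X_sub_C_ne_zero c) Polynomial.X_sub_C_dvd_sub_C_eval hB

theorem HasSquareDifferences.exists_eq_C_mul_X_pow [Fintype K] (hp : p ≠ 2)
    (hsq : HasSquareDifferences h) (h0 : h.coeff 0 = 0)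
    (hcard : 2 * h.natDegree < Fintype.card K) :
    ∃ (j : ℕ) (a : K), h = Polynomial.C a * Polynomial.X ^ p ^ j := by
  induction hn : h.natDegree using Nat.strong_induction_on generalizing h with
  | _ n ih =>
  have hp1 := (Fact.out : p.Prime).one_lt
  by_cases hd : Polynomial.derivative h = 0
  · obtain ⟨g, rfl⟩ := exists_pow_eq_of_derivative_eq_zero (p := p) hd
    rw [Polynomial.natDegree_pow] at hn hcard
    have hg0 : g.coeff 0 = 0 := by
      rw [Polynomial.coeff_zero_eq_eval_zero, Polynomial.eval_pow] at h0
      rw [Polynomial.coeff_zero_eq_eval_zero, eq_zero_of_pow_eq_zero h0]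
    rcases Nat.eq_zero_or_pos g.natDegree with hg | hg
    · refine ⟨0, 0, ?_⟩
      rw [Polynomial.eq_C_of_natDegree_eq_zero hg, hg0]
      simp [(Fact.out : p.Prime).ne_zero]
    · obtain ⟨j, a, hja⟩ := ih g.natDegree (by nlinarith) (hsq.of_pow hp) hg0 (by nlinarith) rfl
      exact ⟨j + 1, a ^ p, by rw [hja, mul_pow, ← Polynomial.C_pow, ← pow_mul, pow_succ]⟩
  · refine ⟨0, h.coeff 1, ?_⟩
    rw [pow_zero, pow_one]
    conv_lhs => rw [Polynomial.eq_X_add_C_of_natDegree_le_one (hsq.natDegree_le_one hd hcard), h0,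
      Polynomial.C_0, add_zero]

end SquareDifferences

section ArtinSchreier

variable {K : Type*} [Field K] {b : K}

lemma even_natDegree_of_sq_add_mul_add_eq_zero {g B : K[X]}
    (hB : B ^ 2 + Polynomial.C b * B + g = 0) : Even g.natDegree := by
  have hg : g = -(B ^ 2 + Polynomial.C b * B) := by linear_combination hB
  rw [hg, Polynomial.natDegree_neg]
  rcases Nat.eq_zero_or_pos B.natDegree with h0 | h0
  · rw [Polynomial.eq_C_of_natDegree_eq_zero h0, ← Polynomial.C_pow, ← Polynomial.C_mul,
      ← Polynomial.C_add, Polynomial.natDegree_C]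
    exact Even.zero
  · rw [Polynomial.natDegree_add_eq_left_of_natDegree_lt, Polynomial.natDegree_pow]
    · exact even_two_mul _
    · rw [Polynomial.natDegree_pow]
      have := Polynomial.natDegree_C_mul_le b B
      lia

lemma coeff_taylor_one_of_natDegree_le {h : K[X]} {n : ℕ} (hn : h.natDegree ≤ n + 1) :
    (Polynomial.taylor 1 h).coeff n = h.coeff n + (n + 1) * h.coeff (n + 1) := by
  rw [Polynomial.taylor_coeff, Polynomial.eq_X_add_C_of_natDegree_le_one
    (p := Polynomial.hasseDeriv n h) ((Polynomial.natDegree_hasseDeriv_le _ _).trans (by lia))]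
  simp [Polynomial.hasseDeriv_coeff, add_comm 1 n]
  ring

lemma natDegree_divX_taylor_one_sub_divX {h : K[X]} {n : ℕ} (hh : h.natDegree = n + 2)
    (hn : (n + 2 : K) ≠ 0) : ((Polynomial.taylor 1 h).divX - h.divX).natDegree = n := by
  refine Polynomial.natDegree_eq_of_le_of_coeff_ne_zero ?_ ?_
  · rw [Polynomial.natDegree_le_iff_coeff_eq_zero]
    intro i hi
    rw [Polynomial.coeff_sub, Polynomial.coeff_divX, Polynomial.coeff_divX,
      coeff_taylor_of_natDegree_le (by lia), sub_self]
  · rw [Polynomial.coeff_sub, Polynomial.coeff_divX, Polynomial.coeff_divX,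
      coeff_taylor_one_of_natDegree_le hh.le, add_sub_cancel_left]
    refine mul_ne_zero (by push_cast; rwa [add_assoc, one_add_one_eq_two]) ?_
    rw [show n + 1 + 1 = h.natDegree from hh.symm, Polynomial.coeff_natDegree,
      Polynomial.leadingCoeff_ne_zero]
    rintro rfl
    simp at hh

-- The quotients at `0` and `1`, and by additivity their difference, have even degree; for odd
-- `deg h ≥ 3` the first two have degree `deg h - 1` and the difference has degree `deg h - 2`.
lemma natDegree_le_one_of_sq_add_mul_add_eq_zero [CharP K 2] {h : K[X]}
    (hAS : ∀ c : K, ∃ (s : K) (B : K[X]), B ^ 2 + Polynomial.C b * B +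
      ((Polynomial.taylor c h).divX + Polynomial.C s) = 0) : h.natDegree ≤ 1 := by
  by_contra! hn
  obtain ⟨n, hn'⟩ : ∃ n, h.natDegree = n + 2 := ⟨h.natDegree - 2, by lia⟩
  obtain ⟨s₀, B₀, h₀⟩ := hAS 0
  obtain ⟨s₁, B₁, h₁⟩ := hAS 1
  rw [Polynomial.taylor_zero] at h₀
  have heven := even_natDegree_of_sq_add_mul_add_eq_zero h₀
  rw [Polynomial.natDegree_add_C, Polynomial.natDegree_divX_eq_natDegree_tsub_one, hn'] at heven
  have hodd : Odd (n + 2) := heven.add_one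
  have hdiff : (B₁ - B₀) ^ 2 + Polynomial.C b * (B₁ - B₀) +
      ((Polynomial.taylor 1 h).divX - h.divX + Polynomial.C (s₁ - s₀)) = 0 := by
    rw [sub_pow_char, Polynomial.C_sub]
    linear_combination h₁ - h₀
  have heven' := even_natDegree_of_sq_add_mul_add_eq_zero hdiff
  have hcast : (n + 2 : K) ≠ 0 := by
    exact_mod_cast fun h0 => Nat.not_even_iff_odd.2 hodd
      (even_iff_two_dvd.2 ((CharP.cast_eq_zero_iff K 2 _).1 h0))
  rw [Polynomial.natDegree_add_C, natDegree_divX_taylor_one_sub_divX hn' hcast] at heven'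
  exact Nat.not_even_iff_odd.2 hodd (heven'.add even_two)

end ArtinSchreier

section Nonsquares

variable {K : Type*} [Field K] [Finite K]

lemma isSquare_mul_of_not_isSquare {a a' : K} (ha : ¬IsSquare a) (ha' : ¬IsSquare a') :
    IsSquare (a * a') := by
  classical
  have := Fintype.ofFinite K
  have hne : a * a' ≠ 0 :=
    mul_ne_zero (fun h => ha (h ▸ IsSquare.zero)) fun h => ha' (h ▸ IsSquare.zero)
  rw [← quadraticChar_one_iff_isSquare hne, map_mul,
    quadraticChar_neg_one_iff_not_isSquare.2 ha, quadraticChar_neg_one_iff_not_isSquare.2 ha',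
    neg_mul_neg, one_mul]

lemma splitsAwayFromZero_C_mul {g : K[X]} (h2 : (2 : K) ≠ 0) {a : K} (ha : ¬IsSquare a)
    (hg : ∀ x ≠ 0, ¬IsSquare (-g.eval x)) :
    SplitsAwayFromZero 0 (Polynomial.C a * g) := by
  intro x hx
  obtain ⟨s, hs⟩ := isSquare_mul_of_not_isSquare ha (hg x hx)
  have hs0 : s ≠ 0 := by
    rintro rfl
    rw [mul_zero] at hs
    rcases mul_eq_zero.1 hs with h0 | h0
    · exact ha (h0 ▸ IsSquare.zero)
    · exact hg x hx (h0 ▸ IsSquare.zero)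
  refine ⟨s, -s, fun h => hs0 ?_, by rw [add_neg_cancel, neg_zero], ?_⟩
  · exact (mul_eq_zero.1 (show 2 * s = 0 by linear_combination h)).resolve_left h2
  · rw [Polynomial.eval_C_mul]
    linear_combination hs

end Nonsquares

section ArtinSchreierMap

variable {K : Type*} [Field K] [CharP K 2]

/-- The additive map `z ↦ z² + b z` of a field of characteristic two. -/
noncomputable def artinSchreierHom (b : K) : K →+ K :=
  (frobenius K 2 : K →+ K) + AddMonoidHom.mulLeft b

lemma artinSchreierHom_apply (b z : K) : artinSchreierHom b z = z ^ 2 + b * z := rfl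

variable [Finite K]

lemma index_range_artinSchreierHom {b : K} (hb : b ≠ 0) : (artinSchreierHom b).range.index = 2 := by
  have hker : ((artinSchreierHom b).ker : Set K) = {0, b} := by
    ext z
    rw [SetLike.mem_coe, AddMonoidHom.mem_ker, artinSchreierHom_apply, Set.mem_insert_iff,
      Set.mem_singleton_iff, sq, ← add_mul, mul_eq_zero, or_comm, CharTwo.add_eq_zero]
  rw [AddSubgroup.index_range, ← SetLike.coe_sort_coe, hker, Nat.card_coe_set_eq,
    Set.ncard_pair hb.symm]

lemma exists_splitsAwayFromZero_add_C {b : K} (hb : b ≠ 0) {g : K[X]}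
    (hg : ∀ x ≠ 0, g.eval x ∉ (artinSchreierHom b).range) :
    ∃ s, SplitsAwayFromZero b (g + Polynomial.C s) := by
  refine ⟨g.eval 1, fun x hx => ?_⟩
  obtain ⟨z, hz⟩ := (AddSubgroup.add_mem_iff_of_index_two (index_range_artinSchreierHom hb)).2
    (iff_of_false (hg x hx) (hg 1 one_ne_zero))
  rw [artinSchreierHom_apply] at hz
  have h2 : (2 : K) = 0 := CharTwo.two_eq_zero
  refine ⟨z, z + b, fun h => hb (by linear_combination -h), ?_, ?_⟩
  · linear_combination (z + b) * h2
  · rw [Polynomial.eval_add, Polynomial.eval_C]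
    linear_combination hz

end ArtinSchreierMap

section Classification

variable {K : Type*} [Field K] {b : K} {h : K[X]}

lemma mul_eval_divX_taylor (h : K[X]) (c x : K) :
    x * (Polynomial.taylor c h).divX.eval x = h.eval (x + c) - h.eval c := by
  have := congrArg (Polynomial.eval x) (Polynomial.divX_mul_X_add (Polynomial.taylor c h))
  rw [Polynomial.eval_add, Polynomial.eval_mul, Polynomial.eval_X, Polynomial.eval_C,
    Polynomial.taylor_coeff_zero, Polynomial.taylor_eval] at this
  linear_combination this

lemma natDegree_divX_taylor (h : K[X]) (c : K) :
    (Polynomial.taylor c h).divX.natDegree = h.natDegree - 1 := by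
  rw [Polynomial.natDegree_divX_eq_natDegree_tsub_one, Polynomial.natDegree_taylor]

lemma sub_C_eval_eq_mul_comp_divX_taylor (h : K[X]) (c : K) :
    h - Polynomial.C (h.eval c) = (Polynomial.X - Polynomial.C c) *
      (Polynomial.taylor c h).divX.comp (Polynomial.X - Polynomial.C c) := by
  have hcomp : (Polynomial.taylor c h).comp (Polynomial.X - Polynomial.C c) = h := by
    rw [Polynomial.taylor_apply, Polynomial.comp_assoc, Polynomial.add_comp, Polynomial.X_comp,
      Polynomial.C_comp, sub_add_cancel, Polynomial.comp_X]
  have := congrArg (fun P => P.comp (Polynomial.X - Polynomial.C c))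
    (Polynomial.divX_mul_X_add (Polynomial.taylor c h))
  simp only [Polynomial.taylor_coeff_zero, Polynomial.add_comp, Polynomial.mul_comp,
    Polynomial.X_comp, Polynomial.C_comp] at this
  linear_combination -this - hcomp

lemma IsOvoidMap.sq_add_mul_add_ne_zero (hov : IsOvoidMap fun x y => b * y + h.eval x) (c : K)
    {x : K} (hx : x ≠ 0) (z : K) :
    z ^ 2 + b * z + (Polynomial.taylor c h).divX.eval x ≠ 0 := by
  intro h0
  refine hov.ne_zero (x₁ := x + c) (x₂ := c) (fun h => hx (by linear_combination h)) (x * z) 0 ?_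
  linear_combination x ^ 2 * h0 - x * mul_eval_divX_taylor h c x

lemma evalEval_of_natDegree_le_two {F : K[X][Y]} (hF : F.natDegree ≤ 2) (x y : K) :
    F.evalEval x y =
      (F.coeff 2).eval x * y ^ 2 + (F.coeff 1).eval x * y + (F.coeff 0).eval x := by
  rw [Polynomial.evalEval, Polynomial.eval_eq_sum_range' (p := F) (n := 3) (by lia),
    Finset.sum_range_succ, Finset.sum_range_succ, Finset.sum_range_one]
  simp only [Polynomial.eval_add, Polynomial.eval_mul, Polynomial.eval_pow, Polynomial.eval_C]
  ring

variable [Fintype K]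

lemma IsOvoidMap.hasSquareDifferences (hov : IsOvoidMap fun x _ => h.eval x) (h2 : (2 : K) ≠ 0)
    {d : ℕ} (hd : 1 ≤ d) (hh : h.natDegree ≤ d) (hcard : 32 * d * (d + 1) < Fintype.card K) :
    HasSquareDifferences h := by
  intro c
  set g := (Polynomial.taylor c h).divX with hg_def
  have hov' : IsOvoidMap fun x y => 0 * y + h.eval x := by simpa only [zero_mul, zero_add] using hov
  have hg (x : K) (hx : x ≠ 0) : ¬IsSquare (-g.eval x) := by
    rintro ⟨z, hz⟩
    exact hov'.sq_add_mul_add_ne_zero c hx z (by rw [← hg_def]; linear_combination -hz)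
  have ha := hg 1 one_ne_zero
  set a := -g.eval 1
  obtain ⟨B, hB⟩ := (splitsAwayFromZero_C_mul h2 ha hg).exists_sq_add_mul_add_eq_zero hd
    ((Polynomial.natDegree_C_mul_le _ _).trans (by rw [natDegree_divX_taylor]; lia))
    hcard
  have ha0 : a ≠ 0 := fun h0 => ha (h0 ▸ IsSquare.zero)
  have hinv : Polynomial.C a⁻¹ * Polynomial.C a = 1 := by
    rw [← Polynomial.C_mul, inv_mul_cancel₀ ha0, Polynomial.C_1]
  have hgB : g = Polynomial.C (-a⁻¹) * B ^ 2 := by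
    rw [Polynomial.C_0] at hB
    rw [Polynomial.C_neg]
    linear_combination Polynomial.C a⁻¹ * hB - g * hinv
  refine ⟨-a⁻¹, B.comp (Polynomial.X - Polynomial.C c), ?_⟩
  rw [sub_C_eval_eq_mul_comp_divX_taylor, ← hg_def, hgB, Polynomial.mul_comp, Polynomial.C_comp,
    Polynomial.pow_comp]
  ring

lemma IsOvoidMap.natDegree_le_one [CharP K 2] (hov : IsOvoidMap fun x y => b * y + h.eval x)
    {d : ℕ} (hd : 1 ≤ d) (hh : h.natDegree ≤ d) (hcard : 32 * d * (d + 1) < Fintype.card K) :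
    h.natDegree ≤ 1 := by
  have hb : b ≠ 0 := by
    rintro rfl
    obtain ⟨z, hz⟩ := FiniteField.isSquare_of_char_two (ringChar.eq K 2)
      (-(Polynomial.taylor 0 h).divX.eval 1)
    exact hov.sq_add_mul_add_ne_zero 0 one_ne_zero z (by linear_combination -hz)
  refine natDegree_le_one_of_sq_add_mul_add_eq_zero (b := b) fun c => ?_
  obtain ⟨s, hs⟩ := exists_splitsAwayFromZero_add_C hb (g := (Polynomial.taylor c h).divX) (by
    rintro x hx ⟨z, hz⟩
    refine hov.sq_add_mul_add_ne_zero c hx z ?_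
    rw [← hz, artinSchreierHom_apply, CharTwo.add_self_eq_zero])
  exact ⟨s, hs.exists_sq_add_mul_add_eq_zero hd
    (by rw [Polynomial.natDegree_add_C, natDegree_divX_taylor]; lia)
    hcard⟩

open AlgebraFiltration

theorem IsOvoidMap.eq_affine {F : K[X][Y]} {d : ℕ} (hov : IsOvoidMap fun x y => F.evalEval x y)
    (hF : F ∈ (weightedDegree K 1).piece d) (htop : topForm F d ≠ 0) (hd : 1 ≤ d)
    (hcard : 8 * d * (d + 1) ^ 3 < Fintype.card K) :
    F = Polynomial.C (F.coeff 0) +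
      Polynomial.C (Polynomial.C ((F.coeff 1).coeff 0)) * Polynomial.X := by
  have hlarge : 2 < Fintype.card K ∧ 2 * d < Fintype.card K := by
    constructor <;> nlinarith [Nat.pow_le_pow_left (Nat.succ_le_succ hd) 3]
  have hdeg := hov.natDegree_le_two hF htop hcard
  have hcoeff (j : ℕ) := natDegree_coeff_le_of_mem_weightedDegree hF j
  simp only [evalEval_of_natDegree_le_two hdeg] at hov
  have h2 : F.coeff 2 = 0 := eq_zero_of_isOvoidMap_quadratic hlarge.1
    (by have := hcoeff 2; have := hcoeff 1; lia) hov
  simp only [h2, Polynomial.eval_zero, zero_mul, zero_add] at hov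
  have h1 := eq_C_of_isOvoidMap_affine (by have := hcoeff 1; lia) hov
  rw [(F.coeff 1).coeff_zero_eq_eval_zero, ← h1, add_comm]
  refine Polynomial.eq_X_add_C_of_natDegree_le_one ?_
  exact Polynomial.natDegree_le_iff_coeff_eq_zero.2 fun j hj => by
    rcases (show 2 ≤ j by lia).eq_or_lt with rfl | hj
    · exact h2
    · exact Polynomial.coeff_eq_zero_of_natDegree_lt (by lia)

end Classification

section OvoidCondition

open AlgebraFiltration
open Polynomial.Bivariate (equivMvPolynomial)

variable {K : Type*} [Field K]

lemma eval_equivMvPolynomial (x y : K) (P : K[X][Y]) :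
    eval ![x, y] (equivMvPolynomial K P) = P.evalEval x y := by
  have h : (eval ![x, y]).comp (equivMvPolynomial K).toRingEquiv.toRingHom =
      Polynomial.evalEvalRingHom x y := by
    ext <;> simp
  exact RingHom.congr_fun h P

lemma equivMvPolynomial_C (h : K[X]) :
    equivMvPolynomial K (Polynomial.C h) = Polynomial.aeval (X 0) h := by
  simp [equivMvPolynomial, Polynomial.aeval_def, Polynomial.eval_map, algebraMap_eq]

lemma ovoidCondition_equivMvPolynomial_iff {F : K[X][Y]} :
    OvoidCondition (equivMvPolynomial K F) ↔ IsOvoidMap fun x y => F.evalEval x y := by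
  simp only [OvoidCondition, IsOvoidMap, eval_equivMvPolynomial]

lemma one_le_totalDegree_of_ovoidCondition {f : MvPolynomial (Fin 2) K} (hov : OvoidCondition f) :
    1 ≤ f.totalDegree := by
  by_contra! hd
  rw [totalDegree_eq_zero_iff_eq_C.1 (Nat.lt_one_iff.1 hd)] at hov
  exact hov 1 0 0 0 (by simp) (by simp)

lemma topForm_totalDegree_ne_zero {F : K[X][Y]}
    (hd : 1 ≤ (equivMvPolynomial K F).totalDegree) :
    topForm F (equivMvPolynomial K F).totalDegree ≠ 0 := by
  set d := (equivMvPolynomial K F).totalDegree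
  have hF : F ∈ (weightedDegree K 1).piece d := totalDegree_equivMvPolynomial_le_iff.1 le_rfl
  intro htop
  have : F ∈ (weightedDegree K 1).piece (d - 1 : ℕ) := mem_weightedDegree_iff.2 fun j n hjn => by
    rcases (show d ≤ j + n by lia).eq_or_lt with h | h
    · have := congrArg (fun P => P.coeff j) htop
      rwa [coeff_topForm (by lia), Polynomial.coeff_zero, show d - j = n by lia] at this
    · exact mem_weightedDegree_iff.1 hF j n (by lia)
  have := totalDegree_equivMvPolynomial_le_iff.2 this
  lia

theorem exists_eq_affine_of_ovoidCondition [Fintype K] {f : MvPolynomial (Fin 2) K}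
    (hov : OvoidCondition f)
    (hcard : 8 * f.totalDegree * (f.totalDegree + 1) ^ 3 < Fintype.card K) :
    ∃ (h : K[X]) (b : K), h.natDegree ≤ f.totalDegree ∧ h.coeff 0 = coeffXY f 0 0 ∧
      b = coeffXY f 0 1 ∧ f = Polynomial.aeval (X 0) h + C b * X 1 ∧
      IsOvoidMap fun x y => b * y + h.eval x := by
  have hd := one_le_totalDegree_of_ovoidCondition hov
  obtain ⟨F, rfl⟩ := (equivMvPolynomial K).surjective f
  have hF : F ∈ (weightedDegree K 1).piece (equivMvPolynomial K F).totalDegree :=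
    totalDegree_equivMvPolynomial_le_iff.1 le_rfl
  have hovF := ovoidCondition_equivMvPolynomial_iff.1 hov
  have haff := hovF.eq_affine hF (topForm_totalDegree_ne_zero hd) hd hcard
  refine ⟨F.coeff 0, (F.coeff 1).coeff 0, natDegree_coeff_le_of_mem_weightedDegree hF 0,
    (coeffXY_equivMvPolynomial F 0 0).symm, (coeffXY_equivMvPolynomial F 0 1).symm, ?_, ?_⟩
  · conv_lhs => rw [haff]
    rw [map_add, map_mul, equivMvPolynomial_C]
    simp
  · convert hovF using 3 with x y
    conv_rhs => rw [haff]
    simp [Polynomial.evalEval_C, add_comm]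

end OvoidCondition

section Numeric

lemma eight_mul_mul_pow_lt {d q : ℕ} (h : (6.3 : ℝ) * ((d : ℝ) + 1) ^ ((13 : ℝ) / 3) < q) :
    8 * d * (d + 1) ^ 3 < q := by
  set r : ℝ := ((d : ℝ) + 1) ^ ((1 : ℝ) / 3) with hr
  have hr₃ : r ^ 3 = d + 1 := by
    rw [hr, ← Real.rpow_natCast, ← Real.rpow_mul (by positivity)]
    norm_num
  have hsplit : ((d : ℝ) + 1) ^ ((13 : ℝ) / 3) = (d + 1) ^ 3 * r ^ 4 := by
    rw [pow_succ r 3, hr₃, hr, ← Real.rpow_natCast, ← mul_assoc,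
      ← Real.rpow_add_one (by positivity), ← Real.rpow_add (by positivity)]
    norm_num
  have hle : (8 : ℝ) * d ≤ 6.3 * r ^ 4 := by
    nlinarith [sq_nonneg (r ^ 2 - r), sq_nonneg (r - 1), sq_nonneg (r ^ 2 - 1), hr₃]
  have : (8 : ℝ) * d * (d + 1) ^ 3 < q := by
    refine lt_of_le_of_lt ?_ h
    rw [hsplit, mul_comm _ (r ^ 4), ← mul_assoc]
    exact mul_le_mul_of_nonneg_right hle (by positivity)
  exact_mod_cast this

end Numeric

end OvoidCurve

open OvoidCurve

theorem statement5_general {K : Type*} [Field K] [Fintype K] (p : ℕ) [Fact p.Prime] [CharP K p]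
    {f : MvPolynomial (Fin 2) K} (h00 : coeffXY f 0 0 = 0) (h01 : 2 < p → coeffXY f 0 1 = 0)
    (hcard : 8 * f.totalDegree * (f.totalDegree + 1) ^ 3 < Fintype.card K)
    (hov : OvoidCondition f) :
    (p = 2 ∧ ∃ a b : K, f = C a * X 0 + C b * X 1) ∨
    (2 < p ∧ ∃ (j : ℕ) (a : K), f = C a * (X 0) ^ (p ^ j)) := by
  have hd := one_le_totalDegree_of_ovoidCondition hov
  have hcard' : 32 * f.totalDegree * (f.totalDegree + 1) < Fintype.card K := by
    nlinarith [Nat.pow_le_pow_left (Nat.succ_le_succ hd) 2]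
  obtain ⟨h, b, hdeg, h0, hb, hf, hmap⟩ := exists_eq_affine_of_ovoidCondition hov hcard
  rw [h00] at h0
  rcases (Fact.out : p.Prime).two_le.eq_or_lt with rfl | hp
  · refine .inl ⟨rfl, h.coeff 1, b, ?_⟩
    rw [hf, Polynomial.eq_X_add_C_of_natDegree_le_one (hmap.natDegree_le_one hd hdeg hcard'), h0]
    simp [algebraMap_eq]
  · rw [h01 hp] at hb
    subst hb
    simp only [zero_mul, zero_add] at hmap
    have h2 : (2 : K) ≠ 0 := Ring.two_ne_zero (ringChar.eq K p ▸ hp.ne')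
    obtain ⟨j, a, rfl⟩ := (hmap.hasSquareDifferences h2 hd hdeg hcard').exists_eq_C_mul_X_pow
      hp.ne' h0 (by nlinarith)
    exact .inr ⟨hp, j, a, by rw [hf]; simp [algebraMap_eq]⟩

/-- Main theorem: if `q > 6.3·(d+1)^{13/3}` and `O_4(f)` is an ovoid of `Q(4,q)`, then either
`p = 2` and `f = a_{1,0}X + a_{0,1}Y`, or `p > 2` and `f = a_{p^j,0}·X^{p^j}`. -/
theorem statement5 (p h q : ℕ) (hp : p.Prime) (hh : 0 < h) (hq : q = p ^ h)
    (K : Type*) [Field K] [Fintype K] (hcard : Fintype.card K = q)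
    (f : MvPolynomial (Fin 2) K) (d : ℕ) (hdeg : f.totalDegree = d) (hd : 1 ≤ d)
    (h00 : coeffXY f 0 0 = 0)
    (h01 : 2 < p → coeffXY f 0 1 = 0)
    (hbig : (6.3 : ℝ) * ((d : ℝ) + 1) ^ ((13 : ℝ) / 3) < (q : ℝ))
    (hov : OvoidCondition f) :
    (p = 2 ∧ ∃ a b : K, f = C a * X 0 + C b * X 1) ∨
    (2 < p ∧ ∃ (j : ℕ) (a : K), f = C a * (X 0) ^ (p ^ j)) := by
  have : Fact p.Prime := ⟨hp⟩
  have : CharP K p := charP_of_card_eq_prime_pow (hcard.trans hq)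
  exact statement5_general p h00 h01 (hcard ▸ hdeg ▸ eight_mul_mul_pow_lt hbig) hov
end

section
/- Let K be a field, let d ≥ 1 be an integer and let c_0, c_1, …, c_d ∈ K. In the polynomial ring K[X_1,X_2,X_3,X_4], the polynomial X_1 − X_3 divides Σ_{i=0}^{d} c_i (X_1^i X_2^{d−i} − X_3^i X_4^{d−i}) if and only if c_i = 0 for all i ≠ d. -/
open MvPolynomial

/-!
Setting `X₂ = 1` and every other variable equal to `T` kills `X₁ - X₃` and turns the sum into
`∑ c_i (T ^ i - T ^ d)`, whose coefficient of `T ^ i` is `c_i` for `i < d`. Conversely, only the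
summand `c_d (X₁ ^ d - X₃ ^ d)` survives when `c_i = 0` for all `i < d`.
-/

theorem sub_dvd_sum_mul_pow_mul_pow_sub_of_forall_lt_eq_zero {S : Type*} [CommRing S]
    (a b u v : S) {d : ℕ} {c : ℕ → S} (hc : ∀ i < d, c i = 0) :
    a - b ∣ ∑ i ∈ Finset.range (d + 1), c i * (a ^ i * u ^ (d - i) - b ^ i * v ^ (d - i)) := by
  have lower_terms_eq_zero :
      ∑ i ∈ Finset.range d, c i * (a ^ i * u ^ (d - i) - b ^ i * v ^ (d - i)) = 0 :=
    Finset.sum_eq_zero fun i hi ↦ by rw [hc i (Finset.mem_range.mp hi), zero_mul]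
  rw [Finset.sum_range_succ, lower_terms_eq_zero, zero_add]
  simpa using (sub_dvd_pow_sub_pow a b d).mul_left (c d)

section

variable {R σ : Type*}

theorem coeff_sum_C_mul_X_pow_sub_X_pow [Ring R] {d k : ℕ} (hk : k < d) (c : ℕ → R) :
    (∑ i ∈ Finset.range (d + 1),
      Polynomial.C (c i) * (Polynomial.X ^ i - Polynomial.X ^ d)).coeff k = c k := by
  simp [Polynomial.coeff_X_pow, hk.ne, hk.le]

/-- Dehomogenization with respect to the variable `y`, followed by the identification of all other
variables with a single one: `X y ↦ 1`, and `X s ↦ T` for `s ≠ y`. -/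
noncomputable def dehomogenizeAt [CommSemiring R] [DecidableEq σ] (y : σ) :
    MvPolynomial σ R →ₐ[R] Polynomial R :=
  aeval (Function.update (fun _ ↦ Polynomial.X) y 1)

theorem dehomogenizeAt_X_self [CommSemiring R] [DecidableEq σ] (y : σ) :
    dehomogenizeAt y (X y : MvPolynomial σ R) = 1 := by
  simp [dehomogenizeAt]

theorem dehomogenizeAt_X_of_ne [CommSemiring R] [DecidableEq σ] {s y : σ} (h : s ≠ y) :
    dehomogenizeAt y (X s : MvPolynomial σ R) = Polynomial.X := by
  simp [dehomogenizeAt, h]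

theorem dehomogenizeAt_sum [CommRing R] [DecidableEq σ] {x y z w : σ}
    (hx : x ≠ y) (hz : z ≠ y) (hw : w ≠ y) (d : ℕ) (c : ℕ → R) :
    dehomogenizeAt y (∑ i ∈ Finset.range (d + 1),
        C (c i) * (X x ^ i * X y ^ (d - i) - X z ^ i * X w ^ (d - i))) =
      ∑ i ∈ Finset.range (d + 1),
        Polynomial.C (c i) * (Polynomial.X ^ i - Polynomial.X ^ d) := by
  rw [map_sum]
  refine Finset.sum_congr rfl fun i hi ↦ ?_
  have hid : i ≤ d := Finset.mem_range_succ_iff.mp hi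
  simp only [map_mul, map_sub, map_pow, algHom_C, Polynomial.algebraMap_eq,
    dehomogenizeAt_X_self, dehomogenizeAt_X_of_ne hx, dehomogenizeAt_X_of_ne hz,
    dehomogenizeAt_X_of_ne hw, one_pow, mul_one, pow_mul_pow_sub _ hid]

theorem statement6_general [CommRing R] {x y z w : σ} (hx : x ≠ y) (hz : z ≠ y) (hw : w ≠ y)
    (d : ℕ) (c : ℕ → R) :
    (X x - X z : MvPolynomial σ R) ∣
        ∑ i ∈ Finset.range (d + 1),
          C (c i) * (X x ^ i * X y ^ (d - i) - X z ^ i * X w ^ (d - i))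
      ↔ ∀ i < d, c i = 0 := by
  classical
  refine ⟨fun hdvd k hk ↦ ?_, fun hc ↦
    sub_dvd_sum_mul_pow_mul_pow_sub_of_forall_lt_eq_zero _ _ _ _ fun i hi ↦ by rw [hc i hi, C_0]⟩
  have divisor_eq_zero : dehomogenizeAt y (X x - X z : MvPolynomial σ R) = 0 := by
    rw [map_sub, dehomogenizeAt_X_of_ne hx, dehomogenizeAt_X_of_ne hz, sub_self]
  have sum_eq_zero : ∑ i ∈ Finset.range (d + 1),
      Polynomial.C (c i) * (Polynomial.X ^ i - Polynomial.X ^ d) = 0 := by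
    rw [← dehomogenizeAt_sum hx hz hw]
    exact zero_dvd_iff.mp (divisor_eq_zero ▸ map_dvd (dehomogenizeAt y) hdvd)
  rw [← coeff_sum_C_mul_X_pow_sub_X_pow hk c, sum_eq_zero, Polynomial.coeff_zero]

end

/-- In `K[X₁,X₂,X₃,X₄]` (variables `X 0, X 1, X 2, X 3` standing for `X₁, X₂, X₃, X₄`),
the polynomial `X₁ − X₃` divides `Σ_{i=0}^{d} c_i (X₁^i X₂^{d−i} − X₃^i X₄^{d−i})`
if and only if `c_i = 0` for all `i ≠ d` (with `0 ≤ i ≤ d`). -/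
theorem statement6 (K : Type*) [Field K] (d : ℕ) (hd : 1 ≤ d) (c : ℕ → K) :
    ((X 0 - X 2 : MvPolynomial (Fin 4) K) ∣
        ∑ i ∈ Finset.range (d + 1),
          C (c i) * ((X 0) ^ i * (X 1) ^ (d - i) - (X 2) ^ i * (X 3) ^ (d - i)))
      ↔ ∀ i < d, c i = 0 :=
  statement6_general (by decide) (by decide) (by decide) d c
end

section
/- Let K be an algebraically closed field of odd characteristic p, let d = k·p^j with k > 1 and p not dividing k, and let c ∈ K be nonzero. Then the polynomial c·(X_1 − X_3)·(X_1^d − X_3^d) is not a square in K[X_1,X_3]; that is, there is no g ∈ K[X_1,X_3] with c·(X_1 − X_3)(X_1^d − X_3^d) = g^2. -/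
open MvPolynomial

/-!
Setting `X₃ = 1` turns the polynomial into `c (X - 1) (X ^ (k p ^ j) - 1)`. Over an algebraic
closure, the roots of `X ^ (k p ^ j) - 1` are the `k`-th roots of unity, each of multiplicity
`p ^ j`, and the factor `X - 1` raises the multiplicity by one at `1` only. Hence the multiplicities
at `1` and at a root of unity `ζ ≠ 1` have opposite parities, whereas all root multiplicities of a
square are even.
-/

section RootMultiplicity

open scoped Polynomial

variable {R : Type*} [CommRing R] [IsDomain R] {k : ℕ} {ζ : R}

theorem even_rootMultiplicity_of_isSquare {f : R[X]} (hf : IsSquare f) (a : R) :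
    Even (f.rootMultiplicity a) := by
  classical
  obtain ⟨g, rfl⟩ := hf.exists_sq
  rw [← Polynomial.count_roots, Polynomial.roots_pow, Multiset.count_nsmul]
  exact even_two_mul _

theorem rootMultiplicity_X_pow_sub_one (hk : (k : R) ≠ 0) (hζ : ζ ^ k = 1) :
    (Polynomial.X ^ k - 1 : R[X]).rootMultiplicity ζ = 1 := by
  have hk0 : k ≠ 0 := fun h => hk (by simp [h])
  have hne : (Polynomial.X ^ k - 1 : R[X]) ≠ 0 := Polynomial.X_pow_sub_C_ne_zero hk0.pos 1
  have hderiv : ¬ (Polynomial.X ^ k - 1 : R[X]).derivative.IsRoot ζ := by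
    simp [Polynomial.derivative_X_pow, hk, (IsUnit.of_pow_eq_one hζ hk0).ne_zero]
  refine le_antisymm (not_lt.mp fun hlt => ?_)
    ((Polynomial.rootMultiplicity_pos hne).mpr (by simp [hζ]))
  exact hderiv ((Polynomial.one_lt_rootMultiplicity_iff_isRoot hne).mp hlt).2

variable (p : ℕ) [ExpChar R p]

theorem rootMultiplicity_X_pow_mul_expChar_pow_sub_one (j : ℕ) (hk : (k : R) ≠ 0)
    (hζ : ζ ^ k = 1) :
    (Polynomial.X ^ (k * p ^ j) - 1 : R[X]).rootMultiplicity ζ = p ^ j := by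
  have hexpand : (Polynomial.X ^ (k * p ^ j) - 1 : R[X]) =
      Polynomial.expand R (p ^ j) (Polynomial.X ^ k - 1) := by
    simp [← pow_mul, mul_comm]
  have hζ' : (ζ ^ p ^ j) ^ k = 1 := by rw [pow_right_comm, hζ, one_pow]
  rw [hexpand, Polynomial.rootMultiplicity_expand_pow, rootMultiplicity_X_pow_sub_one hk hζ',
    mul_one]

theorem rootMultiplicity_C_mul_X_sub_one_mul_X_pow_sub_one [DecidableEq R] (j : ℕ) {c : R}
    (hc : c ≠ 0) (hk : (k : R) ≠ 0) (hζ : ζ ^ k = 1) :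
    (Polynomial.C c * (Polynomial.X - 1) *
      (Polynomial.X ^ (k * p ^ j) - 1)).rootMultiplicity ζ = (if ζ = 1 then 1 else 0) + p ^ j := by
  have hlinear : Polynomial.C c * (Polynomial.X - Polynomial.C 1) ≠ 0 :=
    mul_ne_zero (Polynomial.C_ne_zero.mpr hc) (Polynomial.X_sub_C_ne_zero 1)
  have hdegree : 0 < k * p ^ j :=
    Nat.mul_pos (Nat.pos_of_ne_zero fun h => hk (by simp [h])) (expChar_pow_pos R p j)
  have hpow : (Polynomial.X ^ (k * p ^ j) - Polynomial.C 1 : R[X]) ≠ 0 :=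
    Polynomial.X_pow_sub_C_ne_zero hdegree 1
  rw [← Polynomial.C_1, Polynomial.rootMultiplicity_mul (mul_ne_zero hlinear hpow),
    Polynomial.rootMultiplicity_mul hlinear, Polynomial.rootMultiplicity_C, zero_add,
    Polynomial.rootMultiplicity_X_sub_C, Polynomial.C_1,
    rootMultiplicity_X_pow_mul_expChar_pow_sub_one p j hk hζ]

theorem not_isSquare_C_mul_X_sub_one_mul_X_pow_sub_one (j : ℕ) {c : R} (hc : c ≠ 0)
    (hk : (k : R) ≠ 0) (hζ : ζ ^ k = 1) (hζ1 : ζ ≠ 1) :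
    ¬ IsSquare
      (Polynomial.C c * (Polynomial.X - 1) * (Polynomial.X ^ (k * p ^ j) - 1) : R[X]) := by
  classical
  intro hsq
  have hone : Even (1 + p ^ j) := by
    simpa [rootMultiplicity_C_mul_X_sub_one_mul_X_pow_sub_one p j hc hk (one_pow k)]
      using even_rootMultiplicity_of_isSquare hsq 1
  have hzeta : Even (p ^ j) := by
    simpa [rootMultiplicity_C_mul_X_sub_one_mul_X_pow_sub_one p j hc hk hζ, hζ1]
      using even_rootMultiplicity_of_isSquare hsq ζ
  exact Nat.not_even_one ((Nat.even_add.mp hone).mpr hzeta)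

end RootMultiplicity

theorem statement8_general {R σ : Type*} [CommRing R] [IsDomain R] (p : ℕ) [ExpChar R p]
    {k : ℕ} (hk : 1 < k) (hkR : (k : R) ≠ 0) (j : ℕ) {c : R} (hc : c ≠ 0) {s t : σ}
    (hst : s ≠ t) :
    ¬ IsSquare (C c * (X s - X t) * (X s ^ (k * p ^ j) - X t ^ (k * p ^ j)) :
      MvPolynomial σ R) := by
  classical
  intro hsq
  let L := AlgebraicClosure (FractionRing R)
  have hinj : Function.Injective (algebraMap R L) :=
    (algebraMap (FractionRing R) L).injective.comp (IsFractionRing.injective R (FractionRing R))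
  have : ExpChar L p := expChar_of_injective_algebraMap hinj p
  have hkL : (k : L) ≠ 0 := by simpa using (map_ne_zero_iff _ hinj).mpr hkR
  have : NeZero (k : L) := ⟨hkL⟩
  obtain ⟨ζ, hζ⟩ := HasEnoughRootsOfUnity.exists_primitiveRoot L k
  refine not_isSquare_C_mul_X_sub_one_mul_X_pow_sub_one p j ((map_ne_zero_iff _ hinj).mpr hc) hkL
    hζ.pow_eq_one (hζ.ne_one hk) ?_
  simpa [hst, Polynomial.algebraMap_apply] using
    hsq.map (aeval (Function.update (fun _ => (Polynomial.X : Polynomial L)) t 1))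

/-- Over an algebraically closed field of odd characteristic `p`, for `d = k·p^j` with `k > 1`,
`p ∤ k`, and `c ≠ 0`, the polynomial `c·(X₁ − X₃)·(X₁^d − X₃^d)` is not a square in `K[X₁,X₃]`.
(Variables `X 0, X 1` stand for `X₁, X₃`.) -/
theorem statement8 (K : Type*) [Field K] [IsAlgClosed K] (p : ℕ) (hp : p.Prime) (hodd : p ≠ 2)
    [CharP K p] (k j : ℕ) (hk : 1 < k) (hpk : ¬ p ∣ k) (c : K) (hc : c ≠ 0) :
    ¬ ∃ g : MvPolynomial (Fin 2) K,
        C c * (X 0 - X 1) * ((X 0) ^ (k * p ^ j) - (X 1) ^ (k * p ^ j)) = g ^ 2 := by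
  have : ExpChar K p := .prime hp
  rw [← isSquare_iff_exists_sq]
  exact statement8_general p hk (mt (CharP.cast_eq_zero_iff K p k).mp hpk) j hc (by decide)
end

section
/- Let K be an algebraically closed field of odd characteristic p, let d = p^j for some integer j ≥ 0, and let a_1, …, a_d ∈ K with a_d ≠ 0. If the polynomial (X_1 − X_3)·Σ_{i=1}^{d} a_i (X_1^i − X_3^i) is a square in K[X_1,X_3] (i.e., equals g^2 for some g ∈ K[X_1,X_3]), then a_i = 0 for all i with 0 < i < d. -/
open MvPolynomial

/-!
Substituting `X₁ = X T`, `X₃ = T` turns the homogeneous component `a_i (X₁ - X₃)(X₁^i - X₃^i)` into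
`a_i (X - 1)(X^i - 1) T^(i+1)`. In characteristic `p` the multiplicity of `1` as a root of this
coefficient is `1 + p^v`, with `v` the `p`-adic valuation of `i`; for `i = d = p^j` it is `1 + d`.
Let `G(T)` be a square root of the sum, of degree `n` in `T`. From `2 n = d + 1` it follows that
`p` is odd when `d > 1`. The leading coefficient of `G` has multiplicity exactly `n` at `1`, and
all its coefficients vanish at `1`. If `G` had a second term, the second highest coefficient of
`G²`, which belongs to some `i < d`, would be twice the product of the two top coefficients of
`G`, so that `n + 1 ≤ 1 + p^v ≤ 1 + d / p`. This is impossible, as `p ≥ 3`; so `G` is a monomial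
and only the term `i = d` survives.
-/

open scoped Polynomial

section General

variable {R : Type*} [CommRing R] [IsDomain R]

theorem rootMultiplicity_one_X_pow_sub_one_of_natCast_ne_zero {m : ℕ} (hm : (m : R) ≠ 0) :
    (Polynomial.X ^ m - 1 : R[X]).rootMultiplicity 1 = 1 := by
  have hne : (Polynomial.X ^ m - 1 : R[X]) ≠ 0 :=
    Polynomial.X_pow_sub_C_ne_zero (Nat.pos_of_ne_zero fun h => hm (by simp [h])) 1
  have hroot : (Polynomial.X ^ m - 1 : R[X]).IsRoot 1 := by simp
  have hsimple : ¬ 1 < (Polynomial.X ^ m - 1 : R[X]).rootMultiplicity 1 := fun h =>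
    hm (by simpa [Polynomial.derivative_X_pow] using
      ((Polynomial.one_lt_rootMultiplicity_iff_isRoot hne).1 h).2)
  have hpos := (Polynomial.rootMultiplicity_pos hne).2 hroot
  omega

theorem rootMultiplicity_one_X_pow_sub_one (p : ℕ) [Fact p.Prime] [CharP R p] {m : ℕ}
    (hm : m ≠ 0) :
    (Polynomial.X ^ m - 1 : R[X]).rootMultiplicity 1 = p ^ padicValNat p m := by
  obtain ⟨k, hk⟩ : p ^ padicValNat p m ∣ m := pow_padicValNat_dvd
  have hpk : (k : R) ≠ 0 := by
    rw [Ne, CharP.cast_eq_zero_iff R p]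
    intro h
    refine pow_succ_padicValNat_not_dvd (p := p) hm ?_
    rw [pow_succ]
    exact (mul_dvd_mul_left _ h).trans hk.symm.dvd
  have hexpand : (Polynomial.X ^ m - 1 : R[X]) =
      Polynomial.expand R (p ^ padicValNat p m) (Polynomial.X ^ k - 1) := by
    rw [map_sub, map_pow, map_one, Polynomial.expand_X, ← pow_mul, ← hk]
  rw [hexpand, Polynomial.rootMultiplicity_expand_pow, one_pow,
    rootMultiplicity_one_X_pow_sub_one_of_natCast_ne_zero hpk, mul_one]

end General

theorem pow_padicValNat_mul_le_of_lt_pow {p m j : ℕ} [hp : Fact p.Prime] (hm : m ≠ 0)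
    (hlt : m < p ^ j) : p ^ padicValNat p m * p ≤ p ^ j := by
  have hval : p ^ padicValNat p m < p ^ j :=
    (Nat.le_of_dvd (Nat.pos_of_ne_zero hm) pow_padicValNat_dvd).trans_lt hlt
  rw [← pow_succ]
  exact Nat.pow_le_pow_right hp.out.pos ((Nat.pow_lt_pow_iff_right hp.out.one_lt).1 hval)

theorem coeff_sq_natDegree_add_natDegree_eraseLead {R : Type*} [CommSemiring R] (G : R[X])
    (hlt : G.eraseLead.natDegree < G.natDegree) :
    (G ^ 2).coeff (G.natDegree + G.eraseLead.natDegree) =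
      2 * (G.leadingCoeff * G.eraseLead.leadingCoeff) := by
  set E := G.eraseLead
  set n := G.natDegree
  have hexpand : G ^ 2 = Polynomial.monomial (n * 2) (G.leadingCoeff ^ 2) +
      Polynomial.C 2 * (Polynomial.monomial n G.leadingCoeff * E) + E ^ 2 := by
    conv_lhs => rw [← G.eraseLead_add_monomial_natDegree_leadingCoeff]
    rw [← Polynomial.monomial_pow, map_ofNat]
    ring
  have hlow : (E ^ 2).coeff (n + E.natDegree) = 0 :=
    Polynomial.coeff_eq_zero_of_natDegree_lt
      (Polynomial.natDegree_pow_le.trans_lt (by omega))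
  rw [hexpand, Polynomial.coeff_add, Polynomial.coeff_add, hlow, Polynomial.coeff_C_mul,
    add_comm n, Polynomial.coeff_monomial_mul, Polynomial.coeff_monomial, if_neg (by omega),
    zero_add, add_zero, Polynomial.coeff_natDegree]

section Term

variable {R : Type*} [CommRing R]

/-- The coefficient of `T ^ (i + 1)` obtained from `b (X₁ - X₃) (X₁ ^ i - X₃ ^ i)` by substituting
`X₁ = X T` and `X₃ = T`. -/
noncomputable def differenceTerm (b : R) (i : ℕ) : R[X] :=
  Polynomial.C b * ((Polynomial.X - 1) * (Polynomial.X ^ i - 1))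

theorem isRoot_one_differenceTerm (b : R) (i : ℕ) : (differenceTerm b i).IsRoot 1 := by
  simp [differenceTerm]

variable [IsDomain R]

theorem differenceTerm_ne_zero_iff {b : R} {i : ℕ} :
    differenceTerm b i ≠ 0 ↔ b ≠ 0 ∧ i ≠ 0 := by
  have hX : (Polynomial.X - 1 : R[X]) ≠ 0 := Polynomial.X_sub_C_ne_zero 1
  have hpow (hi : i ≠ 0) : (Polynomial.X ^ i - 1 : R[X]) ≠ 0 :=
    Polynomial.X_pow_sub_C_ne_zero (Nat.pos_of_ne_zero hi) 1
  rcases eq_or_ne i 0 with rfl | hi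
  · simp [differenceTerm]
  · simp [differenceTerm, hX, hpow hi, hi]

theorem rootMultiplicity_one_differenceTerm (p : ℕ) [Fact p.Prime] [CharP R p] {b : R} {i : ℕ}
    (hb : b ≠ 0) (hi : i ≠ 0) :
    (differenceTerm b i).rootMultiplicity 1 = 1 + p ^ padicValNat p i := by
  have hterm : differenceTerm b i ≠ 0 := differenceTerm_ne_zero_iff.2 ⟨hb, hi⟩
  have hX : (Polynomial.X - 1 : R[X]).rootMultiplicity 1 = 1 := by
    simpa using Polynomial.rootMultiplicity_X_sub_C_self (x := (1 : R))
  rw [differenceTerm] at hterm ⊢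
  rw [Polynomial.rootMultiplicity_mul hterm, Polynomial.rootMultiplicity_C, zero_add,
    Polynomial.rootMultiplicity_mul (right_ne_zero_of_mul hterm), hX,
    rootMultiplicity_one_X_pow_sub_one p hi]

end Term

section Dehomogenization

/-- The substitution `X₁ ↦ X T`, `X₃ ↦ T` into `R[X][T]`, which turns the decomposition of a
polynomial into homogeneous components into its decomposition into powers of `T`. -/
noncomputable def dehomogenize (R : Type*) [CommRing R] :
    MvPolynomial (Fin 2) R →ₐ[R] R[X][X] :=
  aeval ![Polynomial.C Polynomial.X * Polynomial.X, Polynomial.X]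

variable {R : Type*} [CommRing R]

/-- The image of `(X₁ - X₃) ∑ i ∈ {1, …, d}, a_i (X₁ ^ i - X₃ ^ i)` under `dehomogenize`. -/
noncomputable def differencePolynomial (a : ℕ → R) (d : ℕ) : R[X][X] :=
  ∑ i ∈ Finset.Icc 1 d, Polynomial.monomial (i + 1) (differenceTerm (a i) i)

theorem dehomogenize_sub_mul_sum (a : ℕ → R) (d : ℕ) :
    dehomogenize R ((X 0 - X 1) * ∑ i ∈ Finset.Icc 1 d, C (a i) * (X 0 ^ i - X 1 ^ i)) =
      differencePolynomial a d := by
  rw [differencePolynomial, map_mul, map_sum, Finset.mul_sum]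
  refine Finset.sum_congr rfl fun i _ => ?_
  simp only [dehomogenize, differenceTerm, map_mul, map_sub, map_pow, aeval_X, algHom_C,
    Matrix.cons_val_zero, Matrix.cons_val_one, ← Polynomial.C_mul_X_pow_eq_monomial, map_one,
    Polynomial.algebraMap_apply, Algebra.algebraMap_self, RingHom.id_apply]
  ring

theorem coeff_differencePolynomial (a : ℕ → R) (d k : ℕ) :
    (differencePolynomial a d).coeff k =
      ∑ i ∈ Finset.Icc 1 d, if i + 1 = k then differenceTerm (a i) i else 0 := by
  simp only [differencePolynomial, Polynomial.finsetSum_coeff, Polynomial.coeff_monomial]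

theorem coeff_succ_differencePolynomial (a : ℕ → R) {d i : ℕ} (hi : i ∈ Finset.Icc 1 d) :
    (differencePolynomial a d).coeff (i + 1) = differenceTerm (a i) i := by
  simp only [coeff_differencePolynomial, Nat.add_right_cancel_iff, Finset.sum_ite_eq', hi, if_true]

theorem exists_of_coeff_differencePolynomial_ne_zero {a : ℕ → R} {d k : ℕ}
    (h : (differencePolynomial a d).coeff k ≠ 0) : ∃ i ∈ Finset.Icc 1 d, i + 1 = k := by
  rw [coeff_differencePolynomial] at h
  obtain ⟨i, hi, hne⟩ := Finset.exists_ne_zero_of_sum_ne_zero h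
  exact ⟨i, hi, of_not_not fun hik => hne (if_neg hik)⟩

theorem natDegree_differencePolynomial [IsDomain R] {a : ℕ → R} {d : ℕ} (hd : d ≠ 0)
    (had : a d ≠ 0) : (differencePolynomial a d).natDegree = d + 1 := by
  refine Polynomial.natDegree_eq_of_le_of_coeff_ne_zero ?_ ?_
  · refine Polynomial.natDegree_le_iff_coeff_eq_zero.2 fun k hk => of_not_not fun hne => ?_
    obtain ⟨i, hi, rfl⟩ := exists_of_coeff_differencePolynomial_ne_zero hne
    have := (Finset.mem_Icc.1 hi).2
    omega
  · rw [coeff_succ_differencePolynomial a (Finset.mem_Icc.2 ⟨Nat.pos_of_ne_zero hd, le_rfl⟩)]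
    exact differenceTerm_ne_zero_iff.2 ⟨had, hd⟩

theorem map_evalRingHom_one_differencePolynomial (a : ℕ → R) (d : ℕ) :
    (differencePolynomial a d).map (Polynomial.evalRingHom 1) = 0 := by
  simp only [differencePolynomial, Polynomial.map_sum, Polynomial.map_monomial,
    Polynomial.coe_evalRingHom, (isRoot_one_differenceTerm _ _).eq_zero, map_zero,
    Finset.sum_const_zero]

end Dehomogenization

section SquareRoot

variable {R : Type*} [CommRing R] [IsDomain R] {a : ℕ → R} {G : R[X][X]}

theorem isRoot_one_coeff_of_sq_eq_differencePolynomial {d : ℕ}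
    (hG : G ^ 2 = differencePolynomial a d) (k : ℕ) : (G.coeff k).IsRoot 1 := by
  have hmap : G.map (Polynomial.evalRingHom 1) = 0 := by
    rw [← sq_eq_zero_iff, ← Polynomial.map_pow, hG, map_evalRingHom_one_differencePolynomial]
  simpa using congrArg (Polynomial.coeff · k) hmap

theorem two_mul_natDegree_of_sq_eq_differencePolynomial {d : ℕ} (hd : d ≠ 0) (had : a d ≠ 0)
    (hG : G ^ 2 = differencePolynomial a d) : 2 * G.natDegree = d + 1 := by
  rw [← Polynomial.natDegree_pow, hG, natDegree_differencePolynomial hd had]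

theorem apply_eq_zero_of_eraseLead_eq_zero {d i : ℕ} (had : a d ≠ 0)
    (hG : G ^ 2 = differencePolynomial a d) (hlead : G.eraseLead = 0) (hi : 0 < i) (hid : i < d) :
    a i = 0 := by
  have hdeg := two_mul_natDegree_of_sq_eq_differencePolynomial (by omega) had hG
  have hterm : differenceTerm (a i) i = 0 := by
    rw [← coeff_succ_differencePolynomial a (Finset.mem_Icc.2 ⟨hi, hid.le⟩), ← hG,
      ← G.eraseLead_add_monomial_natDegree_leadingCoeff, hlead, zero_add,
      Polynomial.monomial_pow, Polynomial.coeff_monomial, if_neg (by omega)]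
  exact of_not_not fun hai => differenceTerm_ne_zero_iff.2 ⟨hai, hi.ne'⟩ hterm

variable {p j : ℕ}

theorem ne_two_of_sq_eq_differencePolynomial (hd : 1 < p ^ j) (had : a (p ^ j) ≠ 0)
    (hG : G ^ 2 = differencePolynomial a (p ^ j)) : p ≠ 2 := by
  rintro rfl
  have hdeg := two_mul_natDegree_of_sq_eq_differencePolynomial (by omega) had hG
  have heven : Even (2 ^ j) := even_two.pow_of_ne_zero (by rintro rfl; simp at hd)
  have := heven.two_dvd
  omega

variable [hp : Fact p.Prime] [CharP R p]

theorem rootMultiplicity_one_leadingCoeff_of_sq_eq_differencePolynomial (had : a (p ^ j) ≠ 0)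
    (hG : G ^ 2 = differencePolynomial a (p ^ j)) :
    G.leadingCoeff.rootMultiplicity 1 = G.natDegree := by
  have hd : p ^ j ≠ 0 := pow_ne_zero j hp.out.ne_zero
  have hsq : G.leadingCoeff * G.leadingCoeff = differenceTerm (a (p ^ j)) (p ^ j) := by
    rw [← sq, ← Polynomial.leadingCoeff_pow, hG, Polynomial.leadingCoeff,
      natDegree_differencePolynomial hd had,
      coeff_succ_differencePolynomial a (Finset.mem_Icc.2 ⟨Nat.pos_of_ne_zero hd, le_rfl⟩)]
  have hne : G.leadingCoeff * G.leadingCoeff ≠ 0 := hsq ▸ differenceTerm_ne_zero_iff.2 ⟨had, hd⟩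
  have hmult := congrArg (Polynomial.rootMultiplicity 1) hsq
  rw [Polynomial.rootMultiplicity_mul hne, rootMultiplicity_one_differenceTerm p had hd,
    padicValNat.prime_pow] at hmult
  have hdeg := two_mul_natDegree_of_sq_eq_differencePolynomial hd had hG
  omega

theorem exists_natDegree_le_pow_padicValNat_of_eraseLead_ne_zero (hp2 : p ≠ 2)
    (had : a (p ^ j) ≠ 0) (hG : G ^ 2 = differencePolynomial a (p ^ j))
    (hE : G.eraseLead ≠ 0) :
    ∃ m, m ≠ 0 ∧ m < p ^ j ∧ G.natDegree ≤ p ^ padicValNat p m := by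
  have hlt := G.eraseLead_natDegree_lt_or_eraseLead_eq_zero.resolve_right hE
  have htwo : (2 : R) ≠ 0 := Ring.two_ne_zero (by rwa [ringChar.eq R p])
  have htwoX : (2 : R[X]) ≠ 0 := Polynomial.C_ne_zero.2 htwo
  have hlead : G.leadingCoeff * G.eraseLead.leadingCoeff ≠ 0 :=
    mul_ne_zero (Polynomial.leadingCoeff_ne_zero.2 fun h => hE (by simp [h]))
      (Polynomial.leadingCoeff_ne_zero.2 hE)
  have hsecond := coeff_sq_natDegree_add_natDegree_eraseLead G hlt
  obtain ⟨m, hm, hmn⟩ := exists_of_coeff_differencePolynomial_ne_zero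
    (hG ▸ hsecond ▸ mul_ne_zero htwoX hlead)
  rw [hG, ← hmn, coeff_succ_differencePolynomial a hm] at hsecond
  obtain ⟨ham, hm0⟩ := differenceTerm_ne_zero_iff.1 (hsecond ▸ mul_ne_zero htwoX hlead)
  have hroot : 0 < G.eraseLead.leadingCoeff.rootMultiplicity 1 := by
    rw [Polynomial.rootMultiplicity_pos (right_ne_zero_of_mul hlead), Polynomial.leadingCoeff,
      Polynomial.eraseLead_coeff_of_ne _ hlt.ne]
    exact isRoot_one_coeff_of_sq_eq_differencePolynomial hG _
  have hmult := congrArg (Polynomial.rootMultiplicity 1) hsecond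
  rw [rootMultiplicity_one_differenceTerm p ham hm0,
    Polynomial.rootMultiplicity_mul (mul_ne_zero htwoX hlead), ← Polynomial.C_ofNat,
    Polynomial.rootMultiplicity_C, Polynomial.rootMultiplicity_mul hlead,
    rootMultiplicity_one_leadingCoeff_of_sq_eq_differencePolynomial had hG] at hmult
  have hdeg := two_mul_natDegree_of_sq_eq_differencePolynomial
    (pow_ne_zero j hp.out.ne_zero) had hG
  exact ⟨m, hm0, by omega, by omega⟩

theorem eraseLead_eq_zero_of_sq_eq_differencePolynomial (hp2 : p ≠ 2) (had : a (p ^ j) ≠ 0)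
    (hG : G ^ 2 = differencePolynomial a (p ^ j)) : G.eraseLead = 0 := by
  by_contra hE
  obtain ⟨m, hm0, hmd, hle⟩ :=
    exists_natDegree_le_pow_padicValNat_of_eraseLead_ne_zero hp2 had hG hE
  have hp3 : 3 ≤ p := hp.out.two_le.lt_of_ne' hp2
  have hdeg := two_mul_natDegree_of_sq_eq_differencePolynomial
    (pow_ne_zero j hp.out.ne_zero) had hG
  have hthree : p ^ padicValNat p m * 3 ≤ p ^ j :=
    (Nat.mul_le_mul_left _ hp3).trans (pow_padicValNat_mul_le_of_lt_pow hm0 hmd)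
  omega

end SquareRoot

theorem statement9_general {R : Type*} [CommRing R] [IsDomain R] (p : ℕ) [Fact p.Prime]
    [CharP R p] (j : ℕ) (a : ℕ → R) (had : a (p ^ j) ≠ 0)
    (hsq : ∃ g : MvPolynomial (Fin 2) R,
        (X 0 - X 1) * ∑ i ∈ Finset.Icc 1 (p ^ j), C (a i) * ((X 0) ^ i - (X 1) ^ i) = g ^ 2) :
    ∀ i : ℕ, 0 < i → i < p ^ j → a i = 0 := by
  intro i hi hid
  obtain ⟨g, hg⟩ := hsq
  have hG : dehomogenize R g ^ 2 = differencePolynomial a (p ^ j) := by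
    rw [← map_pow, ← hg, dehomogenize_sub_mul_sum]
  have hp2 : p ≠ 2 := ne_two_of_sq_eq_differencePolynomial (by omega) had hG
  have hlead := eraseLead_eq_zero_of_sq_eq_differencePolynomial hp2 had hG
  exact apply_eq_zero_of_eraseLead_eq_zero had hG hlead hi hid

/-- Over an algebraically closed field of odd characteristic `p`, with `d = p^j` and
`a_d ≠ 0`: if `(X₁ − X₃)·Σ_{i=1}^{d} a_i (X₁^i − X₃^i)` is a square in `K[X₁,X₃]`, then
`a_i = 0` for all `0 < i < d`. (Variables `X 0, X 1` stand for `X₁, X₃`.) -/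
theorem statement9 (K : Type*) [Field K] [IsAlgClosed K] (p : ℕ) (hp : p.Prime) (hodd : p ≠ 2)
    [CharP K p] (j : ℕ) (a : ℕ → K) (had : a (p ^ j) ≠ 0)
    (hsq : ∃ g : MvPolynomial (Fin 2) K,
        (X 0 - X 1) * ∑ i ∈ Finset.Icc 1 (p ^ j), C (a i) * ((X 0) ^ i - (X 1) ^ i) = g ^ 2) :
    ∀ i : ℕ, 0 < i → i < p ^ j → a i = 0 := by
  have : Fact p.Prime := ⟨hp⟩
  exact statement9_general p j a had hsq
end

section
/- Let K be an algebraically closed field of characteristic 2, let a ∈ K be nonzero, let d > 1 be an integer, and let c_1, …, c_d ∈ K with c_d ≠ 0. Then there exist no polynomials Z_1, Z_2 ∈ K[X_1,X_3], not both zero, such that a^2(X_1 + X_3)·Z_1^2 + a^2(X_1 + X_3)·Z_1·Z_2 + Z_2^2·Σ_{i=1}^{d} c_i (X_1^i + X_3^i) = 0. (Consequently the Artin–Schreier surface Z^2 + Z + (Σ_{i=1}^{d} c_i(X_1^i + X_3^i))/(a^2(X_1 + X_3)) = 0 is absolutely irreducible.) -/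
open MvPolynomial

/-!
Write `L` and `S` for the coefficients of `Z₁²` and `Z₂²`. A solution with `Z₂ ≠ 0` gives a rational
function `z = Z₁ / Z₂` with `z² + z = f`, where `f = S / L` has positive degree
`deg S - deg L = d - 1`. Comparing degrees, `2 deg z = deg f`. In characteristic 2 a derivation
kills `z²`, so `∂z = ∂f`; take `∂ = ∂/∂X₁`. Since the top homogeneous part of `S` is
`c_d (X₁ ^ d + X₃ ^ d)` and `L` is proportional to `X₁ + X₃`, the degree of `∂f` is exactly
`deg f - 1`. Hence `deg f - 1 = deg ∂z ≤ deg z - 1`, so `2 deg z = deg f ≤ deg z`, contradicting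
`deg z > 0`.
-/

section Degree

variable {σ R : Type*}

theorem le_totalDegree_of_coeff_single_ne_zero [CommSemiring R] {p : MvPolynomial σ R} {i : σ}
    {n : ℕ} (h : coeff (Finsupp.single i n) p ≠ 0) : n ≤ p.totalDegree := by
  simpa using le_totalDegree (mem_support_iff.mpr h)

theorem totalDegree_pderiv_le [CommSemiring R] (i : σ) (p : MvPolynomial σ R) :
    (pderiv i p).totalDegree ≤ p.totalDegree - 1 := by
  refine Finset.sup_le fun m hm => Nat.le_sub_one_of_lt (Nat.lt_of_succ_le ?_)
  have hcoeff : coeff (m + Finsupp.single i 1) p ≠ 0 := by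
    rw [mem_support_iff, coeff_pderiv] at hm
    exact left_ne_zero_of_mul hm
  have hle := le_totalDegree (mem_support_iff.mpr hcoeff)
  rwa [Finsupp.sum_add_index' (fun _ => rfl) (fun _ _ _ => rfl),
    Finsupp.sum_single_index rfl] at hle

theorem totalDegree_mul_sq [CommSemiring R] [NoZeroDivisors R] {p q : MvPolynomial σ R}
    (hp : p ≠ 0) (hq : q ≠ 0) : (p * q ^ 2).totalDegree = p.totalDegree + 2 * q.totalDegree := by
  rw [sq, totalDegree_mul_of_isDomain hp (mul_ne_zero hq hq), totalDegree_mul_of_isDomain hq hq,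
    two_mul]

end Degree

section ArtinSchreier

theorem sq_mul_derivation_mul_of_artinSchreier {R A : Type*} [CommRing R] [CommRing A]
    [Algebra R A] [CharP A 2] (D : Derivation R A A) {L S p q : A}
    (h : L * p ^ 2 + L * p * q + q ^ 2 * S = 0) :
    L ^ 2 * D (p * q) = q ^ 2 * (S * D L - L * D S) := by
  have derivation_sq (x : A) : D (x ^ 2) = 0 := by
    rw [Derivation.leibniz_pow, ← Nat.cast_smul_eq_nsmul A, CharP.cast_eq_zero, zero_smul]
  have hD : L * D (p * q) + (p ^ 2 + p * q) * D L + q ^ 2 * D S = 0 := by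
    have hD := congrArg D h
    rw [mul_assoc L p q, ← mul_add, map_add, D.leibniz, map_add, D.leibniz (q ^ 2),
      derivation_sq, derivation_sq, map_zero] at hD
    simpa only [smul_eq_mul, zero_add, mul_zero, add_zero] using hD
  linear_combination L * hD - D L * h

variable {σ R : Type*} [CommRing R] [IsDomain R] {L S p q : MvPolynomial σ R}

theorem totalDegree_eq_of_artinSchreier (hL : L ≠ 0) (hq : q ≠ 0)
    (hLS : L.totalDegree < S.totalDegree) (h : L * p ^ 2 + L * p * q + q ^ 2 * S = 0) :
    L.totalDegree + 2 * p.totalDegree = S.totalDegree + 2 * q.totalDegree := by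
  have hS : S ≠ 0 := by
    rintro rfl
    simp at hLS
  have hfactor : L * p * (p + q) = -(S * q ^ 2) := by linear_combination h
  have hne : L * p * (p + q) ≠ 0 := by
    rw [hfactor]
    exact neg_ne_zero.mpr (mul_ne_zero hS (pow_ne_zero 2 hq))
  have hp : p ≠ 0 := right_ne_zero_of_mul (left_ne_zero_of_mul hne)
  have hdeg := congrArg totalDegree hfactor
  rw [totalDegree_neg, totalDegree_mul_sq hS hq,
    totalDegree_mul_of_isDomain (left_ne_zero_of_mul hne) (right_ne_zero_of_mul hne),
    totalDegree_mul_of_isDomain hL hp] at hdeg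
  have hadd := totalDegree_add p q
  have hqp : q.totalDegree < p.totalDegree := by
    by_contra! hpq
    rw [max_eq_right hpq] at hadd
    omega
  rw [totalDegree_add_eq_left_of_totalDegree_lt hqp] at hdeg
  omega

-- `(S * ∂L - L * ∂S) / L ^ 2` is `-∂(S / L)`, so `hW` says that `∂` lowers the degree of `S / L`
-- by at most one.
theorem eq_zero_and_eq_zero_of_artinSchreier [CharP R 2] (i : σ) (hL : L ≠ 0)
    (hLS : L.totalDegree < S.totalDegree)
    (hW : S.totalDegree + L.totalDegree ≤ (S * pderiv i L - L * pderiv i S).totalDegree + 1)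
    (h : L * p ^ 2 + L * p * q + q ^ 2 * S = 0) : p = 0 ∧ q = 0 := by
  have hq : q = 0 := by
    by_contra hq
    have hdeg := totalDegree_eq_of_artinSchreier hL hq hLS h
    set W := S * pderiv i L - L * pderiv i S
    have hW0 : W ≠ 0 := by
      intro hW0
      rw [hW0, totalDegree_zero] at hW
      omega
    have hderiv : pderiv i (p * q) * L ^ 2 = W * q ^ 2 := by
      linear_combination sq_mul_derivation_mul_of_artinSchreier (pderiv i) h
    have hlower : W.totalDegree + 2 * q.totalDegree ≤
        (p.totalDegree + q.totalDegree - 1) + 2 * L.totalDegree := calc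
      _ = (pderiv i (p * q) * L ^ 2).totalDegree := by rw [hderiv, totalDegree_mul_sq hW0 hq]
      _ ≤ (pderiv i (p * q)).totalDegree + 2 * L.totalDegree :=
        (totalDegree_mul _ _).trans (Nat.add_le_add_left (totalDegree_pow _ _) _)
      _ ≤ _ := by
        have := totalDegree_pderiv_le i (p * q)
        have := totalDegree_mul p q
        omega
    omega
  subst hq
  simpa [hL] using h

end ArtinSchreier

section PowerSums

variable {σ R : Type*} {i j : σ}

theorem coeff_single_X_pow_of_ne [CommSemiring R] (hij : i ≠ j) {n : ℕ} (hn : n ≠ 0) (k : ℕ) :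
    coeff (Finsupp.single j n) (X i ^ k : MvPolynomial σ R) = 0 := by
  classical simp [coeff_X_pow, Finsupp.single_eq_single_iff, hij, hn]

theorem coeff_single_sum_X_pow_add_X_pow [CommSemiring R] (hij : i ≠ j) (c : ℕ → R)
    {s : Finset ℕ} {n : ℕ} (hn : n ≠ 0) (hns : n ∈ s) :
    coeff (Finsupp.single j n) (∑ k ∈ s, C (c k) * (X i ^ k + X j ^ k)) = c n := by
  classical
  simp [coeff_sum, coeff_single_X_pow_of_ne hij hn, coeff_X_pow, Finsupp.single_eq_single_iff,
    hn, hns]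

theorem totalDegree_sum_X_pow_add_X_pow_le [CommSemiring R] (i j : σ) (c : ℕ → R)
    {s : Finset ℕ} {d : ℕ} (hs : ∀ k ∈ s, k ≤ d) :
    (∑ k ∈ s, C (c k) * (X i ^ k + X j ^ k)).totalDegree ≤ d := by
  refine totalDegree_finsetSum_le fun k hk => ?_
  rw [mul_add]
  refine (totalDegree_add _ _).trans (max_le ?_ ?_) <;>
  · rw [X_pow_eq_monomial, C_mul_monomial]
    exact (totalDegree_monomial_le _ _).trans (by simpa using hs k hk)

theorem pderiv_sum_X_pow_add_X_pow [CommSemiring R] (hij : i ≠ j) (c : ℕ → R) (s : Finset ℕ) :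
    pderiv i (∑ k ∈ s, C (c k) * (X i ^ k + X j ^ k)) =
      ∑ k ∈ s, C (c k * k) * X i ^ (k - 1) := by
  rw [map_sum]
  refine Finset.sum_congr rfl fun k _ => ?_
  simp [pderiv_X_of_ne hij.symm, mul_assoc]

theorem coeff_single_pderiv_sum_X_pow_add_X_pow [CommSemiring R] (hij : i ≠ j) (c : ℕ → R)
    (s : Finset ℕ) {n : ℕ} (hn : n ≠ 0) :
    coeff (Finsupp.single j n) (pderiv i (∑ k ∈ s, C (c k) * (X i ^ k + X j ^ k))) = 0 := by
  rw [pderiv_sum_X_pow_add_X_pow hij, coeff_sum]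
  exact Finset.sum_eq_zero fun k _ => by
    rw [coeff_C_mul, coeff_single_X_pow_of_ne hij hn, mul_zero]

theorem coeff_single_X_add_X_mul [CommSemiring R] (hij : i ≠ j) (p : MvPolynomial σ R) (n : ℕ) :
    coeff (Finsupp.single j (n + 1)) ((X i + X j) * p) = coeff (Finsupp.single j n) p := by
  classical
  rw [add_mul, coeff_add, coeff_X_mul', if_neg (by simp [hij.symm]), zero_add, add_comm n,
    Finsupp.single_add, coeff_X_mul]

theorem pderiv_C_mul_X_add_X [CommSemiring R] (hij : i ≠ j) (e : R) :
    pderiv i (C e * (X i + X j)) = C e := by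
  simp [pderiv_X_of_ne hij.symm]

theorem coeff_single_sum_mul_pderiv_sub [CommRing R] (hij : i ≠ j) (e : R) (c : ℕ → R)
    {s : Finset ℕ} {n : ℕ} (hn : 1 < n) (hns : n ∈ s) :
    coeff (Finsupp.single j n)
      ((∑ k ∈ s, C (c k) * (X i ^ k + X j ^ k)) * pderiv i (C e * (X i + X j)) -
        C e * (X i + X j) * pderiv i (∑ k ∈ s, C (c k) * (X i ^ k + X j ^ k))) = e * c n := by
  obtain ⟨m, rfl⟩ := Nat.exists_eq_add_of_lt hn
  rw [pderiv_C_mul_X_add_X hij, mul_comm _ (C e), mul_assoc, coeff_sub, coeff_C_mul, coeff_C_mul,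
    coeff_single_sum_X_pow_add_X_pow hij c (Nat.ne_zero_of_lt hn) hns,
    coeff_single_X_add_X_mul hij, coeff_single_pderiv_sum_X_pow_add_X_pow hij c s (by omega),
    mul_zero, sub_zero]

end PowerSums

theorem statement10_general {σ R : Type*} [CommRing R] [IsDomain R] [CharP R 2] {i j : σ}
    (hij : i ≠ j) {e : R} (he : e ≠ 0) {d : ℕ} (hd : 1 < d) {c : ℕ → R} (hcd : c d ≠ 0)
    {Z₁ Z₂ : MvPolynomial σ R}
    (h : C e * (X i + X j) * Z₁ ^ 2 + C e * (X i + X j) * Z₁ * Z₂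
      + Z₂ ^ 2 * ∑ k ∈ Finset.Icc 1 d, C (c k) * (X i ^ k + X j ^ k) = 0) :
    Z₁ = 0 ∧ Z₂ = 0 := by
  have hmem : d ∈ Finset.Icc 1 d := Finset.right_mem_Icc.mpr hd.le
  have hL : (C e * (X i + X j) : MvPolynomial σ R) ≠ 0 := fun hL => he <|
    C_eq_zero.mp (by rw [← pderiv_C_mul_X_add_X hij e, hL, map_zero])
  have hL_le : (C e * (X i + X j) : MvPolynomial σ R).totalDegree ≤ 1 := by
    simpa using totalDegree_sum_X_pow_add_X_pow_le i j (fun _ => e) (s := {1}) (d := 1) (by simp)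
  have hS_le := totalDegree_sum_X_pow_add_X_pow_le i j c (s := Finset.Icc 1 d) (d := d)
    fun k hk => (Finset.mem_Icc.mp hk).2
  have hS_ge := le_totalDegree_of_coeff_single_ne_zero <|
    (coeff_single_sum_X_pow_add_X_pow hij c (Nat.ne_zero_of_lt hd) hmem).trans_ne hcd
  have hW_ge := le_totalDegree_of_coeff_single_ne_zero <|
    (coeff_single_sum_mul_pderiv_sub hij e c hd hmem).trans_ne (mul_ne_zero he hcd)
  exact eq_zero_and_eq_zero_of_artinSchreier i hL (by omega) (by omega) h

/-- Over an algebraically closed field of characteristic 2, with `a ≠ 0`, `d > 1` and `c_d ≠ 0`: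
there are no polynomials `Z₁, Z₂ ∈ K[X₁,X₃]`, not both zero, with
`a²(X₁ + X₃)·Z₁² + a²(X₁ + X₃)·Z₁·Z₂ + Z₂²·Σ_{i=1}^{d} c_i (X₁^i + X₃^i) = 0`.
(Variables `X 0, X 1` stand for `X₁, X₃`.) -/
theorem statement10 (K : Type*) [Field K] [IsAlgClosed K] [CharP K 2] (a : K) (ha : a ≠ 0)
    (d : ℕ) (hd : 1 < d) (c : ℕ → K) (hcd : c d ≠ 0) :
    ¬ ∃ Z₁ Z₂ : MvPolynomial (Fin 2) K, ¬ (Z₁ = 0 ∧ Z₂ = 0) ∧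
        C (a ^ 2) * (X 0 + X 1) * Z₁ ^ 2 + C (a ^ 2) * (X 0 + X 1) * Z₁ * Z₂
          + Z₂ ^ 2 * ∑ i ∈ Finset.Icc 1 d, C (c i) * ((X 0) ^ i + (X 1) ^ i) = 0 := by
  rintro ⟨Z₁, Z₂, hne, h⟩
  exact hne (statement10_general zero_ne_one (pow_ne_zero 2 ha) hd hcd h)
end
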